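/- There is an absolute constant c > 0 such that the following holds for every prime p. Let P be a finite set of points in F_p^2 with |P| ≤ p^{15/13}, let C be a finite set of irreducible cubic curves in F_p^2, and let k ≥ 11 be an integer. Then the number of k-rich curves satisfies |C_k| ≤ c·( |P|^{39/4}/k^{43/4} + |P|^8/k^8 ). -/

import Mathlib

/-!
The cubics are reduced to lines through linear systems, and rich lines are counted by an energy
estimate that rests on an incidence bound in three-space.

**From cubics to lines.** Each curve is represented by one of its equations, an element of the
ten-dimensional space of polynomials of degree at most three. Fixing a point of `P` on the curves
lowers the dimension of the linear system by one, and by Bézout an irreducible cubic has at most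
nine points in the base locus of a system that contains another, non-proportional cubic. Double
counting therefore costs a factor `|P| / (k - 9)` per dimension, and seven steps lead to nets. A net
of cubics is a rational map to the projective plane which turns its members into lines and has at
most nine points of a given irreducible member in a fibre, so cubics with `k` points in `P` become
lines with at least `max 2 (k / 14)` points.

**Rich lines.** In characteristic `p`, a set of `N ≤ p ^ (15 / 13)` points determines
`O(N ^ (11 / 4) / κ ^ (15 / 4) + N / κ)` lines with at least `κ ≥ 2` points each. For two points
`q₁, q₂`, the points that lie on a line of the family through `q₁` and on another one through `q₂`
form, once `q₁, q₂` are moved to infinity, a subset of a grid `A × B`, and the lines of the family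
become lines `Y = m X + c`. By Cauchy–Schwarz the number of incidences between them is controlled by
the energy, the number of solutions of `m a + c = m' a' + c'`. Summing over `q₁, q₂` counts triples
of concurrent lines weighted by the points on two of them, which is bounded below by richness.

**Energy.** The equation `m a' + c = m' a + c'` says that two lines in three-space meet, where the
lines have directions `(1, t, t ^ 2)`. After a twist by a transcendental `θ`, red and blue lines are
never parallel and blue lines are pairwise disjoint. Their incidences are bounded by the polynomial
method: a chunk of `D ^ 2` blue lines lies on a surface `F = 0` of degree `O(D)`, and on an
irreducible surface all but `O(D ^ 2)` red lines meet only `O(D + k)` of the blue lines on it, where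
`k` bounds the number of blue lines with collinear parameters. Indeed, the slopes `t` at a crossing
are the roots of the quadratic `F_x + t F_y + t ^ 2 F_z` and also roots of the quartic form given by
the second derivative of `F` along `(1, t, t ^ 2)`, so the remainder of a division vanishes at
crossings. If it does not vanish on the surface, Bézout for lines bounds the number of red lines
with many crossings; if it does, the second slope along a red line is a Möbius function of the
position, and the blue lines through that red line have collinear parameters. The red lines along
which the quadratic degenerates are again bounded by Bézout, or else every crossing is a singular
point. Derivatives behave as in characteristic zero because the degrees stay below `p`.
-/

open scoped Classical

noncomputable section

def zeroSet {p : ℕ} (f : MvPolynomial (Fin 2) (ZMod p)) : Set (Fin 2 → ZMod p) :=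
  {x | MvPolynomial.eval x f = 0}

def IsIrredCubic {p : ℕ} (γ : Set (Fin 2 → ZMod p)) : Prop :=
  ∃ f : MvPolynomial (Fin 2) (ZMod p), Irreducible f ∧ f.totalDegree = 3 ∧ γ = zeroSet f

/-- `C_k`: the set of `k`-rich curves of `C`. -/
def richCurves {p : ℕ} (P : Finset (Fin 2 → ZMod p)) (C : Finset (Set (Fin 2 → ZMod p)))
    (k : ℕ) : Finset (Set (Fin 2 → ZMod p)) :=
  C.filter fun γ => k ≤ (P.filter fun q => q ∈ γ).card ∧ (P.filter fun q => q ∈ γ).card < 2 * k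

/-! ### Dimension counts and Bézout's inequality in the plane -/

section Bezout

open MvPolynomial

variable {σ K : Type*} [Field K]

/-- Exponents of degree at most `n` correspond to exponents of degree `n` in one more variable; the
value at `none` is the slack. -/
def sumLeEquivSumOption (σ : Type*) [Fintype σ] (n : ℕ) :
    {m : σ → ℕ // ∑ i, m i ≤ n} ≃ {m : Option σ → ℕ // ∑ o, m o = n} where
  toFun m := ⟨fun o ↦ o.elim (n - ∑ i, m.1 i) m.1, by
    simpa [Fintype.sum_option] using Nat.sub_add_cancel m.2⟩
  invFun m := ⟨fun i ↦ m.1 (some i), by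
    have := m.2
    rw [Fintype.sum_option] at this
    exact (Nat.le_add_left _ _).trans this.le⟩
  left_inv _ := rfl
  right_inv m := by
    have := m.2
    rw [Fintype.sum_option] at this
    ext (_ | i)
    · exact Nat.sub_eq_of_eq_add this.symm
    · rfl

theorem finrank_restrictTotalDegree [Fintype σ] (n : ℕ) :
    Module.finrank K (restrictTotalDegree σ K n) = (Fintype.card σ + n).choose n := by
  have basisIndexEquiv : {m : σ →₀ ℕ | (m.sum fun _ e ↦ e) ≤ n} ≃ Sym (Option σ) n :=
    (Finsupp.equivFunOnFinite.subtypeEquiv fun m ↦ by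
      simp [Finsupp.sum_fintype]).trans <| (sumLeEquivSumOption σ n).trans
        (Sym.equivNatSumOfFintype (Option σ) n).symm
  rw [show Module.finrank K (restrictTotalDegree σ K n) = _ from
      Module.finrank_eq_nat_card_basis (basisRestrictSupport K _), Nat.card_congr basisIndexEquiv,
    Nat.card_eq_fintype_card, Sym.card_sym_eq_choose, Fintype.card_option]
  congr 1
  omega

theorem exists_eval_ne_zero_of_notMem (S : Finset (σ → K)) {s : σ → K} (hs : s ∉ S) :
    ∃ L : MvPolynomial σ K, L.totalDegree ≤ S.card ∧ eval s L ≠ 0 ∧ ∀ u ∈ S, eval u L = 0 := by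
  have hcoord : ∀ u : S, ∃ i, s i ≠ (u : σ → K) i := fun u ↦
    Function.ne_iff.mp fun h ↦ hs (h ▸ u.2)
  choose i hi using hcoord
  refine ⟨∏ u, (X (i u) - C ((u : σ → K) (i u))), ?_, ?_, fun u hu ↦ ?_⟩
  · have hdeg (u : S) : (X (i u) - C ((u : σ → K) (i u))).totalDegree ≤ 1 :=
      (totalDegree_sub_C_le _ _).trans (totalDegree_X _).le
    simpa using (totalDegree_finsetProd Finset.univ _).trans
      (Finset.sum_le_card_nsmul _ _ 1 fun u _ ↦ hdeg u)
  · simpa [map_prod, Finset.prod_ne_zero_iff, sub_ne_zero] using fun u hu ↦ hi ⟨u, hu⟩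
  · rw [map_prod]
    exact Finset.prod_eq_zero (Finset.mem_univ ⟨u, hu⟩) (by simp)

theorem exists_eval_eq_of_card_le (S : Finset (σ → K)) (c : (σ → K) → K) :
    ∃ L : MvPolynomial σ K, L.totalDegree ≤ S.card ∧ ∀ s ∈ S, eval s L = c s := by
  induction S using Finset.induction_on with
  | empty => exact ⟨0, by simp, by simp⟩
  | insert a S ha ih =>
    obtain ⟨L, hLdeg, hL⟩ := ih
    obtain ⟨N, hNdeg, hNa, hN⟩ := exists_eval_ne_zero_of_notMem S ha
    rw [Finset.card_insert_of_notMem ha]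
    refine ⟨L + C ((c a - eval a L) / eval a N) * N, ?_, fun s hs ↦ ?_⟩
    · refine (totalDegree_add _ _).trans (max_le (by omega) ((totalDegree_mul _ _).trans ?_))
      rw [totalDegree_C]
      omega
    · rcases Finset.mem_insert.mp hs with rfl | hs
      · simp [hNa]
      · simp [hL s hs, hN s hs]

/-- Multiplication by `f` as a linear map from polynomials of degree at most `a` to polynomials of
degree at most `b`. -/
def mulRestrictTotalDegree (f : MvPolynomial σ K) {a b : ℕ} (h : f.totalDegree + a ≤ b) :
    restrictTotalDegree σ K a →ₗ[K] restrictTotalDegree σ K b :=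
  (LinearMap.mulLeft K f).restrict fun g hg ↦ by
    rw [mem_restrictTotalDegree] at hg ⊢
    exact (totalDegree_mul f g).trans (by omega)

theorem mulRestrictTotalDegree_apply (f : MvPolynomial σ K) {a b : ℕ}
    (h : f.totalDegree + a ≤ b) (g : restrictTotalDegree σ K a) :
    (mulRestrictTotalDegree f h g : MvPolynomial σ K) = f * g := rfl

/-- The Koszul complex: the relations `A f + B g = 0` are the multiples of `(-g, f)`. -/
theorem finrank_range_coprod_mulRestrictTotalDegree [Finite σ] {f g : MvPolynomial σ K}
    (hf : f ≠ 0) (hfg : IsRelPrime f g) (m : ℕ) :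
    Module.finrank K (restrictTotalDegree σ K (g.totalDegree + m)) +
        Module.finrank K (restrictTotalDegree σ K (f.totalDegree + m)) ≤
      Module.finrank K (restrictTotalDegree σ K m) + Module.finrank K (LinearMap.range
        ((mulRestrictTotalDegree f (a := g.totalDegree + m)
            (b := f.totalDegree + g.totalDegree + m) (by omega)).coprod
          (mulRestrictTotalDegree g (a := f.totalDegree + m) (by omega)))) := by
  set φ := (mulRestrictTotalDegree f (a := g.totalDegree + m)
    (b := f.totalDegree + g.totalDegree + m) (by omega)).coprod
      (mulRestrictTotalDegree g (a := f.totalDegree + m) (by omega))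
  let ψ := (mulRestrictTotalDegree (-g) (a := m) (b := g.totalDegree + m) (by simp)).prod
    (mulRestrictTotalDegree f (b := f.totalDegree + m) le_rfl)
  have hker : LinearMap.ker φ ≤ LinearMap.range ψ := by
    rintro ⟨⟨A, hA⟩, ⟨B, hB⟩⟩ hAB
    have hsyz : f * A + g * B = 0 := congrArg Subtype.val (LinearMap.mem_ker.mp hAB)
    obtain ⟨Q, rfl⟩ : f ∣ B := hfg.dvd_of_dvd_mul_left ⟨-A, by linear_combination hsyz⟩
    have hAQ : A = -g * Q := mul_left_cancel₀ hf (by linear_combination hsyz)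
    have hQ : Q.totalDegree ≤ m := by
      by_cases hQ0 : Q = 0
      · simp [hQ0]
      · rw [mem_restrictTotalDegree, totalDegree_mul_of_isDomain hf hQ0] at hB
        omega
    exact ⟨⟨Q, (mem_restrictTotalDegree _ _ _).mpr hQ⟩,
      Prod.ext (Subtype.ext hAQ.symm) (Subtype.ext rfl)⟩
  have hrank := LinearMap.finrank_range_add_finrank_ker φ
  rw [Module.finrank_prod] at hrank
  have := (Submodule.finrank_mono hker).trans (LinearMap.finrank_range_le ψ)
  omega

/-- For large `n` the polynomials `A f + B g` of degree at most `n` have codimension at most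
`deg f * deg g` among all polynomials of degree at most `n`, and they vanish on the common zeros. -/
theorem card_le_totalDegree_mul_totalDegree {f g : MvPolynomial (Fin 2) K} (hf : f ≠ 0)
    (hfg : IsRelPrime f g) (S : Finset (Fin 2 → K)) (hS : ∀ x ∈ S, eval x f = 0 ∧ eval x g = 0) :
    S.card ≤ f.totalDegree * g.totalDegree := by
  have hsyz := finrank_range_coprod_mulRestrictTotalDegree hf hfg S.card
  set φ := (mulRestrictTotalDegree f (a := g.totalDegree + S.card)
    (b := f.totalDegree + g.totalDegree + S.card) (by omega)).coprod
      (mulRestrictTotalDegree g (a := f.totalDegree + S.card) (by omega))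
  let evalOnS : restrictTotalDegree (Fin 2) K (f.totalDegree + g.totalDegree + S.card) →ₗ[K]
      (S → K) := (LinearMap.pi fun s : S ↦ (aeval (s : Fin 2 → K)).toLinearMap).comp
        (Submodule.subtype _)
  have hsurj : Function.Surjective evalOnS := fun c ↦ by
    obtain ⟨L, hLdeg, hL⟩ :=
      exists_eval_eq_of_card_le S fun s ↦ if hs : s ∈ S then c ⟨s, hs⟩ else 0
    refine ⟨⟨L, (mem_restrictTotalDegree _ _ _).mpr (by omega)⟩, funext fun s ↦ ?_⟩
    simp [evalOnS, aeval_eq_eval, hL s s.2]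
  have hrange : LinearMap.range φ ≤ LinearMap.ker evalOnS := by
    rintro _ ⟨⟨A, B⟩, rfl⟩
    ext s
    simp [φ, evalOnS, mulRestrictTotalDegree_apply, aeval_eq_eval, hS s s.2]
  have hrank := LinearMap.finrank_range_add_finrank_ker evalOnS
  rw [LinearMap.range_eq_top.mpr hsurj, finrank_top, Module.finrank_fintype_fun_eq_card,
    Fintype.card_coe] at hrank
  have hle := Submodule.finrank_mono hrange
  have hdim (n : ℕ) :
      2 * Module.finrank K (restrictTotalDegree (Fin 2) K n) = (n + 1) * (n + 2) := by
    rw [finrank_restrictTotalDegree, Fintype.card_fin, add_comm 2 n,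
      Nat.choose_symm_of_eq_add (rfl : n + 2 = n + 2), Nat.choose_two_right,
      Nat.mul_div_cancel' (Nat.even_mul_pred_self _).two_dvd]
    simp [mul_comm]
  have := hdim S.card
  have := hdim (g.totalDegree + S.card)
  have := hdim (f.totalDegree + S.card)
  have := hdim (f.totalDegree + g.totalDegree + S.card)
  nlinarith

end Bezout

/-! ### Null lines in three-space -/

section FractionField

open MvPolynomial

variable {σ A : Type*} (L : Type*) [CommRing A] [IsDomain A] [Field L] [Algebra A L]
  [IsFractionRing A L] {f : MvPolynomial σ A}

theorem isPrime_span_map_and_under_eq (hf : Prime f) (hfA : ∀ a ≠ 0, ¬ f ∣ C a) :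
    (Ideal.span {map (algebraMap A L) f}).IsPrime ∧
      (Ideal.span {map (algebraMap A L) f}).comap (map (algebraMap A L)) = Ideal.span {f} := by
  let M : Submonoid (MvPolynomial σ A) := (nonZeroDivisors A).map C
  let _ : Algebra (MvPolynomial σ A) (MvPolynomial σ L) := algebraMvPolynomial
  have : IsLocalization M (MvPolynomial σ L) := isLocalization _ _
  have hprime : (Ideal.span {f}).IsPrime := (Ideal.span_singleton_prime hf.ne_zero).mpr hf
  have hdisj : Disjoint (M : Set (MvPolynomial σ A)) (Ideal.span {f} : Ideal _) := by
    rw [Set.disjoint_left]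
    rintro _ ⟨a, ha, rfl⟩ hmem
    exact hfA a (nonZeroDivisors.ne_zero ha) (Ideal.mem_span_singleton.mp hmem)
  have hspan : (Ideal.span {f}).map (algebraMap (MvPolynomial σ A) (MvPolynomial σ L)) =
      Ideal.span {map (algebraMap A L) f} := by
    rw [Ideal.map_span, Set.image_singleton]
    rfl
  rw [← hspan]
  exact ⟨IsLocalization.isPrime_of_isPrime_disjoint M _ _ hprime hdisj,
    IsLocalization.under_map_of_isPrime_disjoint M _ hprime hdisj⟩

theorem prime_map_algebraMap (hf : Prime f) (hfA : ∀ a ≠ 0, ¬ f ∣ C a) :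
    Prime (map (algebraMap A L) f) := by
  refine (Ideal.span_singleton_prime ?_).mp (isPrime_span_map_and_under_eq L hf hfA).1
  rw [Ne, map_eq_zero_iff _ (map_injective _ (IsFractionRing.injective A L))]
  exact hf.ne_zero

theorem dvd_of_map_algebraMap_dvd (hf : Prime f) (hfA : ∀ a ≠ 0, ¬ f ∣ C a)
    {g : MvPolynomial σ A} (h : map (algebraMap A L) f ∣ map (algebraMap A L) g) : f ∣ g := by
  rw [← Ideal.mem_span_singleton, ← (isPrime_span_map_and_under_eq L hf hfA).2, Ideal.mem_comap]
  exact Ideal.mem_span_singleton.mpr h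

end FractionField

theorem totalDegree_map_le {σ R S : Type*} [CommSemiring R] [CommSemiring S] (φ : R →+* S)
    (G : MvPolynomial σ R) : (MvPolynomial.map φ G).totalDegree ≤ G.totalDegree :=
  Finset.sup_le fun _ hm ↦ MvPolynomial.le_totalDegree (MvPolynomial.support_map_subset _ _ hm)

theorem totalDegree_algHom_le {σ τ R A : Type*} [CommSemiring R] [CommSemiring A] [Algebra R A]
    (φ : MvPolynomial σ R →ₐ[R] MvPolynomial τ A)
    (hφ : ∀ i, (φ (MvPolynomial.X i)).totalDegree ≤ 1) (G : MvPolynomial σ R) :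
    (φ G).totalDegree ≤ G.totalDegree := by
  conv_lhs => rw [G.as_sum]
  rw [map_sum]
  refine (MvPolynomial.totalDegree_finsetSum _ _).trans (Finset.sup_le fun m hm ↦ ?_)
  rw [MvPolynomial.monomial_eq, map_mul, Finsupp.prod, map_prod, ← MvPolynomial.algebraMap_eq,
    φ.commutes, MvPolynomial.algebraMap_apply]
  calc (MvPolynomial.C (algebraMap R A (G.coeff m)) *
        ∏ i ∈ m.support, φ (MvPolynomial.X i ^ m i)).totalDegree
      ≤ 0 + ∑ i ∈ m.support, (φ (MvPolynomial.X i ^ m i)).totalDegree :=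
        (MvPolynomial.totalDegree_mul _ _).trans (Nat.add_le_add
          (MvPolynomial.totalDegree_C _).le (MvPolynomial.totalDegree_finsetProd _ _))
    _ ≤ 0 + ∑ i ∈ m.support, m i := by
        gcongr with i
        rw [map_pow]
        exact (MvPolynomial.totalDegree_pow _ _).trans
          ((Nat.mul_le_mul_left _ (hφ i)).trans_eq (mul_one _))
    _ ≤ G.totalDegree := by
        rw [zero_add]
        exact MvPolynomial.le_totalDegree hm

section NullLines

open Polynomial

variable {K : Type*} [Field K]

/-- The parametrised line `x ↦ (x, y + t x, (w + t y) + t² x)` with parameters `v = (t, y, w)`. Its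
direction `(1, t, t²)` lies on a fixed conic. -/
def nullLine (v : K × K × K) : Fin 3 → K[X] :=
  ![X, C v.2.1 + C v.1 * X, C (v.2.2 + v.1 * v.2.1) + C (v.1 ^ 2) * X]

/-- Restriction of a polynomial in three variables to the null line with parameters `v`. -/
def restrictLine (v : K × K × K) : MvPolynomial (Fin 3) K →ₐ[K] K[X] :=
  MvPolynomial.aeval (nullLine v)

theorem natDegree_nullLine_le (v : K × K × K) (i : Fin 3) : (nullLine v i).natDegree ≤ 1 := by
  have hlinear (a b : K) : (C a + C b * X).natDegree ≤ 1 := by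
    rw [add_comm]
    exact natDegree_linear_le
  fin_cases i
  · exact natDegree_X_le
  · exact hlinear _ _
  · exact hlinear _ _

theorem natDegree_restrictLine_le (v : K × K × K) (F : MvPolynomial (Fin 3) K) :
    (restrictLine v F).natDegree ≤ F.totalDegree := by
  simpa [restrictLine] using
    MvPolynomial.aeval_natDegree_le F le_rfl (nullLine v) (natDegree_nullLine_le v)

theorem nullLine_tail_injective :
    Function.Injective fun v : K × K × K ↦ ![nullLine v 1, nullLine v 2] := by
  rintro ⟨t, y, w⟩ ⟨t', y', w'⟩ h
  have h₁ : C y + C t * X = C y' + C t' * X := congrFun h 0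
  have h₂ : C (w + t * y) + C (t ^ 2) * X = C (w' + t' * y') + C (t' ^ 2) * X := congrFun h 1
  obtain rfl : y = y' := by simpa using congrArg (coeff · 0) h₁
  obtain rfl : t = t' := by simpa [coeff_C] using congrArg (coeff · 1) h₁
  obtain rfl : w = w' := by simpa using congrArg (coeff · 0) h₂
  rfl

/-- A polynomial in three variables, viewed as a polynomial in the last two with coefficients in the
polynomial ring of the first. -/
def splitFirst (K : Type*) [Field K] : MvPolynomial (Fin 3) K ≃ₐ[K] MvPolynomial (Fin 2) K[X] :=
  (MvPolynomial.renameEquiv K (finSuccEquiv 2)).trans (MvPolynomial.optionEquivRight K (Fin 2))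

theorem splitFirst_X (i : Fin 3) : splitFirst K (MvPolynomial.X i) =
    ![MvPolynomial.C X, MvPolynomial.X 0, MvPolynomial.X 1] i := by
  have h₁ : finSuccEquiv 2 1 = some 0 := finSuccEquiv_succ 0
  have h₂ : finSuccEquiv 2 2 = some 1 := finSuccEquiv_succ 1
  fin_cases i <;> simp [splitFirst, h₁, h₂]

theorem totalDegree_splitFirst_le (F : MvPolynomial (Fin 3) K) :
    (splitFirst K F).totalDegree ≤ F.totalDegree :=
  totalDegree_algHom_le (splitFirst K).toAlgHom
    (fun i ↦ by fin_cases i <;> simp [splitFirst_X]) F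

theorem eval_splitFirst (v : K × K × K) (F : MvPolynomial (Fin 3) K) :
    MvPolynomial.eval ![nullLine v 1, nullLine v 2] (splitFirst K F) = restrictLine v F := by
  have hhom : ((MvPolynomial.aeval ![nullLine v 1, nullLine v 2]).restrictScalars K).comp
      (splitFirst K).toAlgHom = restrictLine v := by
    refine MvPolynomial.algHom_ext fun i ↦ ?_
    fin_cases i <;> simp [splitFirst_X, restrictLine, nullLine]
  exact DFunLike.congr_fun hhom F

/-- Over the function field of the first coordinate, null lines become points of the plane, and
Bézout's inequality in the plane applies. -/
theorem card_nullLines_le_totalDegree_mul {F E : MvPolynomial (Fin 3) K} (hF : Irreducible F)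
    (hFE : ¬ F ∣ E) (S : Finset (K × K × K))
    (hS : ∀ v ∈ S, restrictLine v F = 0 ∧ restrictLine v E = 0) :
    S.card ≤ F.totalDegree * E.totalDegree := by
  rcases S.eq_empty_or_nonempty with rfl | ⟨v₀, hv₀⟩
  · simp
  let toPlane : MvPolynomial (Fin 3) K → MvPolynomial (Fin 2) (RatFunc K) := fun G ↦
    MvPolynomial.map (algebraMap K[X] (RatFunc K)) (splitFirst K G)
  let toPoint : K × K × K → Fin 2 → RatFunc K := fun v i ↦
    algebraMap K[X] (RatFunc K) (![nullLine v 1, nullLine v 2] i)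
  have heval (v G) : MvPolynomial.eval (toPoint v) (toPlane G) =
      algebraMap K[X] (RatFunc K) (restrictLine v G) := by
    rw [← eval_splitFirst, MvPolynomial.map_eval]
    rfl
  have hdeg (G) : (toPlane G).totalDegree ≤ G.totalDegree :=
    (totalDegree_map_le _ _).trans (totalDegree_splitFirst_le G)
  have hinj : Function.Injective toPoint := fun v u h ↦ nullLine_tail_injective <|
    funext fun i ↦ IsFractionRing.injective K[X] (RatFunc K) (congrFun h i)
  have hprime : Prime (splitFirst K F) := (MulEquiv.prime_iff (splitFirst K)).mpr hF.prime
  have hconst (a : K[X]) (ha : a ≠ 0) : ¬ splitFirst K F ∣ MvPolynomial.C a := fun hdvd ↦ ha <| by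
    simpa [eval_splitFirst, (hS v₀ hv₀).1] using
      (MvPolynomial.eval ![nullLine v₀ 1, nullLine v₀ 2]).map_dvd hdvd
  have hprime' : Prime (toPlane F) := prime_map_algebraMap (RatFunc K) hprime hconst
  have hrel : IsRelPrime (toPlane F) (toPlane E) := hprime'.irreducible.isRelPrime_iff_not_dvd.mpr
    fun hdvd ↦ hFE <| (map_dvd_iff (splitFirst K)).mp <|
      dvd_of_map_algebraMap_dvd (RatFunc K) hprime hconst hdvd
  calc S.card = (S.image toPoint).card := (Finset.card_image_of_injective _ hinj).symm
    _ ≤ (toPlane F).totalDegree * (toPlane E).totalDegree :=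
        card_le_totalDegree_mul_totalDegree hprime'.ne_zero hrel _ fun x hx ↦ by
          obtain ⟨v, hv, rfl⟩ := Finset.mem_image.mp hx
          simp [heval, hS v hv]
    _ ≤ F.totalDegree * E.totalDegree := Nat.mul_le_mul (hdeg F) (hdeg E)

end NullLines

/-! ### Derivatives in positive characteristic -/

section Derivatives

open MvPolynomial

variable {σ R : Type*}

theorem totalDegree_pderiv_le [CommSemiring R] (i : σ) (F : MvPolynomial σ R) :
    (pderiv i F).totalDegree ≤ F.totalDegree - 1 := by
  refine Finset.sup_le fun m hm ↦ ?_
  rw [mem_support_iff, coeff_pderiv] at hm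
  have hmem := le_totalDegree (mem_support_iff.mpr (left_ne_zero_of_mul hm))
  rw [Finsupp.sum_add_index' (fun _ ↦ rfl) (fun _ _ _ ↦ rfl), Finsupp.sum_single_index rfl] at hmem
  exact Nat.le_sub_of_add_le hmem

theorem pderiv_pderiv_comm [CommRing R] (i j : σ) (F : MvPolynomial σ R) :
    pderiv i (pderiv j F) = pderiv j (pderiv i F) := by
  have hbracket : ⁅pderiv (R := R) i, pderiv (R := R) j⁆ = 0 := by
    refine derivation_ext fun k ↦ ?_
    rw [Derivation.commutator_apply, pderiv_X, pderiv_X, Pi.single_apply, Pi.single_apply]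
    split_ifs <;> simp
  rw [← sub_eq_zero, ← Derivation.commutator_apply, hbracket, Derivation.zero_apply]

variable (p : ℕ)

theorem exists_pderiv_ne_zero [CommRing R] [IsDomain R] [CharP R p] {F : MvPolynomial σ R}
    (hF : F.totalDegree ≠ 0) (hp : F.totalDegree < p) : ∃ i, pderiv i F ≠ 0 := by
  obtain ⟨m, hm, hm0⟩ : ∃ m ∈ F.support, m ≠ 0 := by
    by_contra! h
    exact hF (Nat.le_zero.mp (Finset.sup_le fun m hm ↦ by
      rw [h m hm, Finsupp.sum_zero_index]))
  obtain ⟨i, hi⟩ := Finsupp.ne_iff.mp hm0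
  obtain ⟨n, rfl⟩ := exists_add_of_le
    (Finsupp.single_le_iff.mpr (Nat.one_le_iff_ne_zero.mpr hi))
  refine ⟨i, fun h ↦ ?_⟩
  have hcoeff : coeff (Finsupp.single i 1 + n) F * ((n i + 1 : ℕ) : R) = 0 := by
    rw [add_comm, Nat.cast_succ, ← coeff_pderiv, h, coeff_zero]
  have hdvd : p ∣ n i + 1 := (CharP.cast_eq_zero_iff R p _).mp
    ((mul_eq_zero.mp hcoeff).resolve_left (mem_support_iff.mp hm))
  have hle : n i + 1 ≤ F.totalDegree := by
    refine le_trans ?_ (le_totalDegree hm)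
    rw [Finsupp.sum_add_index' (fun _ ↦ rfl) (fun _ _ _ ↦ rfl), Finsupp.sum_single_index rfl,
      add_comm]
    gcongr
    by_cases hni : i ∈ n.support
    · exact Finset.single_le_sum (f := fun j ↦ n j) (fun _ _ ↦ Nat.zero_le _) hni
    · exact (Finsupp.notMem_support_iff.mp hni).trans_le (Nat.zero_le _)
  exact absurd (Nat.le_of_dvd (Nat.succ_pos _) hdvd) (by omega)

theorem exists_not_dvd_pderiv {K : Type*} [Field K] [CharP K p] {F : MvPolynomial σ K}
    (hF : Irreducible F) (hp : F.totalDegree < p) : ∃ i, ¬ F ∣ pderiv i F := by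
  have hdeg : F.totalDegree ≠ 0 := by
    intro h
    rw [totalDegree_eq_zero_iff_eq_C] at h
    have hcoeff : coeff 0 F ≠ 0 := by
      intro h₀
      rw [h₀, map_zero] at h
      exact hF.ne_zero h
    exact hF.not_isUnit (h ▸ (IsUnit.mk0 _ hcoeff).map C)
  obtain ⟨i, hi⟩ := exists_pderiv_ne_zero p hdeg hp
  refine ⟨i, ?_⟩
  rintro ⟨G, hG⟩
  have hG0 : G ≠ 0 := right_ne_zero_of_mul (hG ▸ hi)
  have hle := totalDegree_pderiv_le i F
  rw [hG, totalDegree_mul_of_isDomain hF.ne_zero hG0] at hle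
  omega

end Derivatives

section Wronskian

open Polynomial

variable {K : Type*} [Field K] (p : ℕ) [CharP K p]

theorem natDegree_eq_zero_of_derivative_eq_zero_of_lt {u : K[X]} (hu : u.natDegree < p)
    (h : derivative u = 0) : u.natDegree = 0 := by
  by_contra hne
  obtain ⟨n, hn⟩ := Nat.exists_eq_succ_of_ne_zero hne
  have hcoeff : u.leadingCoeff * ((n + 1 : ℕ) : K) = 0 := by
    rw [leadingCoeff, hn, Nat.cast_succ, ← coeff_derivative, h, coeff_zero]
  have hu0 : u.leadingCoeff ≠ 0 := leadingCoeff_ne_zero.mpr (by rintro rfl; simp at hne)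
  have hdvd := (CharP.cast_eq_zero_iff K p _).mp ((mul_eq_zero.mp hcoeff).resolve_left hu0)
  exact absurd (Nat.le_of_dvd n.succ_pos hdvd) (by omega)

theorem exists_eq_C_mul_of_wronskian_eq_zero {u v : K[X]} (hv : v ≠ 0) (hu : u.natDegree < p)
    (hvp : v.natDegree < p) (h : wronskian u v = 0) : ∃ c : K, u = C c * v := by
  obtain ⟨u', v', hu', hv', hunit⟩ := extract_gcd u v
  set g := gcd u v
  have hg0 : g ≠ 0 := left_ne_zero_of_mul (hv' ▸ hv)
  have hv'0 : v' ≠ 0 := right_ne_zero_of_mul (hv' ▸ hv)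
  have hwr : wronskian u' v' = 0 := by
    apply mul_left_cancel₀ (pow_ne_zero 2 hg0)
    rw [mul_zero, ← h, hu', hv']
    simp only [wronskian, derivative_mul]
    ring
  obtain ⟨hdu, hdv⟩ := ((gcd_isUnit_iff u' v').mp hunit).wronskian_eq_zero_iff.mp hwr
  have hconst (w : K[X]) (hw : (g * w).natDegree < p) (hdw : derivative w = 0) :
      w = C (w.coeff 0) := by
    rcases eq_or_ne w 0 with rfl | hw0
    · simp
    rw [natDegree_mul hg0 hw0] at hw
    exact eq_C_of_natDegree_eq_zero (natDegree_eq_zero_of_derivative_eq_zero_of_lt p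
      ((Nat.le_add_left _ _).trans_lt hw) hdw)
  have huC := hconst u' (hu' ▸ hu) hdu
  have hvC := hconst v' (hv' ▸ hvp) hdv
  have hvcoeff : v'.coeff 0 ≠ 0 := fun h₀ ↦ hv'0 (by rw [hvC, h₀, C_0])
  refine ⟨u'.coeff 0 / v'.coeff 0, ?_⟩
  rw [hu', hv', huC, hvC, coeff_C_zero, coeff_C_zero, mul_left_comm, ← C_mul,
    div_mul_cancel₀ _ hvcoeff]

/-- The equations say that `W = a b' - a' b` satisfies `a W' = 2 a' W`. Hence `W` is a constant
multiple of `a ^ 2`, which makes the derivative of `b / a` constant. -/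
theorem exists_eq_linear_mul_of_ode {a b Q h : K[X]} {d : ℕ} (ha : a ≠ 0) (hb : b ≠ 0)
    (had : a.natDegree ≤ d) (hbd : b.natDegree ≤ d) (hp : 2 * d + 2 < p)
    (hodea : b ^ 3 * derivative (derivative a) = derivative a * Q + a * h)
    (hodeb : b ^ 3 * derivative (derivative b) = derivative b * Q + b * h)
    (hparam : 2 * b ^ 3 * derivative a = a * Q) :
    ∃ e c : K, b = (C e + C c * X) * a := by
  set W := wronskian a b with hW
  have hdW : a * derivative W = 2 * derivative a * W := by
    apply mul_left_cancel₀ (pow_ne_zero 3 hb)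
    simp only [hW, wronskian, derivative_sub, derivative_mul]
    linear_combination a ^ 2 * hodeb - a * b * hodea +
      (derivative a * b - a * derivative b) * hparam
  have hWdeg : W.natDegree < p := by
    rcases eq_or_ne W 0 with h0 | h0
    · rw [h0, natDegree_zero]
      omega
    · have hlt := natDegree_wronskian_lt_add h0
      rw [← hW] at hlt
      omega
  obtain ⟨c, hc⟩ : ∃ c, W = C c * a ^ 2 := by
    refine exists_eq_C_mul_of_wronskian_eq_zero p (pow_ne_zero 2 ha) hWdeg
      (by rw [natDegree_pow]; omega) ?_
    rw [wronskian, derivative_pow]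
    simp only [Nat.cast_ofNat, Nat.add_one_sub_one, pow_one, C_ofNat]
    linear_combination -a * hdW
  have hdeg : (b - C c * X * a).natDegree < p := by
    refine (natDegree_sub_le_of_le hbd (natDegree_mul_le_of_le
      (natDegree_C_mul_le c X) had)).trans_lt
      ?_
    rw [natDegree_X]
    omega
  obtain ⟨e, he⟩ := exists_eq_C_mul_of_wronskian_eq_zero p ha hdeg (by omega) (by
    simp only [wronskian, derivative_sub, derivative_mul, derivative_C, derivative_X] at hW hc ⊢
    linear_combination hW - hc)
  exact ⟨e, c, by linear_combination he⟩

end Wronskian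

/-! ### Crossings of null lines on a surface -/

section NullDerivative

open MvPolynomial

variable {K : Type*} [Field K]

/-- The derivative in the null direction `(1, t, t²)`. -/
def nullDeriv (t : K) : Derivation K (MvPolynomial (Fin 3) K) (MvPolynomial (Fin 3) K) :=
  pderiv 0 + t • pderiv 1 + t ^ 2 • pderiv 2

theorem nullDeriv_apply (t : K) (F : MvPolynomial (Fin 3) K) :
    nullDeriv t F = pderiv 0 F + C t * pderiv 1 F + C t ^ 2 * pderiv 2 F := by
  simp [nullDeriv, smul_eq_C_mul]

theorem derivative_restrictLine (v : K × K × K) (F : MvPolynomial (Fin 3) K) :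
    Polynomial.derivative (restrictLine v F) = restrictLine v (nullDeriv v.1 F) := by
  induction F using MvPolynomial.induction_on with
  | C a => simp [restrictLine]
  | add f g hf hg => rw [map_add, map_add, hf, hg, ← map_add, ← map_add]
  | mul_X f i hf =>
    have hX : Polynomial.derivative (restrictLine v (X i)) =
        restrictLine v (nullDeriv v.1 (X i)) := by
      fin_cases i <;>
        simp [restrictLine, nullDeriv_apply, nullLine, pderiv_X, Polynomial.derivative_pow]
    rw [map_mul, Polynomial.derivative_mul, hf, hX, Derivation.leibniz, smul_eq_mul, smul_eq_mul,
      map_add, map_mul, map_mul]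
    ring

theorem restrictLine_C (v : K × K × K) (a : K) : restrictLine v (C a) = Polynomial.C a :=
  aeval_C _ a

theorem pderiv_nullDeriv (i : Fin 3) (t : K) (F : MvPolynomial (Fin 3) K) :
    pderiv i (nullDeriv t F) = nullDeriv t (pderiv i F) := by
  simp only [nullDeriv_apply, map_add, pderiv_C_mul, ← map_pow, pderiv_pderiv_comm i]

theorem nullDeriv_nullDeriv (t : K) (F : MvPolynomial (Fin 3) K) :
    nullDeriv t (nullDeriv t F) = pderiv 0 (pderiv 0 F) + 2 * C t * pderiv 0 (pderiv 1 F) +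
      C t ^ 2 * (pderiv 1 (pderiv 1 F) + 2 * pderiv 0 (pderiv 2 F)) +
      2 * C t ^ 3 * pderiv 1 (pderiv 2 F) + C t ^ 4 * pderiv 2 (pderiv 2 F) := by
  rw [nullDeriv_apply t (nullDeriv t F), pderiv_nullDeriv, pderiv_nullDeriv, pderiv_nullDeriv]
  simp only [nullDeriv_apply]
  rw [pderiv_pderiv_comm 1 0, pderiv_pderiv_comm 2 0, pderiv_pderiv_comm 2 1]
  ring

end NullDerivative

section Crossings

variable {K : Type*} [Field K]

/-- The null lines with parameters `v` and `u` intersect, provided that their slopes `v.1` and `u.1`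
differ. -/
def Meets (v u : K × K × K) : Prop :=
  v.2.2 - u.2.2 = u.1 * v.2.1 - v.1 * u.2.1

/-- The first coordinate of the intersection point of the null lines with parameters `v` and `u`. -/
def crossingAbscissa (v u : K × K × K) : K := (u.2.1 - v.2.1) / (v.1 - u.1)

theorem crossingAbscissa_mul {v u : K × K × K} (ht : v.1 ≠ u.1) :
    crossingAbscissa v u * (v.1 - u.1) = u.2.1 - v.2.1 :=
  div_mul_cancel₀ _ (sub_ne_zero.mpr ht)

theorem eval_nullLine_eq_of_meets {v u : K × K × K} (ht : v.1 ≠ u.1) (h : Meets v u) (i : Fin 3) :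
    (nullLine v i).eval (crossingAbscissa v u) = (nullLine u i).eval (crossingAbscissa v u) := by
  have hx := crossingAbscissa_mul ht
  unfold Meets at h
  fin_cases i
  · simp [nullLine]
  · simp only [nullLine, Fin.mk_one, Matrix.cons_val, Polynomial.eval_add, Polynomial.eval_C,
      Polynomial.eval_mul, Polynomial.eval_X]
    linear_combination hx
  · simp only [nullLine, Fin.reduceFinMk, Matrix.cons_val, Polynomial.eval_add, Polynomial.eval_C,
      Polynomial.eval_mul, Polynomial.eval_X]
    linear_combination h + (v.1 + u.1) * hx

theorem eval_restrictLine (v : K × K × K) (G : MvPolynomial (Fin 3) K) (x : K) :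
    (restrictLine v G).eval x = MvPolynomial.eval (fun i ↦ (nullLine v i).eval x) G := by
  rw [restrictLine, MvPolynomial.aeval_def, MvPolynomial.polynomial_eval_eval₂,
    MvPolynomial.eval, MvPolynomial.coe_eval₂Hom]
  congr 1
  ext a
  simp

theorem eval_restrictLine_eq_of_meets {v u : K × K × K} (ht : v.1 ≠ u.1) (h : Meets v u)
    (G : MvPolynomial (Fin 3) K) :
    (restrictLine v G).eval (crossingAbscissa v u) =
      (restrictLine u G).eval (crossingAbscissa v u) := by
  rw [eval_restrictLine, eval_restrictLine, funext (eval_nullLine_eq_of_meets ht h)]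

theorem meets_of_crossingAbscissa_eq {r u u' : K × K × K} (ht : r.1 ≠ u.1) (ht' : r.1 ≠ u'.1)
    (hu : Meets r u) (hu' : Meets r u') (hx : crossingAbscissa r u = crossingAbscissa r u') :
    Meets u u' := by
  have h := crossingAbscissa_mul ht
  have h' := crossingAbscissa_mul ht'
  rw [← hx] at h'
  unfold Meets at *
  linear_combination hu' - hu - (r.1 - u'.1) * h + (r.1 - u.1) * h'

/-- The standing assumptions on a family `R` of red lines and a family `B` of blue lines, all of
them null lines given by their parameters: no red line is parallel to a blue one, blue lines are
pairwise disjoint, and at most `k` blue parameters lie on a common line of the parameter space that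
is not vertical. -/
structure IsAdmissible (R B : Finset (K × K × K)) (k : ℕ) : Prop where
  slope_ne : ∀ r ∈ R, ∀ u ∈ B, r.1 ≠ u.1
  eq_of_meets : ∀ u ∈ B, ∀ u' ∈ B, Meets u u' → u = u'
  card_collinear_le : ∀ c₁ c₀ e l₁ l₂ l₃ : K, (c₁ ≠ 0 ∨ c₀ ≠ 0) →
    (B.filter fun u ↦ c₁ * u.1 + c₀ * u.2.1 = e ∧ u.2.2 = l₁ * u.1 + l₂ * u.2.1 + l₃).card ≤ k

/-- The lines of the family `B` that lie on the surface `F = 0` and meet the line `r`. -/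
def crossings (B : Finset (K × K × K)) (r : K × K × K) (F : MvPolynomial (Fin 3) K) :
    Finset (K × K × K) := B.filter fun u ↦ Meets r u ∧ restrictLine u F = 0

theorem mem_crossings {B : Finset (K × K × K)} {r u : K × K × K} {F : MvPolynomial (Fin 3) K} :
    u ∈ crossings B r F ↔ u ∈ B ∧ Meets r u ∧ restrictLine u F = 0 :=
  Finset.mem_filter

theorem crossings_subset (B : Finset (K × K × K)) (r : K × K × K) (F : MvPolynomial (Fin 3) K) :
    crossings B r F ⊆ B :=
  Finset.filter_subset _ _

theorem crossings_mul_subset (B : Finset (K × K × K)) (r : K × K × K)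
    (F G : MvPolynomial (Fin 3) K) :
    crossings B r (F * G) ⊆ crossings B r F ∪ crossings B r G := by
  intro u hu
  simp only [Finset.mem_union, mem_crossings, map_mul, mul_eq_zero] at hu ⊢
  tauto

variable {R B : Finset (K × K × K)} {k : ℕ} {r : K × K × K} {F : MvPolynomial (Fin 3) K}

theorem IsAdmissible.mono {R' B' : Finset (K × K × K)} (h : IsAdmissible R B k)
    (hR : R' ⊆ R) (hB : B' ⊆ B) : IsAdmissible R' B' k where
  slope_ne r hr u hu := h.slope_ne r (hR hr) u (hB hu)
  eq_of_meets u hu u' hu' := h.eq_of_meets u (hB hu) u' (hB hu')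
  card_collinear_le c₁ c₀ e l₁ l₂ l₃ hc :=
    (Finset.card_le_card (Finset.filter_subset_filter _ hB)).trans
      (h.card_collinear_le c₁ c₀ e l₁ l₂ l₃ hc)

theorem IsAdmissible.card_le_natDegree (h : IsAdmissible R B k) (hr : r ∈ R) {G : Polynomial K}
    (hG : G ≠ 0) {T : Finset (K × K × K)} (hT : T ⊆ B)
    (hmeets : ∀ u ∈ T, Meets r u ∧ G.eval (crossingAbscissa r u) = 0) : T.card ≤ G.natDegree := by
  refine le_trans ?_ ((Multiset.toFinset_card_le _).trans (Polynomial.card_roots' G))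
  refine Finset.card_le_card_of_injOn (crossingAbscissa r) (fun u hu ↦ ?_) fun u hu u' hu' hx ↦ ?_
  · rw [Finset.mem_coe, Multiset.mem_toFinset, Polynomial.mem_roots hG]
    exact (hmeets u hu).2
  · exact h.eq_of_meets u (hT hu) u' (hT hu') (meets_of_crossingAbscissa_eq
      (h.slope_ne r hr u (hT hu)) (h.slope_ne r hr u' (hT hu')) (hmeets u hu).1
      (hmeets u' hu').1 hx)

theorem IsAdmissible.card_crossings_le_of_eval_eq_zero (h : IsAdmissible R B k) (hr : r ∈ R)
    {E : MvPolynomial (Fin 3) K} (hE : restrictLine r E ≠ 0)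
    (heval : ∀ u ∈ crossings B r F, (restrictLine r E).eval (crossingAbscissa r u) = 0) :
    (crossings B r F).card ≤ E.totalDegree :=
  (h.card_le_natDegree hr hE (crossings_subset B r F) fun u hu ↦
    ⟨(mem_crossings.mp hu).2.1, heval u hu⟩).trans (natDegree_restrictLine_le r E)

theorem IsAdmissible.card_crossings_le_totalDegree (h : IsAdmissible R B k) (hr : r ∈ R)
    (hF : restrictLine r F ≠ 0) : (crossings B r F).card ≤ F.totalDegree := by
  refine h.card_crossings_le_of_eval_eq_zero hr hF fun u hu ↦ ?_
  obtain ⟨hB, hm, h₀⟩ := mem_crossings.mp hu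
  rw [eval_restrictLine_eq_of_meets (h.slope_ne r hr u hB) hm, h₀, Polynomial.eval_zero]

end Crossings

section QuarticDivision

open MvPolynomial

variable {K : Type*} [Field K]

/-- The discriminant of `nullDeriv t F`, as a quadratic polynomial in the slope `t`. -/
def slopeDiscr (F : MvPolynomial (Fin 3) K) : MvPolynomial (Fin 3) K :=
  pderiv 1 F ^ 2 - 4 * pderiv 0 F * pderiv 2 F

/-- The coefficient of `t` in the quotient of `quartic_division`. -/
def quotLinear (F : MvPolynomial (Fin 3) K) : MvPolynomial (Fin 3) K :=
  2 * pderiv 1 (pderiv 2 F) * pderiv 2 F ^ 2 - pderiv 2 (pderiv 2 F) * pderiv 2 F * pderiv 1 F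

/-- The constant coefficient of the quotient in `quartic_division`. -/
def quotConst (F : MvPolynomial (Fin 3) K) : MvPolynomial (Fin 3) K :=
  (pderiv 1 (pderiv 1 F) + 2 * pderiv 0 (pderiv 2 F)) * pderiv 2 F ^ 2 -
    pderiv 2 (pderiv 2 F) * pderiv 2 F * pderiv 0 F -
    2 * pderiv 1 (pderiv 2 F) * pderiv 2 F * pderiv 1 F +
    pderiv 2 (pderiv 2 F) * pderiv 1 F ^ 2

/-- The quotient in `quartic_division`. -/
def slopeQuot (t : K) (F : MvPolynomial (Fin 3) K) : MvPolynomial (Fin 3) K :=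
  pderiv 2 (pderiv 2 F) * pderiv 2 F ^ 2 * C t ^ 2 + quotLinear F * C t + quotConst F

/-- The coefficient of `t` in the remainder of `quartic_division`. -/
def remLinear (F : MvPolynomial (Fin 3) K) : MvPolynomial (Fin 3) K :=
  2 * pderiv 0 (pderiv 1 F) * pderiv 2 F ^ 3 - quotLinear F * pderiv 0 F -
    quotConst F * pderiv 1 F

/-- The constant coefficient of the remainder in `quartic_division`. -/
def remConst (F : MvPolynomial (Fin 3) K) : MvPolynomial (Fin 3) K :=
  pderiv 0 (pderiv 0 F) * pderiv 2 F ^ 3 - quotConst F * pderiv 0 F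

/-- Division of the quartic `nullDeriv t (nullDeriv t F)` by the quadratic `nullDeriv t F`, both as
polynomials in `t`. -/
theorem quartic_division (t : K) (F : MvPolynomial (Fin 3) K) :
    pderiv 2 F ^ 3 * nullDeriv t (nullDeriv t F) =
      nullDeriv t F * slopeQuot t F + (remLinear F * C t + remConst F) := by
  rw [nullDeriv_nullDeriv, nullDeriv_apply]
  simp only [slopeQuot, remLinear, remConst, quotLinear, quotConst]
  ring

section Degrees

variable {G H : MvPolynomial (Fin 3) K} {a b : ℕ}

theorem totalDegree_mul_le_of_le (hG : G.totalDegree ≤ a) (hH : H.totalDegree ≤ b) :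
    (G * H).totalDegree ≤ a + b :=
  (totalDegree_mul G H).trans (add_le_add hG hH)

theorem totalDegree_add_le_of_le (hG : G.totalDegree ≤ a) (hH : H.totalDegree ≤ a) :
    (G + H).totalDegree ≤ a :=
  (totalDegree_add G H).trans (max_le hG hH)

theorem totalDegree_sub_le_of_le (hG : G.totalDegree ≤ a) (hH : H.totalDegree ≤ a) :
    (G - H).totalDegree ≤ a :=
  (totalDegree_sub G H).trans (max_le hG hH)

theorem totalDegree_ofNat_mul_le_of_le (n : ℕ) [n.AtLeastTwo] (hG : G.totalDegree ≤ a) :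
    (ofNat(n) * G).totalDegree ≤ a := by
  rw [← map_ofNat (C : K →+* MvPolynomial (Fin 3) K), ← smul_eq_C_mul]
  exact (totalDegree_smul_le _ _).trans hG

theorem totalDegree_pderiv_pderiv_le (i j : Fin 3) (F : MvPolynomial (Fin 3) K) :
    (pderiv i (pderiv j F)).totalDegree ≤ F.totalDegree :=
  (totalDegree_pderiv_le i _).trans ((Nat.sub_le _ _).trans
    ((totalDegree_pderiv_le j F).trans (Nat.sub_le _ _)))

theorem totalDegree_pow_le_of_le (n : ℕ) (hG : G.totalDegree ≤ a) :
    (G ^ n).totalDegree ≤ n * a :=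
  (totalDegree_pow G n).trans (Nat.mul_le_mul_left n hG)

variable (F : MvPolynomial (Fin 3) K)

theorem totalDegree_quotLinear_le : (quotLinear F).totalDegree ≤ 3 * F.totalDegree := by
  have h₁ (i) := (totalDegree_pderiv_le i F).trans (Nat.sub_le _ _)
  have h₂ (i j) := totalDegree_pderiv_pderiv_le i j F
  refine totalDegree_sub_le_of_le ?_ ?_
  · exact (totalDegree_mul_le_of_le (totalDegree_ofNat_mul_le_of_le 2 (h₂ 1 2))
      (totalDegree_pow_le_of_le 2 (h₁ 2))).trans (by omega)
  · exact (totalDegree_mul_le_of_le (totalDegree_mul_le_of_le (h₂ 2 2) (h₁ 2)) (h₁ 1)).trans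
      (by omega)

theorem totalDegree_quotConst_le : (quotConst F).totalDegree ≤ 3 * F.totalDegree := by
  have h₁ (i) := (totalDegree_pderiv_le i F).trans (Nat.sub_le _ _)
  have h₂ (i j) := totalDegree_pderiv_pderiv_le i j F
  refine totalDegree_add_le_of_le (totalDegree_sub_le_of_le (totalDegree_sub_le_of_le ?_ ?_) ?_) ?_
  · exact (totalDegree_mul_le_of_le (totalDegree_add_le_of_le (h₂ 1 1)
      (totalDegree_ofNat_mul_le_of_le 2 (h₂ 0 2)))
      (totalDegree_pow_le_of_le 2 (h₁ 2))).trans (by omega)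
  · exact (totalDegree_mul_le_of_le (totalDegree_mul_le_of_le (h₂ 2 2) (h₁ 2)) (h₁ 0)).trans
      (by omega)
  · exact (totalDegree_mul_le_of_le (totalDegree_mul_le_of_le
      (totalDegree_ofNat_mul_le_of_le 2 (h₂ 1 2)) (h₁ 2)) (h₁ 1)).trans (by omega)
  · exact (totalDegree_mul_le_of_le (h₂ 2 2) (totalDegree_pow_le_of_le 2 (h₁ 1))).trans (by omega)

theorem totalDegree_remLinear_le : (remLinear F).totalDegree ≤ 4 * F.totalDegree := by
  have h₁ (i) := (totalDegree_pderiv_le i F).trans (Nat.sub_le _ _)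
  refine totalDegree_sub_le_of_le (totalDegree_sub_le_of_le ?_ ?_) ?_
  · exact (totalDegree_mul_le_of_le
      (totalDegree_ofNat_mul_le_of_le 2 (totalDegree_pderiv_pderiv_le 0 1 F))
      (totalDegree_pow_le_of_le 3 (h₁ 2))).trans (by omega)
  · exact (totalDegree_mul_le_of_le (totalDegree_quotLinear_le F) (h₁ 0)).trans (by omega)
  · exact (totalDegree_mul_le_of_le (totalDegree_quotConst_le F) (h₁ 1)).trans (by omega)

theorem totalDegree_remConst_le : (remConst F).totalDegree ≤ 4 * F.totalDegree := by
  have h₁ (i) := (totalDegree_pderiv_le i F).trans (Nat.sub_le _ _)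
  refine totalDegree_sub_le_of_le ?_ ?_
  · exact (totalDegree_mul_le_of_le (totalDegree_pderiv_pderiv_le 0 0 F)
      (totalDegree_pow_le_of_le 3 (h₁ 2))).trans (by omega)
  · exact (totalDegree_mul_le_of_le (totalDegree_quotConst_le F) (h₁ 0)).trans (by omega)

theorem totalDegree_slopeDiscr_mul_le :
    (slopeDiscr F * pderiv 2 F).totalDegree ≤ 3 * F.totalDegree := by
  have h₁ (i) := (totalDegree_pderiv_le i F).trans (Nat.sub_le _ _)
  have hdiscr : (slopeDiscr F).totalDegree ≤ 2 * F.totalDegree :=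
    totalDegree_sub_le_of_le (totalDegree_pow_le_of_le 2 (h₁ 1)) <|
      (totalDegree_mul_le_of_le (totalDegree_ofNat_mul_le_of_le 4 (h₁ 0)) (h₁ 2)).trans (by omega)
  exact (totalDegree_mul_le_of_le hdiscr (h₁ 2)).trans (by omega)

end Degrees

section CrossingValues

variable {r u : K × K × K} {F : MvPolynomial (Fin 3) K}

theorem restrictLine_nullDeriv_eq_zero (hr : restrictLine r F = 0) :
    restrictLine r (nullDeriv r.1 F) = 0 := by
  rw [← derivative_restrictLine, hr, Polynomial.derivative_zero]

theorem eval_restrictLine_remainder_eq_zero (hr : restrictLine r F = 0) (x : K) :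
    (restrictLine r (remLinear F)).eval x * r.1 + (restrictLine r (remConst F)).eval x = 0 := by
  have hdiv := congrArg (fun G ↦ (restrictLine r G).eval x) (quartic_division r.1 F)
  have h₁ := restrictLine_nullDeriv_eq_zero hr
  have h₂ := restrictLine_nullDeriv_eq_zero h₁
  simpa [h₁, h₂, restrictLine_C, eq_comm] using hdiv

theorem eval_restrictLine_nullDeriv_eq_zero (hr : restrictLine r F = 0) (x : K) :
    (restrictLine r (pderiv 0 F)).eval x + r.1 * (restrictLine r (pderiv 1 F)).eval x +
      r.1 ^ 2 * (restrictLine r (pderiv 2 F)).eval x = 0 := by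
  have h := congrArg (Polynomial.eval x) (restrictLine_nullDeriv_eq_zero hr)
  simpa [nullDeriv_apply, restrictLine_C] using h

variable (ht : r.1 ≠ u.1) (hm : Meets r u) (hr : restrictLine r F = 0) (hu : restrictLine u F = 0)

include ht hm hr hu

/-! The slopes of two crossing lines on the surface `F = 0` are the two roots of the quadratic
`nullDeriv t F`, and both are roots of the remainder of the quartic division. -/

theorem eval_pderiv_one_of_meets :
    (restrictLine r (pderiv 1 F)).eval (crossingAbscissa r u) =
      -(r.1 + u.1) * (restrictLine r (pderiv 2 F)).eval (crossingAbscissa r u) := by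
  have hr' := eval_restrictLine_nullDeriv_eq_zero hr (crossingAbscissa r u)
  have hu' := eval_restrictLine_nullDeriv_eq_zero hu (crossingAbscissa r u)
  simp only [← eval_restrictLine_eq_of_meets ht hm] at hu'
  apply mul_right_cancel₀ (sub_ne_zero.mpr ht)
  linear_combination hr' - hu'

theorem eval_pderiv_zero_of_meets :
    (restrictLine r (pderiv 0 F)).eval (crossingAbscissa r u) =
      r.1 * u.1 * (restrictLine r (pderiv 2 F)).eval (crossingAbscissa r u) := by
  have h := eval_restrictLine_nullDeriv_eq_zero hr (crossingAbscissa r u)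
  rw [eval_pderiv_one_of_meets ht hm hr hu] at h
  linear_combination h

theorem eval_remLinear_of_meets :
    (restrictLine r (remLinear F)).eval (crossingAbscissa r u) = 0 := by
  have hr' := eval_restrictLine_remainder_eq_zero hr (crossingAbscissa r u)
  have hu' := eval_restrictLine_remainder_eq_zero hu (crossingAbscissa r u)
  simp only [← eval_restrictLine_eq_of_meets ht hm] at hu'
  refine (mul_eq_zero.mp ?_).resolve_right (sub_ne_zero.mpr ht)
  linear_combination hr' - hu'

theorem eval_remConst_of_meets :
    (restrictLine r (remConst F)).eval (crossingAbscissa r u) = 0 := by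
  have h := eval_restrictLine_remainder_eq_zero hr (crossingAbscissa r u)
  rwa [eval_remLinear_of_meets ht hm hr hu, zero_mul, zero_add] at h

theorem eval_pderiv_eq_zero_of_slopeDiscr
    (h : (restrictLine r (slopeDiscr F * pderiv 2 F)).eval (crossingAbscissa r u) = 0)
    (i : Fin 3) : (restrictLine r (pderiv i F)).eval (crossingAbscissa r u) = 0 := by
  have h₀ := eval_pderiv_zero_of_meets ht hm hr hu
  have h₁ := eval_pderiv_one_of_meets ht hm hr hu
  simp only [slopeDiscr, map_sub, map_mul, map_pow, map_ofNat, Polynomial.eval_sub,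
    Polynomial.eval_mul, Polynomial.eval_pow, Polynomial.eval_ofNat, h₀, h₁] at h
  have hcube : (r.1 - u.1) ^ 2 *
      (restrictLine r (pderiv 2 F)).eval (crossingAbscissa r u) ^ 3 = 0 := by
    linear_combination h
  have h₂ : (restrictLine r (pderiv 2 F)).eval (crossingAbscissa r u) = 0 :=
    eq_zero_of_pow_eq_zero ((mul_eq_zero.mp hcube).resolve_left
      (pow_ne_zero 2 (sub_ne_zero.mpr ht)))
  rw [h₂, mul_zero] at h₀ h₁
  fin_cases i
  · exact h₀
  · exact h₁
  · exact h₂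

end CrossingValues

end QuarticDivision

/-! ### Red lines with many crossings on a surface -/

section Ruled

open MvPolynomial

variable {K : Type*} [Field K] {r u : K × K × K} {F : MvPolynomial (Fin 3) K}

/-- The restriction of `∂(nullDeriv t F)/∂t` to a line `r` on the surface `F = 0`. At a crossing
with a line `u` it equals `pderiv 2 F` times the difference `r.1 - u.1` of the slopes. -/
def slopeGap (r : K × K × K) (F : MvPolynomial (Fin 3) K) : Polynomial K :=
  restrictLine r (pderiv 1 F + C (2 * r.1) * pderiv 2 F)

theorem slopeGap_eq (r : K × K × K) (F : MvPolynomial (Fin 3) K) : slopeGap r F =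
    restrictLine r (pderiv 1 F) + 2 * Polynomial.C r.1 * restrictLine r (pderiv 2 F) := by
  rw [slopeGap, map_add, map_mul, restrictLine_C, map_mul, map_ofNat]

theorem natDegree_restrictLine_pderiv_le (r : K × K × K) (F : MvPolynomial (Fin 3) K) (i : Fin 3) :
    (restrictLine r (pderiv i F)).natDegree ≤ F.totalDegree :=
  (natDegree_restrictLine_le r _).trans ((totalDegree_pderiv_le i F).trans (Nat.sub_le _ _))

theorem natDegree_slopeGap_le (r : K × K × K) (F : MvPolynomial (Fin 3) K) :
    (slopeGap r F).natDegree ≤ F.totalDegree := by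
  rw [slopeGap, map_add, map_mul, restrictLine_C]
  exact Polynomial.natDegree_add_le_of_degree_le (natDegree_restrictLine_pderiv_le r F 1)
    ((Polynomial.natDegree_C_mul_le _ _).trans (natDegree_restrictLine_pderiv_le r F 2))

theorem derivative_slopeGap (r : K × K × K) (F : MvPolynomial (Fin 3) K) :
    Polynomial.derivative (slopeGap r F) = Polynomial.derivative (restrictLine r (pderiv 1 F)) +
      2 * Polynomial.C r.1 * Polynomial.derivative (restrictLine r (pderiv 2 F)) := by
  have h : (2 * Polynomial.C r.1 : Polynomial K) = Polynomial.C (2 * r.1) := by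
    rw [map_mul, map_ofNat]
  rw [slopeGap_eq, h, Polynomial.derivative_add, Polynomial.derivative_C_mul]

theorem derivative_derivative_slopeGap (r : K × K × K) (F : MvPolynomial (Fin 3) K) :
    Polynomial.derivative (Polynomial.derivative (slopeGap r F)) =
      Polynomial.derivative (Polynomial.derivative (restrictLine r (pderiv 1 F))) +
      2 * Polynomial.C r.1 *
        Polynomial.derivative (Polynomial.derivative (restrictLine r (pderiv 2 F))) := by
  have h : (2 * Polynomial.C r.1 : Polynomial K) = Polynomial.C (2 * r.1) := by
    rw [map_mul, map_ofNat]
  rw [derivative_slopeGap, h, Polynomial.derivative_add, Polynomial.derivative_C_mul]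

theorem eval_slopeGap_of_meets (ht : r.1 ≠ u.1) (hm : Meets r u) (hr : restrictLine r F = 0)
    (hu : restrictLine u F = 0) :
    (slopeGap r F).eval (crossingAbscissa r u) =
      (r.1 - u.1) * (restrictLine r (pderiv 2 F)).eval (crossingAbscissa r u) := by
  rw [slopeGap_eq]
  simp only [Polynomial.eval_add, Polynomial.eval_mul, Polynomial.eval_C, Polynomial.eval_ofNat]
  rw [eval_pderiv_one_of_meets ht hm hr hu]
  ring

section OnSurface

variable (hr : restrictLine r F = 0)

include hr

theorem restrictLine_pderiv_zero :
    restrictLine r (pderiv 0 F) = -(Polynomial.C r.1 * restrictLine r (pderiv 1 F)) -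
      Polynomial.C r.1 ^ 2 * restrictLine r (pderiv 2 F) := by
  have h := restrictLine_nullDeriv_eq_zero hr
  simp only [nullDeriv_apply, map_add, map_mul, map_pow, restrictLine_C] at h
  linear_combination h

theorem restrictLine_slopeDiscr : restrictLine r (slopeDiscr F) = slopeGap r F ^ 2 := by
  rw [slopeGap_eq]
  simp only [slopeDiscr, map_sub, map_mul, map_pow, map_ofNat, restrictLine_pderiv_zero hr]
  ring

/-- Applying `pderiv i` to the division identity, whose remainder is a multiple of `F`, and
restricting to `r` gives a linear differential equation for the restricted partials. -/
theorem exists_ode_restrictLine_pderiv (h₁ : F ∣ remLinear F) (h₀ : F ∣ remConst F) :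
    ∃ h : Polynomial K, ∀ i, restrictLine r (pderiv 2 F) ^ 3 *
      Polynomial.derivative (Polynomial.derivative (restrictLine r (pderiv i F))) =
        Polynomial.derivative (restrictLine r (pderiv i F)) * restrictLine r (slopeQuot r.1 F) +
          restrictLine r (pderiv i F) * h := by
  obtain ⟨G₁, hG₁⟩ := h₁
  obtain ⟨G₀, hG₀⟩ := h₀
  refine ⟨restrictLine r (G₁ * C r.1 + G₀), fun i ↦ ?_⟩
  have hdiv : pderiv 2 F ^ 3 * nullDeriv r.1 (nullDeriv r.1 F) =
      nullDeriv r.1 F * slopeQuot r.1 F + F * (G₁ * C r.1 + G₀) := by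
    rw [quartic_division]
    linear_combination C r.1 * hG₁ + hG₀
  have hres := congrArg (fun G ↦ restrictLine r (pderiv i G)) hdiv
  have hd := restrictLine_nullDeriv_eq_zero hr
  simp only [map_add, pderiv_mul, map_mul, map_pow, pderiv_nullDeriv, hr, hd,
    restrictLine_nullDeriv_eq_zero hd] at hres
  rw [derivative_restrictLine, derivative_restrictLine]
  simp only [map_add, map_mul]
  linear_combination hres

/-- The derivative with respect to the slope of the division identity, restricted to `r`. -/
theorem two_mul_pow_mul_derivative_slopeGap (h₁ : F ∣ remLinear F) :
    2 * restrictLine r (pderiv 2 F) ^ 3 * Polynomial.derivative (slopeGap r F) =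
      slopeGap r F * restrictLine r (slopeQuot r.1 F) := by
  have hrem : restrictLine r (remLinear F) = 0 := by
    obtain ⟨G, hG⟩ := h₁
    rw [hG, map_mul, hr, zero_mul]
  rw [derivative_slopeGap, derivative_restrictLine, derivative_restrictLine, slopeGap_eq]
  simp only [remLinear, slopeQuot, quotLinear, quotConst, nullDeriv_apply, map_add, map_sub,
    map_mul, map_pow, map_ofNat, restrictLine_C, restrictLine_pderiv_zero hr,
    pderiv_pderiv_comm (2 : Fin 3) 1] at hrem ⊢
  linear_combination hrem

theorem exists_restrictLine_pderiv_eq_linear_mul (p : ℕ) [CharP K p]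
    (hp : 2 * F.totalDegree + 2 < p) (h₁ : F ∣ remLinear F) (h₀ : F ∣ remConst F)
    (ha : slopeGap r F ≠ 0) (hb : restrictLine r (pderiv 2 F) ≠ 0) :
    ∃ e c : K, restrictLine r (pderiv 2 F) =
      (Polynomial.C e + Polynomial.C c * Polynomial.X) * slopeGap r F := by
  obtain ⟨h, hode⟩ := exists_ode_restrictLine_pderiv hr h₁ h₀
  refine exists_eq_linear_mul_of_ode p ha hb (natDegree_slopeGap_le r F)
    (natDegree_restrictLine_pderiv_le r F 2) hp (h := h) ?_ (hode 2)
    (two_mul_pow_mul_derivative_slopeGap hr h₁)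
  rw [derivative_derivative_slopeGap, derivative_slopeGap, slopeGap_eq]
  linear_combination hode 1 + 2 * Polynomial.C r.1 * hode 2

theorem collinear_of_restrictLine_pderiv_eq {e c : K}
    (hec : restrictLine r (pderiv 2 F) =
      (Polynomial.C e + Polynomial.C c * Polynomial.X) * slopeGap r F)
    (ht : r.1 ≠ u.1) (hm : Meets r u) (hu : restrictLine u F = 0)
    (hux : (slopeGap r F).eval (crossingAbscissa r u) ≠ 0) :
    e * u.1 + -c * u.2.1 = e * r.1 - c * r.2.1 - 1 ∧
      u.2.2 = -r.2.1 * u.1 + r.1 * u.2.1 + r.2.2 := by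
  have hx := crossingAbscissa_mul ht
  have hgap := eval_slopeGap_of_meets ht hm hr hu
  rw [hec] at hgap
  simp only [Polynomial.eval_add, Polynomial.eval_mul, Polynomial.eval_C,
    Polynomial.eval_X] at hgap
  refine ⟨mul_left_cancel₀ hux ?_, by unfold Meets at hm; linear_combination -hm⟩
  linear_combination hgap + c * (slopeGap r F).eval (crossingAbscissa r u) * hx

end OnSurface

/-- When the remainders of the quartic division vanish on the surface, the second slope at the
points of a line is a Möbius function of the position, so that the lines meeting it at general
points have collinear parameters. -/
theorem IsAdmissible.card_crossings_le_of_dvd_remainder (p : ℕ) [CharP K p]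
    {R B : Finset (K × K × K)} {k : ℕ} (h : IsAdmissible R B k) (hrR : r ∈ R)
    (hp : 2 * F.totalDegree + 2 < p) (h₁ : F ∣ remLinear F) (h₀ : F ∣ remConst F)
    (hr : restrictLine r F = 0) (hD : restrictLine r (slopeDiscr F * pderiv 2 F) ≠ 0) :
    (crossings B r F).card ≤ F.totalDegree + k := by
  rw [map_mul, restrictLine_slopeDiscr hr] at hD
  have ha : slopeGap r F ≠ 0 := fun h0 ↦ hD (by rw [h0, zero_pow two_ne_zero, zero_mul])
  obtain ⟨e, c, hec⟩ :=
    exists_restrictLine_pderiv_eq_linear_mul hr p hp h₁ h₀ ha (right_ne_zero_of_mul hD)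
  rw [← Finset.card_filter_add_card_filter_not
    (fun u ↦ (slopeGap r F).eval (crossingAbscissa r u) = 0)]
  refine add_le_add ?_ ?_
  · refine (h.card_le_natDegree hrR ha ((Finset.filter_subset _ _).trans
      (crossings_subset B r F)) fun u hu ↦ ?_).trans (natDegree_slopeGap_le r F)
    rw [Finset.mem_filter, mem_crossings] at hu
    exact ⟨hu.1.2.1, hu.2⟩
  · have hcollinear : ∀ u ∈ (crossings B r F).filter
        fun u ↦ ¬ (slopeGap r F).eval (crossingAbscissa r u) = 0,
        u ∈ B ∧ e * u.1 + -c * u.2.1 = e * r.1 - c * r.2.1 - 1 ∧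
          u.2.2 = -r.2.1 * u.1 + r.1 * u.2.1 + r.2.2 := by
      intro u hu
      rw [Finset.mem_filter, mem_crossings] at hu
      obtain ⟨⟨huB, hm, huF⟩, hux⟩ := hu
      exact ⟨huB, collinear_of_restrictLine_pderiv_eq hr hec (h.slope_ne r hrR u huB) hm huF hux⟩
    rcases Finset.eq_empty_or_nonempty ((crossings B r F).filter
      fun u ↦ ¬ (slopeGap r F).eval (crossingAbscissa r u) = 0) with hempty | ⟨u, hu⟩
    · simp [hempty]
    · have hne : e ≠ 0 ∨ -c ≠ 0 := by
        by_contra! hec0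
        have hlin := (hcollinear u hu).2.1
        rw [neg_eq_zero] at hec0
        simp [hec0] at hlin
      exact (Finset.card_le_card fun u hu ↦ Finset.mem_filter.mpr (hcollinear u hu)).trans
        (h.card_collinear_le e (-c) _ _ _ _ hne)

end Ruled

section Surface

open MvPolynomial

variable {K : Type*} [Field K] (p : ℕ) [CharP K p] {R B : Finset (K × K × K)} {k : ℕ}
  {F : MvPolynomial (Fin 3) K}

theorem IsAdmissible.exists_not_dvd_card_crossings_le (h : IsAdmissible R B k) (hF : Irreducible F)
    (hp : 2 * F.totalDegree + 2 < p) :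
    ∃ E : MvPolynomial (Fin 3) K, ¬ F ∣ E ∧ E.totalDegree ≤ 4 * F.totalDegree ∧
      ∀ r ∈ R, restrictLine r F = 0 → restrictLine r E ≠ 0 →
        (crossings B r F).card ≤ 4 * F.totalDegree + k := by
  have vanishing {E : MvPolynomial (Fin 3) K} (hFE : ¬ F ∣ E)
      (hE : E.totalDegree ≤ 4 * F.totalDegree)
      (heval : ∀ {r u}, r.1 ≠ u.1 → Meets r u → restrictLine r F = 0 → restrictLine u F = 0 →
        (restrictLine r E).eval (crossingAbscissa r u) = 0) :
      ∃ E : MvPolynomial (Fin 3) K, ¬ F ∣ E ∧ E.totalDegree ≤ 4 * F.totalDegree ∧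
        ∀ r ∈ R, restrictLine r F = 0 → restrictLine r E ≠ 0 →
          (crossings B r F).card ≤ 4 * F.totalDegree + k := by
    refine ⟨E, hFE, hE, fun r hr hrF hrE ↦ ?_⟩
    refine (h.card_crossings_le_of_eval_eq_zero hr hrE fun u hu ↦ ?_).trans (by omega)
    obtain ⟨huB, hm, huF⟩ := mem_crossings.mp hu
    exact heval (h.slope_ne r hr u huB) hm hrF huF
  by_cases h₁ : F ∣ remLinear F
  swap
  · exact vanishing h₁ (totalDegree_remLinear_le F) eval_remLinear_of_meets
  by_cases h₀ : F ∣ remConst F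
  swap
  · exact vanishing h₀ (totalDegree_remConst_le F) eval_remConst_of_meets
  by_cases hD : F ∣ slopeDiscr F * pderiv 2 F
  swap
  · refine ⟨_, hD, (totalDegree_slopeDiscr_mul_le F).trans (by omega), fun r hr hrF hrE ↦ ?_⟩
    exact (h.card_crossings_le_of_dvd_remainder p hr hp h₁ h₀ hrF hrE).trans (by omega)
  obtain ⟨i, hi⟩ := exists_not_dvd_pderiv p hF (by omega)
  refine vanishing hi ((totalDegree_pderiv_le i F).trans (by omega)) fun ht hm hrF huF ↦ ?_
  refine eval_pderiv_eq_zero_of_slopeDiscr ht hm hrF huF ?_ i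
  obtain ⟨G, hG⟩ := hD
  rw [hG, map_mul, hrF, zero_mul, Polynomial.eval_zero]

theorem IsAdmissible.exists_card_crossings_le_of_irreducible (h : IsAdmissible R B k)
    (hF : Irreducible F) (hp : 2 * F.totalDegree + 2 < p) :
    ∃ X ⊆ R, X.card ≤ 4 * F.totalDegree ^ 2 ∧
      ∀ r ∈ R, r ∉ X → (crossings B r F).card ≤ 4 * F.totalDegree + k := by
  obtain ⟨E, hFE, hE, hcard⟩ := h.exists_not_dvd_card_crossings_le p hF hp
  refine ⟨R.filter fun r ↦ restrictLine r F = 0 ∧ restrictLine r E = 0,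
    Finset.filter_subset _ _, ?_, fun r hr hrX ↦ ?_⟩
  · calc _ ≤ F.totalDegree * E.totalDegree :=
          card_nullLines_le_totalDegree_mul hF hFE _ fun v hv ↦ (Finset.mem_filter.mp hv).2
      _ ≤ F.totalDegree * (4 * F.totalDegree) := by gcongr
      _ = 4 * F.totalDegree ^ 2 := by ring
  · by_cases hrF : restrictLine r F = 0
    · exact hcard r hr hrF fun hrE ↦ hrX (Finset.mem_filter.mpr ⟨hr, hrF, hrE⟩)
    · exact (h.card_crossings_le_totalDegree hr hrF).trans (by omega)

theorem IsAdmissible.exists_card_crossings_mul_le (h : IsAdmissible R B k)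
    {G H : MvPolynomial (Fin 3) K} (hG : Irreducible G) (hGH : ¬ G ∣ H) {X Y : Finset (K × K × K)}
    (hX : ∀ r ∈ R, r ∉ X → (crossings B r G).card ≤ 4 * G.totalDegree + k)
    (hY : ∀ r ∈ R, r ∉ Y → (crossings B r H).card ≤ 4 * H.totalDegree + k) :
    ∃ Z ⊆ R, Z.card ≤ G.totalDegree * H.totalDegree ∧ ∀ r ∈ R, r ∉ X ∪ Y ∪ Z →
      (crossings B r (G * H)).card ≤ 4 * (G.totalDegree + H.totalDegree) + k := by
  refine ⟨R.filter fun r ↦ restrictLine r G = 0 ∧ restrictLine r H = 0, Finset.filter_subset _ _,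
    card_nullLines_le_totalDegree_mul hG hGH _ fun v hv ↦ (Finset.mem_filter.mp hv).2,
    fun r hr hrX ↦ ?_⟩
  simp only [Finset.mem_union, Finset.mem_filter, not_or, not_and] at hrX
  have hle := (Finset.card_le_card (crossings_mul_subset B r G H)).trans (Finset.card_union_le _ _)
  have hGr := hX r hr hrX.1.1
  have hHr := hY r hr hrX.1.2
  by_cases hrG : restrictLine r G = 0
  · have := h.card_crossings_le_totalDegree hr (hrX.2 hr hrG)
    omega
  · have := h.card_crossings_le_totalDegree hr hrG
    omega

theorem IsAdmissible.exists_card_crossings_le (h : IsAdmissible R B k) (hF0 : F ≠ 0)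
    (hp : 2 * F.totalDegree + 2 < p) :
    ∃ X ⊆ R, X.card ≤ 4 * F.totalDegree ^ 2 ∧
      ∀ r ∈ R, r ∉ X → (crossings B r F).card ≤ 4 * F.totalDegree + k := by
  induction F using WfDvdMonoid.induction_on_irreducible with
  | zero => exact absurd rfl hF0
  | unit F hF =>
    refine ⟨∅, Finset.empty_subset _, by simp, fun r _ _ ↦ ?_⟩
    have hempty : crossings B r F = ∅ :=
      Finset.filter_eq_empty_iff.mpr fun u _ hm ↦ (hF.map (restrictLine u)).ne_zero hm.2
    simp [hempty]
  | mul H G hH hG ih =>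
    rw [totalDegree_mul_of_isDomain hG.ne_zero hH] at hp ⊢
    obtain ⟨Y, hYR, hYcard, hY⟩ := ih hH (by omega)
    by_cases hdvd : G ∣ H
    · refine ⟨Y, hYR, hYcard.trans (by gcongr; omega), fun r hr hrY ↦ ?_⟩
      refine (Finset.card_le_card fun u hu ↦ ?_).trans ((hY r hr hrY).trans (by omega))
      rw [mem_crossings, map_mul, mul_eq_zero] at hu
      refine mem_crossings.mpr ⟨hu.1, hu.2.1, hu.2.2.elim (fun hG0 ↦ ?_) id⟩
      exact zero_dvd_iff.mp (hG0 ▸ map_dvd (restrictLine u) hdvd)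
    · obtain ⟨X, hXR, hXcard, hX⟩ := h.exists_card_crossings_le_of_irreducible p hG (by omega)
      obtain ⟨Z, hZR, hZcard, hZ⟩ := h.exists_card_crossings_mul_le hG hdvd hX hY
      refine ⟨X ∪ Y ∪ Z, Finset.union_subset (Finset.union_subset hXR hYR) hZR, ?_, hZ⟩
      have hXYZ := Finset.card_union_le (X ∪ Y) Z
      have hXY := Finset.card_union_le X Y
      nlinarith

end Surface

/-! ### Incidences of an admissible family -/

section Incidences

variable {K : Type*} [Field K]

theorem exists_restrictLine_eq_zero (B : Finset (K × K × K)) {n : ℕ} (hB : 6 * B.card ≤ n ^ 2) :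
    ∃ F : MvPolynomial (Fin 3) K, F ≠ 0 ∧ F.totalDegree ≤ n ∧ ∀ u ∈ B, restrictLine u F = 0 := by
  let V := MvPolynomial.restrictTotalDegree (Fin 3) K n
  let coeffs : V →ₗ[K] (B → Fin (n + 1) → K) :=
    (LinearMap.pi fun u : B ↦ LinearMap.pi fun j : Fin (n + 1) ↦
      (Polynomial.lcoeff K j).comp (restrictLine u.1).toLinearMap).comp V.subtype
  have hlt : Module.finrank K (B → Fin (n + 1) → K) < Module.finrank K V := by
    have hchoose : (3 + n).choose 3 * 6 = (n + 1) * (n + 2) * (n + 3) := by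
      simpa [Nat.descFactorial_succ, Nat.factorial, mul_comm, mul_assoc, mul_left_comm, add_comm]
        using (Nat.descFactorial_eq_factorial_mul_choose (3 + n) 3).symm
    rw [show Module.finrank K V = (3 + n).choose 3 by
      rw [finrank_restrictTotalDegree, Fintype.card_fin, Nat.choose_symm_add]]
    simp only [Module.finrank_pi_fintype, Module.finrank_self, Finset.sum_const, Finset.card_univ,
      Fintype.card_fin, Fintype.card_coe, smul_eq_mul, mul_one]
    nlinarith
  obtain ⟨⟨F, hFV⟩, hF, hne⟩ :=
    (Submodule.ne_bot_iff _).mp (LinearMap.ker_ne_bot_of_finrank_lt hlt (f := coeffs))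
  have hdeg : F.totalDegree ≤ n := (MvPolynomial.mem_restrictTotalDegree _ _ _).mp hFV
  refine ⟨F, fun h ↦ hne (Subtype.ext h), hdeg, fun u hu ↦ Polynomial.ext fun j ↦ ?_⟩
  obtain hj | hj := lt_or_ge j (n + 1)
  · exact congrFun (congrFun (LinearMap.mem_ker.mp hF) ⟨u, hu⟩) ⟨j, hj⟩
  · exact Polynomial.coeff_eq_zero_of_natDegree_lt (by have := natDegree_restrictLine_le u F; omega)

/-- The number of pairs of a line of `R` and a line of `B` that meet. -/
def incidences (R B : Finset (K × K × K)) : ℕ := ∑ r ∈ R, (B.filter fun u ↦ Meets r u).card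

theorem incidences_empty_right (R : Finset (K × K × K)) : incidences R ∅ = 0 := by
  simp [incidences]

theorem incidences_le_card_mul_card (R B : Finset (K × K × K)) :
    incidences R B ≤ R.card * B.card :=
  Finset.sum_le_card_nsmul _ _ _ fun _ _ ↦ Finset.card_filter_le _ _

theorem incidences_union_right_le (R B B' : Finset (K × K × K)) :
    incidences R (B ∪ B') ≤ incidences R B + incidences R B' := by
  simp only [incidences, ← Finset.sum_add_distrib, Finset.filter_union]
  gcongr
  exact Finset.card_union_le _ _

theorem le_mul_of_forall_card_le {α : Type*} [DecidableEq α] {f : Finset α → ℕ} (hempty : f ∅ = 0)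
    (hunion : ∀ s t, f (s ∪ t) ≤ f s + f t) {m b j : ℕ} {s : Finset α}
    (hb : ∀ t ⊆ s, t.card ≤ m → f t ≤ b) (hs : s.card ≤ j * m) : f s ≤ j * b := by
  induction j generalizing s with
  | zero =>
    rw [zero_mul, Nat.le_zero, Finset.card_eq_zero] at hs
    simp [hs, hempty]
  | succ j ih =>
    rw [add_one_mul] at hs ⊢
    obtain hm | hm := le_total s.card m
    · exact (hb s subset_rfl hm).trans (Nat.le_add_left _ _)
    · obtain ⟨t, hts, ht⟩ := Finset.exists_subset_card_eq hm
      have hdiff : (s \ t).card ≤ j * m := by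
        rw [Finset.card_sdiff_of_subset hts]
        omega
      calc f s = f (s \ t ∪ t) := by rw [Finset.sdiff_union_of_subset hts]
        _ ≤ f (s \ t) + f t := hunion _ _
        _ ≤ j * b + b := add_le_add (ih (fun u hu ↦ hb u (hu.trans Finset.sdiff_subset)) hdiff)
            (hb t hts ht.le)

variable {p : ℕ} [CharP K p] {R B : Finset (K × K × K)} {k : ℕ}

include p in
theorem IsAdmissible.exists_incidences_le (h : IsAdmissible R B k) {n : ℕ}
    (hB : 6 * B.card ≤ n ^ 2) (hp : 2 * n + 2 < p) :
    ∃ X ⊆ R, X.card ≤ 4 * n ^ 2 ∧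
      incidences R B ≤ R.card * (4 * n + k) + incidences X B := by
  obtain ⟨F, hF0, hdeg, hFB⟩ := exists_restrictLine_eq_zero B hB
  obtain ⟨X, hXR, hXcard, hX⟩ := h.exists_card_crossings_le p hF0 (by omega)
  refine ⟨X, hXR, hXcard.trans (by gcongr), ?_⟩
  have hmeets (r) : (B.filter fun u ↦ Meets r u) = crossings B r F :=
    Finset.filter_congr fun u hu ↦ by simp [hFB u hu]
  have houtside : ∑ r ∈ R \ X, (B.filter fun u ↦ Meets r u).card ≤ R.card * (4 * n + k) := by
    refine (Finset.sum_le_card_nsmul _ _ (4 * n + k) fun r hr ↦ ?_).trans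
      (Nat.mul_le_mul_right _ (Finset.card_le_card Finset.sdiff_subset))
    rw [hmeets]
    rw [Finset.mem_sdiff] at hr
    exact (hX r hr.1 hr.2).trans (by omega)
  rw [incidences, ← Finset.sum_sdiff hXR]
  exact Nat.add_le_add_right houtside _

theorem scale_recursion {q h H d e : ℕ} (hq : 288 ≤ q) (hh : 288 ≤ h) (hH : H = 144 * h ^ 2)
    (he : 1 ≤ e) (k : ℕ) :
    H * (H * (d * h) ^ 2 * (24 * (d * h) + k) + 48 * H ^ 2 * (d ^ 3 + k * d ^ 2 * e)) ≤
      48 * H ^ 2 * ((d * h) ^ 3 + k * (d * h) ^ 2 * (e * q)) := by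
  have hcube : H * d ^ 3 * 2 ≤ (d * h) ^ 3 :=
    calc H * d ^ 3 * 2 = 288 * (h ^ 2 * d ^ 3) := by rw [hH]; ring
      _ ≤ h * (h ^ 2 * d ^ 3) := by gcongr
      _ = (d * h) ^ 3 := by ring
  have hsquare : H * d ^ 2 * e * 2 ≤ (d * h) ^ 2 * (e * q) :=
    calc H * d ^ 2 * e * 2 = (d * h) ^ 2 * (e * 288) := by rw [hH]; ring
      _ ≤ (d * h) ^ 2 * (e * q) := by gcongr
  have hone : 1 ≤ 24 * (e * q) := by nlinarith
  calc H * (H * (d * h) ^ 2 * (24 * (d * h) + k) + 48 * H ^ 2 * (d ^ 3 + k * d ^ 2 * e))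
      = 24 * H ^ 2 * (d * h) ^ 3 + H ^ 2 * k * (d * h) ^ 2 * 1 + 24 * H ^ 2 * (H * d ^ 3 * 2) +
        24 * H ^ 2 * k * (H * d ^ 2 * e * 2) := by ring
    _ ≤ 24 * H ^ 2 * (d * h) ^ 3 + H ^ 2 * k * (d * h) ^ 2 * (24 * (e * q)) +
        24 * H ^ 2 * (d * h) ^ 3 + 24 * H ^ 2 * k * ((d * h) ^ 2 * (e * q)) := by gcongr
    _ = 48 * H ^ 2 * ((d * h) ^ 3 + k * (d * h) ^ 2 * (e * q)) := by ring

/-- The blue lines are cut into `H` chunks, each on a surface of degree `6 * h ^ n`; the red lines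
lying on such a surface in an exceptional way are few enough for the scale `h ^ (n - 1)`. -/
theorem IsAdmissible.incidences_le_of_card_le {q h H : ℕ} (hq : 288 ≤ q) (hh : 288 ≤ h)
    (hH : H = 144 * h ^ 2) (n : ℕ) (hadm : IsAdmissible R B k) (hR : R.card ≤ H * (h ^ n) ^ 2)
    (hB : B.card ≤ H * (h ^ n) ^ 2) (hp : n ≠ 0 → 12 * h ^ n + 2 < p) :
    incidences R B ≤ 48 * H ^ 2 * ((h ^ n) ^ 3 + k * (h ^ n) ^ 2 * q ^ n) := by
  induction n generalizing R B with
  | zero =>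
    simp only [pow_zero, one_pow, mul_one] at hR hB ⊢
    calc incidences R B ≤ R.card * B.card := incidences_le_card_mul_card R B
      _ ≤ H * H := Nat.mul_le_mul hR hB
      _ ≤ 48 * H ^ 2 * (1 + k) := by nlinarith
  | succ n ih =>
    rw [pow_succ h, pow_succ q] at *
    have hp := hp n.succ_ne_zero
    have hle : h ^ n ≤ h ^ n * h := Nat.le_mul_of_pos_right _ (by omega)
    have hchunk : ∀ B' ⊆ B, B'.card ≤ (h ^ n * h) ^ 2 → incidences R B' ≤
        H * (h ^ n * h) ^ 2 * (24 * (h ^ n * h) + k) +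
          48 * H ^ 2 * ((h ^ n) ^ 3 + k * (h ^ n) ^ 2 * q ^ n) := by
      intro B' hB' hcard
      have hadm' := hadm.mono subset_rfl hB'
      obtain ⟨X, hXR, hXcard, hX⟩ := hadm'.exists_incidences_le (n := 6 * (h ^ n * h))
        (p := p) (by nlinarith) (by omega)
      have hXB' := ih (hadm'.mono hXR subset_rfl) (hXcard.trans_eq (by rw [hH]; ring))
        (hcard.trans (by rw [hH, mul_pow]; nlinarith [Nat.zero_le ((h ^ n) ^ 2 * h ^ 2)]))
        fun _ ↦ by omega
      refine hX.trans (add_le_add (Nat.mul_le_mul hR (le_of_eq (by ring))) hXB')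
    exact (le_mul_of_forall_card_le (incidences_empty_right R) (incidences_union_right_le R) hchunk
      hB).trans (scale_recursion hq hh hH (Nat.one_le_pow _ _ (by omega)) k)

theorem exists_scale {h : ℕ} (hh : 1 < h) {M : ℝ} (hM : 1 ≤ M) :
    ∃ n : ℕ, M ≤ 144 * (h : ℝ) ^ 2 * ((h : ℝ) ^ n) ^ 2 ∧ ((h : ℝ) ^ n) ^ 2 ≤ M ∧
      (n ≠ 0 → 144 * ((h : ℝ) ^ n) ^ 2 ≤ M) := by
  have hh1 : (1 : ℝ) < h := by exact_mod_cast hh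
  obtain hM' | hM' := lt_or_ge M 144
  · exact ⟨0, by nlinarith, by simpa using hM, fun h0 ↦ absurd rfl h0⟩
  · obtain ⟨n, hle, hlt⟩ := exists_nat_pow_near (x := M / 144) (y := (h : ℝ) ^ 2)
      (by linarith) (one_lt_pow₀ hh1 two_ne_zero)
    rw [pow_succ, ← pow_mul, mul_comm 2 n, pow_mul] at hlt
    rw [← pow_mul, mul_comm 2 n, pow_mul] at hle
    exact ⟨n, by linarith, by linarith, fun _ ↦ by linarith⟩

theorem pow_le_rpow_div {x M : ℝ} (hx : 0 ≤ x) {m : ℕ} (hm : m ≠ 0) (h : x ^ m ≤ M) (n : ℕ) :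
    x ^ n ≤ M ^ ((n : ℝ) / m) := by
  calc x ^ n = (x ^ m) ^ ((n : ℝ) / m) := by
        rw [← Real.rpow_natCast x m, ← Real.rpow_mul hx,
          mul_div_cancel₀ _ (Nat.cast_ne_zero.mpr hm), Real.rpow_natCast]
    _ ≤ M ^ ((n : ℝ) / m) := Real.rpow_le_rpow (by positivity) h (by positivity)

/-- The constant of the incidence bound `IsAdmissible.incidences_le`, not optimised. -/
def incidenceConst : ℝ := 48 * (144 * ((288 : ℝ) ^ 8) ^ 2) ^ 2

theorem incidenceConst_pos : 0 < incidenceConst := by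
  unfold incidenceConst
  positivity

theorem IsAdmissible.incidences_le (hadm : IsAdmissible R B k) {M : ℝ} (hM : 1 ≤ M)
    (hR : R.card ≤ M) (hB : B.card ≤ M) (hp : M ≤ (p : ℝ) ^ 2 / 2) :
    incidences R B ≤
      incidenceConst * (M ^ ((3 : ℝ) / 2) + k * M * M ^ ((1 : ℝ) / 16)) := by
  obtain ⟨q, hq⟩ : ∃ q : ℕ, q = 288 := ⟨_, rfl⟩
  obtain ⟨h, hh⟩ : ∃ h : ℕ, h = q ^ 8 := ⟨_, rfl⟩
  obtain ⟨H, hH⟩ : ∃ H : ℕ, H = 144 * h ^ 2 := ⟨_, rfl⟩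
  have hh288 : 288 ≤ h := hq ▸ hh ▸ Nat.le_self_pow (by norm_num) q
  obtain ⟨n, hnM, hMn, hn⟩ := exists_scale (show 1 < h by omega) hM
  have hHM : M ≤ (H * (h ^ n) ^ 2 : ℕ) := by
    rw [hH]
    exact_mod_cast hnM
  have hpn (hn0 : n ≠ 0) : 12 * h ^ n + 2 < p := by
    have hone : (1 : ℝ) ≤ (h : ℝ) ^ n := one_le_pow₀ (by exact_mod_cast (show 1 ≤ h by omega))
    have hsq : (12 * (h : ℝ) ^ n + 2) ^ 2 < (p : ℝ) ^ 2 := by nlinarith [hn hn0]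
    exact_mod_cast lt_of_pow_lt_pow_left₀ 2 (by positivity) hsq
  have hinc : (incidences R B : ℝ) ≤
      48 * (H : ℝ) ^ 2 * (((h : ℝ) ^ n) ^ 3 + k * ((h : ℝ) ^ n) ^ 2 * (q : ℝ) ^ n) := by
    exact_mod_cast hadm.incidences_le_of_card_le hq.ge hh288 hH n
      (by exact_mod_cast hR.trans hHM) (by exact_mod_cast hB.trans hHM) hpn
  have hcube : ((h : ℝ) ^ n) ^ 3 ≤ M ^ ((3 : ℝ) / 2) := by
    exact_mod_cast pow_le_rpow_div (by positivity) two_ne_zero hMn 3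
  have hqn : (q : ℝ) ^ n ≤ M ^ ((1 : ℝ) / 16) := by
    have hpow : ((q : ℝ) ^ n) ^ 16 ≤ M := (le_of_eq (by rw [hh]; push_cast; ring)).trans hMn
    simpa using pow_le_rpow_div (by positivity) (by norm_num) hpow 1
  have hconst : incidenceConst = 48 * (H : ℝ) ^ 2 := by
    rw [incidenceConst, hH, hh, hq]
    norm_num
  rw [hconst]
  refine hinc.trans ?_
  gcongr

end Incidences

/-! ### The energy of a grid of lines and abscissae -/

section Energy

variable {F : Type*} [Field F]

/-- The energy of a set `L` of lines `Y = m X + c`, encoded as `(m, c)`, and a set `A` of abscissae: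
the number of pairs of elements of `L × A` whose line has the same height over the abscissa. -/
def gridEnergy (L : Finset (F × F)) (A : Finset F) : ℕ :=
  (((L ×ˢ A) ×ˢ (L ×ˢ A)).filter fun z ↦
    z.1.1.1 * z.1.2 + z.1.1.2 = z.2.1.1 * z.2.2 + z.2.1.2).card

variable {K : Type*} [Field K] [Algebra F K]

/-- The red null line of the line `Y = m X + c`, encoded as `(m, c)`, and the abscissa `a`. -/
def redLine (θ : K) (x : (F × F) × F) : K × K × K :=
  (algebraMap F K x.1.1 + θ, algebraMap F K x.2 + θ ^ 2, algebraMap F K x.1.2)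

/-- The blue null line of the line `Y = m X + c`, encoded as `(m, c)`, and the abscissa `a`. -/
def blueLine (θ : K) (x : (F × F) × F) : K × K × K :=
  (algebraMap F K x.1.1, algebraMap F K x.2,
    algebraMap F K x.1.2 - θ ^ 2 * algebraMap F K x.1.1 + θ * algebraMap F K x.2)

theorem redLine_injective (θ : K) : Function.Injective (redLine (F := F) θ) := by
  rintro ⟨⟨m, c⟩, a⟩ ⟨⟨m', c'⟩, a'⟩ h
  simp only [redLine, Prod.mk.injEq, add_left_inj, (algebraMap F K).injective.eq_iff] at h
  obtain ⟨rfl, rfl, rfl⟩ := h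
  rfl

theorem blueLine_injective (θ : K) : Function.Injective (blueLine (F := F) θ) := by
  rintro ⟨⟨m, c⟩, a⟩ ⟨⟨m', c'⟩, a'⟩ h
  simp only [blueLine, Prod.mk.injEq, (algebraMap F K).injective.eq_iff] at h
  obtain ⟨rfl, rfl, h⟩ := h
  simpa using h

theorem meets_redLine_blueLine (θ : K) (x y : (F × F) × F) :
    Meets (redLine θ x) (blueLine θ y) ↔ x.1.1 * y.2 + x.1.2 = y.1.1 * x.2 + y.1.2 := by
  rw [← (algebraMap F K).injective.eq_iff]
  simp only [Meets, redLine, blueLine, map_add, map_mul]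
  constructor <;> intro h <;> linear_combination h

theorem eq_zero_of_quadratic_eq_zero {θ : K} (hθ : Transcendental F θ) {a b c : F}
    (h : algebraMap F K a + algebraMap F K b * θ + algebraMap F K c * θ ^ 2 = 0) :
    a = 0 ∧ b = 0 ∧ c = 0 := by
  have hzero : (Polynomial.C a + Polynomial.C b * Polynomial.X +
      Polynomial.C c * Polynomial.X ^ 2 : Polynomial F) = 0 :=
    transcendental_iff.mp hθ _ (by simpa using h)
  refine ⟨?_, ?_, ?_⟩
  · simpa [Polynomial.coeff_X, Polynomial.coeff_C] using congrArg (Polynomial.coeff · 0) hzero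
  · simpa [Polynomial.coeff_X, Polynomial.coeff_C] using congrArg (Polynomial.coeff · 1) hzero
  · simpa [Polynomial.coeff_X, Polynomial.coeff_C] using congrArg (Polynomial.coeff · 2) hzero

theorem redLine_fst_ne_blueLine_fst {θ : K} (hθ : Transcendental F θ) (x y : (F × F) × F) :
    (redLine θ x).1 ≠ (blueLine θ y).1 := fun h ↦ by
  have hquad : algebraMap F K (x.1.1 - y.1.1) + algebraMap F K 1 * θ +
      algebraMap F K 0 * θ ^ 2 = 0 := by
    simp only [redLine, blueLine] at h
    rw [map_sub, map_one, map_zero]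
    linear_combination h
  exact one_ne_zero (eq_zero_of_quadratic_eq_zero hθ hquad).2.1

theorem eq_of_meets_blueLine {θ : K} (hθ : Transcendental F θ) {x y : (F × F) × F}
    (h : Meets (blueLine θ x) (blueLine θ y)) : x = y := by
  obtain ⟨⟨m, c⟩, a⟩ := x
  obtain ⟨⟨m', c'⟩, a'⟩ := y
  have hquad : algebraMap F K (c - c' - m' * a + m * a') + algebraMap F K (a - a') * θ +
      algebraMap F K (m' - m) * θ ^ 2 = 0 := by
    simp only [Meets, blueLine] at h
    simp only [map_sub, map_add, map_mul]
    linear_combination h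
  obtain ⟨hc, ha, hm⟩ := eq_zero_of_quadratic_eq_zero hθ hquad
  obtain rfl := sub_eq_zero.mp ha
  obtain rfl := sub_eq_zero.mp hm
  rw [show c = c' by linear_combination hc]

/-- A line of `K²` with two points in `F²` is defined over `F`. -/
theorem card_filter_algebraMap_eq_le {L : Finset (F × F)} {k : ℕ} (hk : 1 ≤ k)
    (hL : ∀ l m : F, (L.filter fun x ↦ x.2 = l * x.1 + m).card ≤ k) (α β : K) :
    (L.filter fun x ↦ algebraMap F K x.2 = α * algebraMap F K x.1 + β).card ≤ k := by
  obtain hone | hone := le_or_gt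
    (L.filter fun x ↦ algebraMap F K x.2 = α * algebraMap F K x.1 + β).card 1
  · exact hone.trans hk
  obtain ⟨⟨m, c⟩, hx, ⟨m', c'⟩, hy, hxy⟩ := Finset.one_lt_card.mp hone
  have hc := (Finset.mem_filter.mp hx).2
  have hc' := (Finset.mem_filter.mp hy).2
  have hm : m ≠ m' := by
    rintro rfl
    exact hxy (Prod.ext rfl ((algebraMap F K).injective (hc.trans hc'.symm)))
  have hm' : algebraMap F K m - algebraMap F K m' ≠ 0 :=
    sub_ne_zero.mpr ((algebraMap F K).injective.ne hm)
  set l := (c - c') / (m - m') with hl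
  have hα : α = algebraMap F K l := by
    rw [hl, map_div₀, map_sub, map_sub, eq_div_iff hm']
    linear_combination hc' - hc
  have hβ : β = algebraMap F K (c - l * m) := by
    rw [map_sub, map_mul, ← hα]
    linear_combination -hc
  refine (Finset.card_le_card fun x hx ↦ ?_).trans (hL l (c - l * m))
  rw [Finset.mem_filter] at hx ⊢
  refine ⟨hx.1, (algebraMap F K).injective ?_⟩
  rw [map_add, map_mul, ← hα, ← hβ]
  exact hx.2

theorem card_blueLine_collinear_le (θ : K) {L : Finset (F × F)} {A : Finset F} {k : ℕ}
    (hk : 1 ≤ k) (hA : A.card ≤ k)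
    (hL : ∀ l m : F, (L.filter fun x ↦ x.2 = l * x.1 + m).card ≤ k) {c₁ c₀ : K}
    (e l₁ l₂ l₃ : K) (hc : c₁ ≠ 0 ∨ c₀ ≠ 0) :
    (((L ×ˢ A).image (blueLine θ)).filter fun u ↦
      c₁ * u.1 + c₀ * u.2.1 = e ∧ u.2.2 = l₁ * u.1 + l₂ * u.2.1 + l₃).card ≤ k := by
  rw [Finset.filter_image, Finset.card_image_of_injective _ (blueLine_injective θ)]
  obtain rfl | hc₀ := eq_or_ne c₀ 0
  · refine (Finset.card_le_card_of_injOn Prod.snd ?_ ?_).trans hA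
    · exact fun x hx ↦ (Finset.mem_product.mp (Finset.mem_filter.mp hx).1).2
    · rintro ⟨⟨m, c⟩, a⟩ hx ⟨⟨m', c'⟩, a'⟩ hy rfl
      obtain ⟨-, hxm, hxc⟩ := Finset.mem_filter.mp hx
      obtain ⟨-, hym, hyc⟩ := Finset.mem_filter.mp hy
      simp only [blueLine] at hxm hym hxc hyc
      have hm : algebraMap F K m = algebraMap F K m' :=
        mul_left_cancel₀ (hc.resolve_right fun h ↦ h rfl) (by linear_combination hxm - hym)
      obtain rfl := (algebraMap F K).injective hm
      rw [(algebraMap F K).injective (show algebraMap F K c = algebraMap F K c' by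
        linear_combination hxc - hyc)]
  · refine (Finset.card_le_card_of_injOn Prod.fst ?_ ?_).trans
      (card_filter_algebraMap_eq_le hk hL (θ ^ 2 + l₁ - (l₂ - θ) * c₁ / c₀)
        ((l₂ - θ) * e / c₀ + l₃))
    · intro x hx
      obtain ⟨hxL, hxm, hxc⟩ := Finset.mem_filter.mp hx
      refine Finset.mem_filter.mpr ⟨(Finset.mem_product.mp hxL).1, ?_⟩
      simp only [blueLine] at hxm hxc
      field_simp
      linear_combination c₀ * hxc + (l₂ - θ) * hxm
    · rintro ⟨x, a⟩ hx ⟨y, b⟩ hy (rfl : x = y)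
      have hxm := (Finset.mem_filter.mp hx).2.1
      have hym := (Finset.mem_filter.mp hy).2.1
      simp only [blueLine] at hxm hym
      have hab : algebraMap F K a = algebraMap F K b :=
        mul_left_cancel₀ hc₀ (by linear_combination hxm - hym)
      rw [(algebraMap F K).injective hab]

theorem isAdmissible_redLine_blueLine {θ : K} (hθ : Transcendental F θ) {L : Finset (F × F)}
    {A : Finset F} {k : ℕ} (hk : 1 ≤ k) (hA : A.card ≤ k)
    (hL : ∀ l m : F, (L.filter fun x ↦ x.2 = l * x.1 + m).card ≤ k) :
    IsAdmissible ((L ×ˢ A).image (redLine θ)) ((L ×ˢ A).image (blueLine θ)) k where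
  slope_ne := by
    simp only [Finset.forall_mem_image]
    exact fun x _ y _ ↦ redLine_fst_ne_blueLine_fst hθ x y
  eq_of_meets := by
    simp only [Finset.forall_mem_image]
    exact fun x _ y _ h ↦ congrArg _ (eq_of_meets_blueLine hθ h)
  card_collinear_le _ _ _ _ _ _ hc := card_blueLine_collinear_le θ hk hA hL _ _ _ _ hc

/-- Meeting of the red line of `(ℓ, a)` and the blue line of `(ℓ', a')` says that `ℓ` over `a'` has
the same height as `ℓ'` over `a`: up to exchanging abscissae, the energy counts incidences. -/
theorem incidences_redLine_blueLine (θ : K) (L : Finset (F × F)) (A : Finset F) :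
    incidences ((L ×ˢ A).image (redLine θ)) ((L ×ˢ A).image (blueLine θ)) = gridEnergy L A := by
  have hfilter (x : (F × F) × F) :
      (((L ×ˢ A).image (blueLine θ)).filter fun u ↦ Meets (redLine θ x) u).card =
        ((L ×ˢ A).filter fun y ↦ x.1.1 * y.2 + x.1.2 = y.1.1 * x.2 + y.1.2).card := by
    rw [Finset.filter_image, Finset.card_image_of_injective _ (blueLine_injective θ)]
    simp only [meets_redLine_blueLine]
  rw [incidences, Finset.sum_image (redLine_injective θ).injOn, Finset.sum_congr rfl
    fun x _ ↦ hfilter x, ← Finset.card_sigma, gridEnergy]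
  refine Finset.card_bij' (fun s _ ↦ ((s.1.1, s.2.2), (s.2.1, s.1.2)))
    (fun z _ ↦ ⟨(z.1.1, z.2.2), (z.2.1, z.1.2)⟩) ?_ ?_ (fun _ _ ↦ rfl) (fun _ _ ↦ rfl)
  · intro s hs
    simp only [Finset.mem_filter, Finset.mem_product, Finset.mem_sigma] at hs ⊢
    tauto
  · intro z hz
    simp only [Finset.mem_filter, Finset.mem_product, Finset.mem_sigma] at hz ⊢
    tauto

theorem gridEnergy_le (p : ℕ) [CharP F p] {L : Finset (F × F)} {A : Finset F} {k : ℕ} (hk : 1 ≤ k)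
    (hA : A.card ≤ k) (hL : ∀ l m : F, (L.filter fun x ↦ x.2 = l * x.1 + m).card ≤ k) {M : ℝ}
    (hM : 1 ≤ M) (hLA : (L.card * A.card : ℝ) ≤ M) (hp : M ≤ (p : ℝ) ^ 2 / 2) :
    gridEnergy L A ≤ incidenceConst * (M ^ ((3 : ℝ) / 2) + k * M * M ^ ((1 : ℝ) / 16)) := by
  have : CharP (RatFunc F) p := charP_of_injective_algebraMap (algebraMap F _).injective p
  have hcard : ((L ×ˢ A).card : ℝ) ≤ M := by
    rw [Finset.card_product]
    exact_mod_cast hLA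
  rw [← incidences_redLine_blueLine (RatFunc.X : RatFunc F)]
  exact (isAdmissible_redLine_blueLine RatFunc.transcendental_X hk hA hL).incidences_le hM
    (by rwa [Finset.card_image_of_injective _ (redLine_injective _)])
    (by rwa [Finset.card_image_of_injective _ (blueLine_injective _)]) hp

end Energy

/-! ### Rich lines in a point-line configuration -/

section Configuration

open Finset

variable {P L : Type*} [Membership P L]

/-- The points of `Q` on the line `ℓ`. -/
def pointsOn (Q : Finset P) (ℓ : L) : Finset P := Q.filter (· ∈ ℓ)

/-- The lines of `Λ` through the point `z`. -/
def linesThrough (Λ : Finset L) (z : P) : Finset L := Λ.filter (z ∈ ·)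

/-- Each line of `Λ` contains at least `κ` points of `Q`. -/
def IsRich (Q : Finset P) (Λ : Finset L) (κ : ℕ) : Prop := ∀ ℓ ∈ Λ, κ ≤ (pointsOn Q ℓ).card

/-- The incidences `(x, ℓ)` with `q₂ ∉ ℓ` for which `x` is the intersection of a line of `Λ` through
`q₁` and a line of `Λ` through `q₂`. -/
def gridPairs (Q : Finset P) (Λ : Finset L) (q₁ q₂ : P) : Finset (P × L) :=
  (Q ×ˢ Λ).filter fun z ↦ z.1 ∈ z.2 ∧ q₂ ∉ z.2 ∧
    (∃ ℓ₁ ∈ Λ, z.1 ∈ ℓ₁ ∧ q₁ ∈ ℓ₁ ∧ q₂ ∉ ℓ₁) ∧ ∃ ℓ₂ ∈ Λ, z.1 ∈ ℓ₂ ∧ q₂ ∈ ℓ₂ ∧ q₁ ∉ ℓ₂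

variable {Q : Finset P} {Λ : Finset L} {κ : ℕ}

theorem mem_pointsOn {x : P} {ℓ : L} : x ∈ pointsOn Q ℓ ↔ x ∈ Q ∧ x ∈ ℓ := mem_filter

theorem mem_linesThrough {ℓ : L} {z : P} : ℓ ∈ linesThrough Λ z ↔ ℓ ∈ Λ ∧ z ∈ ℓ := mem_filter

theorem sum_card_linesThrough (Q : Finset P) (Λ : Finset L) :
    ∑ x ∈ Q, (linesThrough Λ x).card = ∑ ℓ ∈ Λ, (pointsOn Q ℓ).card := by
  simp only [linesThrough, pointsOn, card_filter]
  exact sum_comm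

theorem IsRich.card_mul_le_sum_card_linesThrough (h : IsRich Q Λ κ) :
    Λ.card * κ ≤ ∑ x ∈ Q, (linesThrough Λ x).card := by
  rw [sum_card_linesThrough]
  exact card_nsmul_le_sum _ _ _ h

theorem IsRich.sub_one_le_card_erase (h : IsRich Q Λ κ) {ℓ : L} (hℓ : ℓ ∈ Λ) (x : P) :
    κ - 1 ≤ ((pointsOn Q ℓ).erase x).card :=
  (Nat.sub_le_sub_right (h ℓ hℓ) 1).trans pred_card_le_card_erase

theorem sum_card_gridPairs (Q : Finset P) (Λ : Finset L) :
    ∑ q ∈ Q.offDiag, (gridPairs Q Λ q.1 q.2).card =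
      ∑ x ∈ Q, ∑ ℓ ∈ Λ, (Q.offDiag.filter fun q ↦ (x, ℓ) ∈ gridPairs Q Λ q.1 q.2).card := by
  rw [← sum_product' Q Λ fun x ℓ ↦ (Q.offDiag.filter fun q ↦ (x, ℓ) ∈ gridPairs Q Λ q.1 q.2).card]
  simp only [card_filter]
  rw [sum_comm]
  refine sum_congr rfl fun q _ ↦ ?_
  have hsub : gridPairs Q Λ q.1 q.2 ⊆ Q ×ˢ Λ := filter_subset _ _
  rw [← card_filter, filter_mem_eq_inter, inter_eq_right.mpr hsub]

variable [Configuration.Nondegenerate P L]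

theorem line_eq_of_ne {x q : P} {ℓ ℓ' : L} (hne : q ≠ x) (hx : x ∈ ℓ) (hx' : x ∈ ℓ') (hq : q ∈ ℓ)
    (hq' : q ∈ ℓ') : ℓ = ℓ' :=
  (Configuration.Nondegenerate.eq_or_eq hq hx hq' hx').resolve_left hne

theorem pairwiseDisjoint_pointsOn_erase (Q : Finset P) (Λ : Finset L) (x : P) :
    (linesThrough Λ x : Set L).PairwiseDisjoint fun ℓ ↦ (pointsOn Q ℓ).erase x := by
  intro ℓ hℓ ℓ' hℓ' hne
  refine disjoint_left.mpr fun q hq hq' ↦ hne ?_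
  rw [mem_erase, mem_pointsOn] at hq hq'
  exact line_eq_of_ne hq.1 (mem_linesThrough.mp hℓ).2 (mem_linesThrough.mp hℓ').2 hq.2.2 hq'.2.2

theorem IsRich.card_linesThrough_mul_le (h : IsRich Q Λ κ) (z : P) :
    (linesThrough Λ z).card * (κ - 1) ≤ Q.card :=
  calc (linesThrough Λ z).card * (κ - 1) = ∑ _ ∈ linesThrough Λ z, (κ - 1) := by
        rw [sum_const, smul_eq_mul]
    _ ≤ ∑ ℓ ∈ linesThrough Λ z, ((pointsOn Q ℓ).erase z).card :=
        sum_le_sum fun _ hℓ ↦ h.sub_one_le_card_erase (mem_linesThrough.mp hℓ).1 z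
    _ = ((linesThrough Λ z).biUnion fun ℓ ↦ (pointsOn Q ℓ).erase z).card :=
        (card_biUnion (pairwiseDisjoint_pointsOn_erase Q Λ z)).symm
    _ ≤ Q.card := card_le_card <| biUnion_subset.mpr fun _ _ ↦
        (erase_subset _ _).trans (filter_subset _ _)

theorem mem_gridPairs_of_mem_pointsOn_erase {x : P} {ℓ ℓ₁ ℓ₂ : L} (hx : x ∈ Q)
    (hℓ : ℓ ∈ linesThrough Λ x) (hℓ₁ : ℓ₁ ∈ linesThrough Λ x) (hℓ₂ : ℓ₂ ∈ linesThrough Λ x)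
    (hne₂ : ℓ₂ ≠ ℓ) (hne : ℓ₁ ≠ ℓ₂) {q₁ q₂ : P} (hq₁ : q₁ ∈ (pointsOn Q ℓ₁).erase x)
    (hq₂ : q₂ ∈ (pointsOn Q ℓ₂).erase x) :
    (q₁, q₂) ∈ Q.offDiag ∧ (x, ℓ) ∈ gridPairs Q Λ q₁ q₂ := by
  rw [mem_linesThrough] at hℓ hℓ₁ hℓ₂
  rw [mem_erase, mem_pointsOn] at hq₁ hq₂
  have hq₂ℓ₁ : q₂ ∉ ℓ₁ := fun hq ↦ hne (line_eq_of_ne hq₂.1 hℓ₁.2 hℓ₂.2 hq hq₂.2.2)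
  have hq₁ℓ₂ : q₁ ∉ ℓ₂ := fun hq ↦ hne (line_eq_of_ne hq₁.1 hℓ₁.2 hℓ₂.2 hq₁.2.2 hq)
  have hq₂ℓ : q₂ ∉ ℓ := fun hq ↦ hne₂ (line_eq_of_ne hq₂.1 hℓ₂.2 hℓ.2 hq₂.2.2 hq)
  exact ⟨mem_offDiag.mpr ⟨hq₁.2.1, hq₂.2.1, fun (heq : q₁ = q₂) ↦ hq₂ℓ₁ (heq ▸ hq₁.2.2)⟩,
    mem_filter.mpr ⟨mem_product.mpr ⟨hx, hℓ.1⟩, hℓ.2, hq₂ℓ,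
      ⟨ℓ₁, hℓ₁.1, hℓ₁.2, hq₁.2.2, hq₂ℓ₁⟩, ℓ₂, hℓ₂.1, hℓ₂.2, hq₂.2.2, hq₁ℓ₂⟩⟩

/-- Choose two further lines of `Λ` through `x`, and a point other than `x` on each of them. -/
theorem IsRich.le_card_filter_mem_gridPairs (h : IsRich Q Λ κ) {x : P} {ℓ : L} (hx : x ∈ Q)
    (hℓ : ℓ ∈ linesThrough Λ x) :
    ((linesThrough Λ x).card - 1) * ((linesThrough Λ x).card - 2) * (κ - 1) ^ 2 ≤
      (Q.offDiag.filter fun q ↦ (x, ℓ) ∈ gridPairs Q Λ q.1 q.2).card := by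
  let D := (linesThrough Λ x).erase ℓ
  let T (v : L × L) : Finset (P × P) := (pointsOn Q v.1).erase x ×ˢ (pointsOn Q v.2).erase x
  have hD {v : L} (hv : v ∈ D) : v ∈ linesThrough Λ x := mem_of_mem_erase hv
  have hdisj : (D.offDiag : Set (L × L)).PairwiseDisjoint T := by
    intro v hv w hw hne
    refine disjoint_left.mpr fun q hqv hqw ↦ hne ?_
    obtain ⟨hv₁, hv₂, -⟩ := mem_offDiag.mp hv
    obtain ⟨hw₁, hw₂, -⟩ := mem_offDiag.mp hw
    obtain ⟨hqv₁, hqv₂⟩ := mem_product.mp hqv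
    obtain ⟨hqw₁, hqw₂⟩ := mem_product.mp hqw
    have hdisj := pairwiseDisjoint_pointsOn_erase Q Λ x
    exact Prod.ext
      (hdisj.elim (hD hv₁) (hD hw₁) (not_disjoint_iff.mpr ⟨_, hqv₁, hqw₁⟩))
      (hdisj.elim (hD hv₂) (hD hw₂) (not_disjoint_iff.mpr ⟨_, hqv₂, hqw₂⟩))
  have hDcard : D.offDiag.card =
      ((linesThrough Λ x).card - 1) * ((linesThrough Λ x).card - 2) := by
    rw [offDiag_card, card_erase_of_mem hℓ, ← Nat.mul_sub_one, Nat.sub_sub]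
  calc ((linesThrough Λ x).card - 1) * ((linesThrough Λ x).card - 2) * (κ - 1) ^ 2
      = ∑ _ ∈ D.offDiag, (κ - 1) ^ 2 := by rw [sum_const, hDcard, smul_eq_mul]
    _ ≤ ∑ v ∈ D.offDiag, (T v).card := by
        refine sum_le_sum fun v hv ↦ ?_
        obtain ⟨hv₁, hv₂, -⟩ := mem_offDiag.mp hv
        rw [card_product, sq]
        exact Nat.mul_le_mul (h.sub_one_le_card_erase (mem_linesThrough.mp (hD hv₁)).1 x)
          (h.sub_one_le_card_erase (mem_linesThrough.mp (hD hv₂)).1 x)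
    _ = (D.offDiag.biUnion T).card := (card_biUnion hdisj).symm
    _ ≤ _ := by
        refine card_le_card (biUnion_subset.mpr fun v hv q hq ↦ mem_filter.mpr ?_)
        obtain ⟨hv₁, hv₂, hne⟩ := mem_offDiag.mp hv
        obtain ⟨hq₁, hq₂⟩ := mem_product.mp hq
        exact mem_gridPairs_of_mem_pointsOn_erase hx hℓ (hD hv₁) (hD hv₂) (ne_of_mem_erase hv₂) hne
          hq₁ hq₂

theorem IsRich.sum_mul_le_sum_card_gridPairs (h : IsRich Q Λ κ) :
    (∑ x ∈ Q, (linesThrough Λ x).card * (((linesThrough Λ x).card - 1) *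
      ((linesThrough Λ x).card - 2))) * (κ - 1) ^ 2 ≤
      ∑ q ∈ Q.offDiag, (gridPairs Q Λ q.1 q.2).card := by
  rw [sum_card_gridPairs, sum_mul]
  refine sum_le_sum fun x hx ↦ ?_
  calc _ = ∑ _ ∈ linesThrough Λ x, ((linesThrough Λ x).card - 1) *
        ((linesThrough Λ x).card - 2) * (κ - 1) ^ 2 := by
        rw [sum_const, smul_eq_mul, mul_assoc]
    _ ≤ ∑ ℓ ∈ linesThrough Λ x,
        (Q.offDiag.filter fun q ↦ (x, ℓ) ∈ gridPairs Q Λ q.1 q.2).card :=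
        sum_le_sum fun ℓ hℓ ↦ h.le_card_filter_mem_gridPairs hx hℓ
    _ ≤ _ := sum_le_sum_of_subset (filter_subset _ _)

theorem card_pointsOn_inter_le_one (Q : Finset P) {ℓ ℓ' : L} (hne : ℓ ≠ ℓ') :
    (Q.filter fun x ↦ x ∈ ℓ ∧ x ∈ ℓ').card ≤ 1 := by
  refine card_le_one.mpr fun x hx y hy ↦ ?_
  obtain ⟨-, hxℓ, hxℓ'⟩ := mem_filter.mp hx
  obtain ⟨-, hyℓ, hyℓ'⟩ := mem_filter.mp hy
  exact (Configuration.Nondegenerate.eq_or_eq hxℓ hyℓ hxℓ' hyℓ').resolve_right hne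

theorem sq_sum_card_linesThrough_le (Q : Finset P) (Λ : Finset L) :
    (∑ x ∈ Q, (linesThrough Λ x).card) ^ 2 ≤
      Q.card * (∑ x ∈ Q, (linesThrough Λ x).card + Λ.card ^ 2) := by
  have hsq (x : P) : (linesThrough Λ x).card ^ 2 = (linesThrough Λ x).card +
      (Λ.offDiag.filter fun v ↦ x ∈ v.1 ∧ x ∈ v.2).card := by
    have hfilter : (Λ.offDiag.filter fun v ↦ x ∈ v.1 ∧ x ∈ v.2) = (linesThrough Λ x).offDiag := by
      ext v
      simp only [mem_filter, mem_offDiag, mem_linesThrough]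
      tauto
    rw [hfilter, offDiag_card, sq, Nat.add_sub_cancel' (Nat.le_mul_self _)]
  refine sq_sum_le_card_mul_sum_sq.trans (Nat.mul_le_mul_left _ ?_)
  rw [sum_congr rfl fun x _ ↦ hsq x, sum_add_distrib]
  refine Nat.add_le_add_left ?_ _
  calc ∑ x ∈ Q, (Λ.offDiag.filter fun v ↦ x ∈ v.1 ∧ x ∈ v.2).card
      = ∑ v ∈ Λ.offDiag, (Q.filter fun x ↦ x ∈ v.1 ∧ x ∈ v.2).card := by
        simp only [card_filter]
        exact sum_comm
    _ ≤ ∑ _ ∈ Λ.offDiag, 1 :=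
        sum_le_sum fun v hv ↦ card_pointsOn_inter_le_one Q (mem_offDiag.mp hv).2.2
    _ ≤ Λ.card ^ 2 := by
        rw [← card_eq_sum_ones, offDiag_card, sq]
        exact Nat.sub_le _ _

end Configuration

/-! ### Affine charts of the projective plane -/

section CauchySchwarz

open Finset

theorem card_filter_apply_eq {α β : Type*} [DecidableEq β] (G : Finset α) {B : Finset β}
    {f : α → β} (h : ∀ x ∈ G, f x ∈ B) :
    ((G ×ˢ G).filter fun z ↦ f z.1 = f z.2).card =
      ∑ b ∈ B, (G.filter fun x ↦ f x = b).card ^ 2 := by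
  rw [card_eq_sum_card_fiberwise (f := fun z : α × α ↦ f z.1) (t := B) fun z hz ↦
    h _ (mem_product.mp (mem_filter.mp hz).1).1]
  refine sum_congr rfl fun b _ ↦ ?_
  rw [sq, ← card_product, filter_filter, ← filter_product]
  refine congrArg card (filter_congr fun z _ ↦ ⟨fun hz ↦ ⟨hz.2, hz.1 ▸ hz.2⟩, fun hz ↦ ?_⟩)
  exact ⟨hz.1.trans hz.2.symm, hz.1⟩

theorem sq_card_le_card_mul_card_filter_apply_eq {α β : Type*} [DecidableEq β] (G : Finset α)
    {B : Finset β} {f : α → β} (h : ∀ x ∈ G, f x ∈ B) :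
    G.card ^ 2 ≤ B.card * ((G ×ˢ G).filter fun z ↦ f z.1 = f z.2).card := by
  rw [card_filter_apply_eq G h, card_eq_sum_card_fiberwise h]
  exact sq_sum_le_card_mul_sum_sq

end CauchySchwarz

section Plane

open Matrix LinearAlgebra.Projectivization

variable {F : Type*} [Field F]

theorem mem_iff_rep_dotProduct_eq_zero {x ℓ : ℙ F (Fin 3 → F)} :
    x ∈ ℓ ↔ x.rep ⬝ᵥ ℓ.rep = 0 := by
  rw [Configuration.ofField.mem_iff, ← Projectivization.orthogonal_mk x.rep_nonzero ℓ.rep_nonzero,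
    x.mk_rep, ℓ.mk_rep]

theorem mk_mem_iff {v : Fin 3 → F} (hv : v ≠ 0) {ℓ : ℙ F (Fin 3 → F)} :
    Projectivization.mk F v hv ∈ ℓ ↔ v ⬝ᵥ ℓ.rep = 0 := by
  rw [Configuration.ofField.mem_iff, ← Projectivization.orthogonal_mk hv ℓ.rep_nonzero, ℓ.mk_rep]

theorem exists_basis_rep {x y : ℙ F (Fin 3 → F)} (hxy : x ≠ y) :
    ∃ e : Module.Basis (Fin 3) F (Fin 3 → F), e 0 = x.rep ∧ e 1 = y.rep := by
  have hind : LinearIndependent F ![x.rep, y.rep] := by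
    have h := Projectivization.independent_iff.mp
      ((Projectivization.independent_pair_iff_ne x y).mpr hxy)
    have hcomp : Projectivization.rep ∘ ![x, y] = ![x.rep, y.rep] := by
      funext i
      fin_cases i <;> rfl
    rwa [hcomp] at h
  have hfinrank : Module.finrank F (Fin 3 → F) = 3 := Module.finrank_fin_fun F
  obtain ⟨z, hz⟩ := exists_linearIndependent_snoc_of_lt_finrank hind (by omega)
  refine ⟨basisOfLinearIndependentOfCardEqFinrank hz (by rw [Fintype.card_fin, hfinrank]), ?_, ?_⟩
    <;> rw [coe_basisOfLinearIndependentOfCardEqFinrank] <;> rfl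

section Chart

variable (e : Module.Basis (Fin 3) F (Fin 3 → F))

theorem dotProduct_eq_repr (x u : Fin 3 → F) : x ⬝ᵥ u =
    e.repr x 0 * (e 0 ⬝ᵥ u) + e.repr x 1 * (e 1 ⬝ᵥ u) + e.repr x 2 * (e 2 ⬝ᵥ u) := by
  conv_lhs => rw [← e.sum_repr x]
  simp only [Fin.sum_univ_three, add_dotProduct, smul_dotProduct, smul_eq_mul]

/-- The affine coordinates of the point `x` in the chart in which `e 0` and `e 1` are the horizontal
and the vertical point at infinity. -/
def affinePoint (x : ℙ F (Fin 3 → F)) : F × F :=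
  (e.repr x.rep 0 / e.repr x.rep 2, e.repr x.rep 1 / e.repr x.rep 2)

/-- Slope and intercept of the line `ℓ` in the chart of `affinePoint`, provided that `e 1 ∉ ℓ`. -/
def affineLine (ℓ : ℙ F (Fin 3 → F)) : F × F :=
  (-(e 0 ⬝ᵥ ℓ.rep) / (e 1 ⬝ᵥ ℓ.rep), -(e 2 ⬝ᵥ ℓ.rep) / (e 1 ⬝ᵥ ℓ.rep))

/-- The abscissa of the vertical line `ℓ` in the chart of `affinePoint`. -/
def abscissa (ℓ : ℙ F (Fin 3 → F)) : F := -(e 2 ⬝ᵥ ℓ.rep) / (e 0 ⬝ᵥ ℓ.rep)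

variable {e}

theorem affinePoint_inj {x y : ℙ F (Fin 3 → F)} (hx : e.repr x.rep 2 ≠ 0)
    (hy : e.repr y.rep 2 ≠ 0) (h : affinePoint e x = affinePoint e y) : x = y := by
  obtain ⟨h₀, h₁⟩ := Prod.ext_iff.mp h
  simp only [affinePoint] at h₀ h₁
  rw [← x.mk_rep, ← y.mk_rep, Projectivization.mk_eq_mk_iff']
  refine ⟨e.repr x.rep 2 / e.repr y.rep 2, e.repr.injective (Finsupp.ext fun i ↦ ?_)⟩
  rw [map_smul, Finsupp.smul_apply, smul_eq_mul]
  fin_cases i <;> simp only [Fin.zero_eta, Fin.mk_one, Fin.reduceFinMk] <;> field_simp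
  · field_simp at h₀
    linear_combination -h₀
  · field_simp at h₁
    linear_combination -h₁

theorem affineLine_inj {ℓ ℓ' : ℙ F (Fin 3 → F)} (hℓ : e 1 ⬝ᵥ ℓ.rep ≠ 0) (hℓ' : e 1 ⬝ᵥ ℓ'.rep ≠ 0)
    (h : affineLine e ℓ = affineLine e ℓ') : ℓ = ℓ' := by
  obtain ⟨h₀, h₂⟩ := Prod.ext_iff.mp h
  simp only [affineLine] at h₀ h₂
  rw [← ℓ.mk_rep, ← ℓ'.mk_rep, Projectivization.mk_eq_mk_iff']
  refine ⟨e 1 ⬝ᵥ ℓ.rep / e 1 ⬝ᵥ ℓ'.rep, dotProduct_eq _ _ fun x ↦ ?_⟩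
  rw [smul_dotProduct, dotProduct_comm _ x, dotProduct_comm _ x, dotProduct_eq_repr e x ℓ'.rep,
    dotProduct_eq_repr e x ℓ.rep, smul_eq_mul]
  field_simp at h₀ h₂ ⊢
  linear_combination e.repr x 0 * h₀ + e.repr x 2 * h₂

variable {x ℓ : ℙ F (Fin 3 → F)}

theorem affineLine_mul_add_eq (hx : e.repr x.rep 2 ≠ 0) (hℓ : e 1 ⬝ᵥ ℓ.rep ≠ 0) (hxℓ : x ∈ ℓ) :
    (affineLine e ℓ).1 * (affinePoint e x).1 + (affineLine e ℓ).2 = (affinePoint e x).2 := by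
  rw [mem_iff_rep_dotProduct_eq_zero, dotProduct_eq_repr e] at hxℓ
  simp only [affineLine, affinePoint]
  field_simp
  linear_combination -hxℓ

theorem affinePoint_fst_eq_abscissa (hx : e.repr x.rep 2 ≠ 0) (hℓ₁ : e 1 ⬝ᵥ ℓ.rep = 0)
    (hℓ₀ : e 0 ⬝ᵥ ℓ.rep ≠ 0) (hxℓ : x ∈ ℓ) : (affinePoint e x).1 = abscissa e ℓ := by
  rw [mem_iff_rep_dotProduct_eq_zero, dotProduct_eq_repr e, hℓ₁] at hxℓ
  simp only [affinePoint, abscissa]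
  field_simp
  linear_combination hxℓ

theorem affinePoint_snd_eq (hx : e.repr x.rep 2 ≠ 0) (hℓ₀ : e 0 ⬝ᵥ ℓ.rep = 0)
    (hℓ₁ : e 1 ⬝ᵥ ℓ.rep ≠ 0) (hxℓ : x ∈ ℓ) : (affinePoint e x).2 = (affineLine e ℓ).2 := by
  rw [← affineLine_mul_add_eq hx hℓ₁ hxℓ]
  simp [affineLine, hℓ₀]

theorem repr_two_ne_zero {ℓ' : ℙ F (Fin 3 → F)} (hℓ₀ : e 0 ⬝ᵥ ℓ.rep = 0) (hℓ₁ : e 1 ⬝ᵥ ℓ.rep ≠ 0)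
    (hℓ'₁ : e 1 ⬝ᵥ ℓ'.rep = 0) (hℓ'₀ : e 0 ⬝ᵥ ℓ'.rep ≠ 0) (hx : x ∈ ℓ) (hx' : x ∈ ℓ') :
    e.repr x.rep 2 ≠ 0 := by
  intro h₂
  rw [mem_iff_rep_dotProduct_eq_zero, dotProduct_eq_repr e, h₂] at hx hx'
  have h₁ : e.repr x.rep 1 = 0 := by simpa [hℓ₀, hℓ₁] using hx
  have h₀ : e.repr x.rep 0 = 0 := by simpa [hℓ'₁, hℓ'₀] using hx'
  refine x.rep_nonzero (e.repr.injective (Finsupp.ext fun i ↦ ?_))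
  fin_cases i <;> simp [h₀, h₁, h₂]

theorem neg_smul_add_smul_add_ne_zero (e : Module.Basis (Fin 3) F (Fin 3 → F)) (l m : F) :
    -l • e 0 + m • e 1 + e 2 ≠ 0 := by
  intro h
  simpa using DFunLike.congr_fun (congrArg e.repr h) 2

theorem mk_mem_of_affineLine_snd_eq {l m : F} (hℓ : e 1 ⬝ᵥ ℓ.rep ≠ 0)
    (h : (affineLine e ℓ).2 = l * (affineLine e ℓ).1 + m) :
    Projectivization.mk F _ (neg_smul_add_smul_add_ne_zero e l m) ∈ ℓ := by
  simp only [affineLine] at h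
  simp only [mk_mem_iff, add_dotProduct, smul_dotProduct, smul_eq_mul]
  field_simp at h
  linear_combination -h

end Chart

section GridPairs

open Finset

variable {e : Module.Basis (Fin 3) F (Fin 3 → F)} {Q Λ : Finset (ℙ F (Fin 3 → F))}

theorem card_filter_affineLine_snd_eq_le {k : ℕ} (hk : ∀ z, (linesThrough Λ z).card ≤ k) (l m : F) :
    (((Λ.filter fun ℓ ↦ e 1 ⬝ᵥ ℓ.rep ≠ 0).image (affineLine e)).filter fun x ↦
      x.2 = l * x.1 + m).card ≤ k := by
  refine le_trans ?_ (hk (Projectivization.mk F _ (neg_smul_add_smul_add_ne_zero e l m)))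
  rw [filter_image, filter_filter]
  refine card_image_le.trans (card_le_card fun ℓ hℓ ↦ ?_)
  obtain ⟨hℓΛ, hℓ₁, hℓ⟩ := mem_filter.mp hℓ
  exact mem_linesThrough.mpr ⟨hℓΛ, mk_mem_of_affineLine_snd_eq hℓ₁ hℓ⟩

theorem affine_of_mem_gridPairs {q₁ q₂ : ℙ F (Fin 3 → F)} (h₀ : e 0 = q₁.rep) (h₁ : e 1 = q₂.rep)
    {z : ℙ F (Fin 3 → F) × ℙ F (Fin 3 → F)} (hz : z ∈ gridPairs Q Λ q₁ q₂) :
    e.repr z.1.rep 2 ≠ 0 ∧ e 1 ⬝ᵥ z.2.rep ≠ 0 ∧ z.2 ∈ Λ ∧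
      (affinePoint e z.1).1 ∈ (linesThrough Λ q₂).image (abscissa e) ∧
      (affinePoint e z.1).2 ∈ (linesThrough Λ q₁).image (fun ℓ ↦ (affineLine e ℓ).2) ∧
      (affineLine e z.2).1 * (affinePoint e z.1).1 + (affineLine e z.2).2 =
        (affinePoint e z.1).2 := by
  obtain ⟨hzQΛ, hz, hq₂, ⟨ℓ₁, hℓ₁, hzℓ₁, hq₁ℓ₁, hq₂ℓ₁⟩, ℓ₂, hℓ₂, hzℓ₂, hq₂ℓ₂, hq₁ℓ₂⟩ :=
    mem_filter.mp hz
  have hmem₁ := mem_linesThrough.mpr ⟨hℓ₁, hq₁ℓ₁⟩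
  have hmem₂ := mem_linesThrough.mpr ⟨hℓ₂, hq₂ℓ₂⟩
  simp only [mem_iff_rep_dotProduct_eq_zero (x := q₁), mem_iff_rep_dotProduct_eq_zero (x := q₂),
    ← h₀, ← h₁] at hq₂ hq₁ℓ₁ hq₂ℓ₁ hq₂ℓ₂ hq₁ℓ₂
  have hrepr := repr_two_ne_zero hq₁ℓ₁ hq₂ℓ₁ hq₂ℓ₂ hq₁ℓ₂ hzℓ₁ hzℓ₂
  exact ⟨hrepr, hq₂, (mem_product.mp hzQΛ).2,
    mem_image.mpr ⟨ℓ₂, hmem₂, (affinePoint_fst_eq_abscissa hrepr hq₂ℓ₂ hq₁ℓ₂ hzℓ₂).symm⟩,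
    mem_image.mpr ⟨ℓ₁, hmem₁, (affinePoint_snd_eq hrepr hq₁ℓ₁ hq₂ℓ₁ hzℓ₁).symm⟩,
    affineLine_mul_add_eq hrepr hq₂ hz⟩

/-- With `q₁` and `q₂` at infinity, the elements of `gridPairs` become incidences between lines
`Y = m X + c` and a Cartesian product. -/
theorem sq_card_gridPairs_le_mul_gridEnergy {q₁ q₂ : ℙ F (Fin 3 → F)} (h₀ : e 0 = q₁.rep)
    (h₁ : e 1 = q₂.rep) :
    (gridPairs Q Λ q₁ q₂).card ^ 2 ≤ (linesThrough Λ q₁).card *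
      gridEnergy ((Λ.filter fun ℓ ↦ e 1 ⬝ᵥ ℓ.rep ≠ 0).image (affineLine e))
        ((linesThrough Λ q₂).image (abscissa e)) := by
  set A := (linesThrough Λ q₂).image (abscissa e)
  set L := (Λ.filter fun ℓ ↦ e 1 ⬝ᵥ ℓ.rep ≠ 0).image (affineLine e)
  set B := (linesThrough Λ q₁).image fun ℓ ↦ (affineLine e ℓ).2
  set G := (L ×ˢ A).filter fun x ↦ x.1.1 * x.2 + x.1.2 ∈ B
  have hle : (gridPairs Q Λ q₁ q₂).card ≤ G.card := by
    refine card_le_card_of_injOn (fun z ↦ (affineLine e z.2, (affinePoint e z.1).1)) ?_ ?_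
    · intro z hz
      obtain ⟨-, hz₁, hzΛ, hzA, hzB, heq⟩ := affine_of_mem_gridPairs h₀ h₁ hz
      exact mem_filter.mpr ⟨mem_product.mpr
        ⟨mem_image_of_mem _ (mem_filter.mpr ⟨hzΛ, hz₁⟩), hzA⟩, heq ▸ hzB⟩
    · intro z hz w hw hzw
      obtain ⟨hz₂, hz₁, -, -, -, hzeq⟩ := affine_of_mem_gridPairs h₀ h₁ hz
      obtain ⟨hw₂, hw₁, -, -, -, hweq⟩ := affine_of_mem_gridPairs h₀ h₁ hw
      obtain ⟨hline, habs⟩ := Prod.ext_iff.mp hzw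
      simp only at hline habs
      refine Prod.ext (affinePoint_inj hz₂ hw₂ (Prod.ext habs ?_)) (affineLine_inj hz₁ hw₁ hline)
      rw [← hzeq, ← hweq, hline, habs]
  calc (gridPairs Q Λ q₁ q₂).card ^ 2 ≤ G.card ^ 2 := Nat.pow_le_pow_left hle 2
    _ ≤ B.card * ((G ×ˢ G).filter fun z ↦
        z.1.1.1 * z.1.2 + z.1.1.2 = z.2.1.1 * z.2.2 + z.2.1.2).card :=
      sq_card_le_card_mul_card_filter_apply_eq G (f := fun x ↦ x.1.1 * x.2 + x.1.2)
        fun x hx ↦ (mem_filter.mp hx).2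
    _ ≤ (linesThrough Λ q₁).card * gridEnergy L A :=
      Nat.mul_le_mul card_image_le (card_le_card (filter_subset_filter _
        (product_subset_product (filter_subset _ _) (filter_subset _ _))))

theorem sq_card_gridPairs_le (p : ℕ) [CharP F p] {k : ℕ} (hk : 1 ≤ k)
    (hΛ : ∀ z, (linesThrough Λ z).card ≤ k) {q₁ q₂ : ℙ F (Fin 3 → F)} (hq : q₁ ≠ q₂) {M : ℝ}
    (hM : 1 ≤ M) (hΛM : (Λ.card * (linesThrough Λ q₂).card : ℝ) ≤ M) (hp : M ≤ (p : ℝ) ^ 2 / 2) :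
    ((gridPairs Q Λ q₁ q₂).card : ℝ) ^ 2 ≤ (linesThrough Λ q₁).card *
      (incidenceConst * (M ^ ((3 : ℝ) / 2) + k * M * M ^ ((1 : ℝ) / 16))) := by
  obtain ⟨e, h₀, h₁⟩ := exists_basis_rep hq
  set A := (linesThrough Λ q₂).image (abscissa e)
  set L := (Λ.filter fun ℓ ↦ e 1 ⬝ᵥ ℓ.rep ≠ 0).image (affineLine e)
  have hA : A.card ≤ (linesThrough Λ q₂).card := card_image_le
  have hL : L.card ≤ Λ.card := card_image_le.trans (card_filter_le _ _)
  have henergy : (gridEnergy L A : ℝ) ≤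
      incidenceConst * (M ^ ((3 : ℝ) / 2) + k * M * M ^ ((1 : ℝ) / 16)) :=
    gridEnergy_le p hk (hA.trans (hΛ q₂)) (card_filter_affineLine_snd_eq_le hΛ) hM
      (le_trans (by gcongr) hΛM) hp
  calc ((gridPairs Q Λ q₁ q₂).card : ℝ) ^ 2 ≤ (linesThrough Λ q₁).card * gridEnergy L A :=
        mod_cast sq_card_gridPairs_le_mul_gridEnergy h₀ h₁
    _ ≤ _ := mul_le_mul_of_nonneg_left henergy (Nat.cast_nonneg _)

end GridPairs

end Plane

/-! ### The number of rich lines -/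

section Moments

open Finset

theorem sum_rpow_le_card_rpow_mul {α : Type*} (Q : Finset α) {f : α → ℝ} (hf : ∀ x ∈ Q, 0 ≤ f x)
    {r : ℝ} (hr₀ : 0 < r) (hr₁ : r ≤ 1) :
    ∑ x ∈ Q, f x ^ r ≤ (Q.card : ℝ) ^ (1 - r) * (∑ x ∈ Q, f x) ^ r := by
  have hnonneg : 0 ≤ ∑ x ∈ Q, f x ^ r := sum_nonneg fun x hx ↦ Real.rpow_nonneg (hf x hx) r
  have hpow := Real.rpow_sum_le_const_mul_sum_rpow_of_nonneg Q ((one_le_inv₀ hr₀).mpr hr₁)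
    fun x hx ↦ Real.rpow_nonneg (hf x hx) r
  rw [sum_congr rfl fun x hx ↦ Real.rpow_rpow_inv (hf x hx) hr₀.ne'] at hpow
  calc ∑ x ∈ Q, f x ^ r = ((∑ x ∈ Q, f x ^ r) ^ r⁻¹) ^ r :=
        (Real.rpow_inv_rpow hnonneg hr₀.ne').symm
    _ ≤ ((Q.card : ℝ) ^ (r⁻¹ - 1) * ∑ x ∈ Q, f x) ^ r := by gcongr
    _ = _ := by
        rw [Real.mul_rpow (by positivity) (sum_nonneg hf), ← Real.rpow_mul (Nat.cast_nonneg _),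
          sub_mul, inv_mul_cancel₀ hr₀.ne', one_mul]

theorem two_mul_pow_three_le (m : ℕ) : 2 * m ^ 3 ≤ 9 * (m * ((m - 1) * (m - 2))) + 8 * m := by
  rcases m with _ | _ | m
  · simp
  · simp
  · rw [show m + 1 + 1 - 1 = m + 1 by omega, show m + 1 + 1 - 2 = m by omega]
    nlinarith [Nat.zero_le (m ^ 3), Nat.zero_le (m ^ 2)]

theorem pow_three_sum_le {α : Type*} (Q : Finset α) (d : α → ℕ) (h : 6 * Q.card ≤ ∑ x ∈ Q, d x) :
    (∑ x ∈ Q, d x) ^ 3 ≤ 9 * Q.card ^ 2 * ∑ x ∈ Q, d x * ((d x - 1) * (d x - 2)) := by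
  have hpower : (∑ x ∈ Q, d x) ^ 3 ≤ Q.card ^ 2 * ∑ x ∈ Q, d x ^ 3 :=
    pow_sum_le_card_mul_sum_pow (fun _ _ ↦ Nat.zero_le _) 2
  have hsum : 2 * ∑ x ∈ Q, d x ^ 3 ≤
      9 * ∑ x ∈ Q, d x * ((d x - 1) * (d x - 2)) + 8 * ∑ x ∈ Q, d x := by
    simp only [mul_sum]
    rw [← sum_add_distrib]
    exact sum_le_sum fun x _ ↦ two_mul_pow_three_le (d x)
  have haverage : 36 * Q.card ^ 2 * ∑ x ∈ Q, d x ≤ (∑ x ∈ Q, d x) ^ 3 := by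
    calc 36 * Q.card ^ 2 * ∑ x ∈ Q, d x = (6 * Q.card) ^ 2 * ∑ x ∈ Q, d x := by ring
      _ ≤ (∑ x ∈ Q, d x) ^ 2 * ∑ x ∈ Q, d x := by gcongr
      _ = _ := by ring
  nlinarith [Nat.mul_le_mul_left (Q.card ^ 2) hsum]

end Moments

section Arithmetic

theorem exists_pos_pow_eq {a : ℝ} (ha : 0 < a) {n : ℕ} (hn : n ≠ 0) : ∃ b : ℝ, 0 < b ∧ b ^ n = a :=
  ⟨a ^ (n : ℝ)⁻¹, by positivity, Real.rpow_inv_natCast_pow ha.le hn⟩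

theorem pow_rpow_eq_pow {a : ℝ} (ha : 0 ≤ a) {m j : ℕ} {r : ℝ} (h : m * r = j) :
    (a ^ m) ^ r = a ^ j := by
  rw [← Real.rpow_natCast, ← Real.rpow_mul ha, h, Real.rpow_natCast]

theorem mul_pow_le_of_main_term {C x y z w : ℝ} (hy : 0 < y) (hz : 0 < z) (hyz : y * z ≤ w)
    (h : z ^ 8 * w ^ 12 ≤ 2 * C * (x ^ 132 * y ^ 3 * w ^ 5)) :
    y ^ 4 * z ^ 15 ≤ 2 * C * x ^ 132 := by
  have hw : 0 < w := (mul_pos hy hz).trans_le hyz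
  refine le_of_mul_le_mul_right (a := y ^ 3 * w ^ 5) ?_ (by positivity)
  calc y ^ 4 * z ^ 15 * (y ^ 3 * w ^ 5) = z ^ 8 * (y * z) ^ 7 * w ^ 5 := by ring
    _ ≤ z ^ 8 * w ^ 7 * w ^ 5 := by gcongr
    _ = z ^ 8 * w ^ 12 := by ring
    _ ≤ _ := h
    _ = _ := by ring

theorem mul_pow_le_of_error_term {C x y z w s : ℝ} (hC : 0 ≤ C) (hx : 0 ≤ x) (hy : 0 < y)
    (hz : 0 < z) (hyz : y * z ≤ w) (hs : s * z ^ 2 ≤ 2 * x ^ 24) (hzx : z ^ 8 ≤ 2 * x ^ 48)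
    (h : z ^ 8 * w ^ 12 ≤ 2 * C * (s * y ^ 2 * x ^ 147 * w ^ 4)) :
    y ^ 4 * z ^ 15 ≤ (8 * C + 2) * x ^ 132 := by
  have hw : 0 < w := (mul_pos hy hz).trans_le hyz
  have h₁ : y ^ 6 * z ^ 18 ≤ 4 * C * x ^ 171 := by
    refine le_of_mul_le_mul_right (a := y ^ 2 * w ^ 4) ?_ (by positivity)
    calc y ^ 6 * z ^ 18 * (y ^ 2 * w ^ 4) = z ^ 10 * (y * z) ^ 8 * w ^ 4 := by ring
      _ ≤ z ^ 10 * w ^ 8 * w ^ 4 := by gcongr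
      _ = z ^ 8 * w ^ 12 * z ^ 2 := by ring
      _ ≤ 2 * C * (s * y ^ 2 * x ^ 147 * w ^ 4) * z ^ 2 := by gcongr
      _ = 2 * C * x ^ 147 * y ^ 2 * w ^ 4 * (s * z ^ 2) := by ring
      _ ≤ 2 * C * x ^ 147 * y ^ 2 * w ^ 4 * (2 * x ^ 24) := by gcongr
      _ = _ := by ring
  have h₂ : y ^ 4 * z ^ 12 ≤ (4 * C + 1) * x ^ 114 := by
    refine le_of_pow_le_pow_left₀ (n := 3) (by norm_num) (by positivity) ?_
    calc (y ^ 4 * z ^ 12) ^ 3 = (y ^ 6 * z ^ 18) ^ 2 := by ring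
      _ ≤ (4 * C * x ^ 171) ^ 2 := by gcongr
      _ = (4 * C) ^ 2 * (x ^ 114) ^ 3 := by ring
      _ ≤ (4 * C + 1) ^ 3 * (x ^ 114) ^ 3 := by
        gcongr
        nlinarith [sq_nonneg C, pow_nonneg hC 3]
      _ = _ := by ring
  have h₃ : z ^ 3 ≤ 2 * x ^ 18 := by
    refine le_of_pow_le_pow_left₀ (n := 8) (by norm_num) (by positivity) ?_
    calc (z ^ 3) ^ 8 = (z ^ 8) ^ 3 := by ring
      _ ≤ (2 * x ^ 48) ^ 3 := by gcongr
      _ = 8 * (x ^ 18) ^ 8 := by ring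
      _ ≤ 256 * (x ^ 18) ^ 8 := by gcongr; norm_num
      _ = _ := by ring
  calc y ^ 4 * z ^ 15 = y ^ 4 * z ^ 12 * z ^ 3 := by ring
    _ ≤ (4 * C + 1) * x ^ 114 * (2 * x ^ 18) := by gcongr
    _ = _ := by ring

theorem mul_pow_le_of_main_term_add_error_term {C x y z w s : ℝ} (hC : 0 ≤ C) (hx : 0 ≤ x)
    (hy : 0 < y) (hz : 0 < z) (hyz : y * z ≤ w) (hs : s * z ^ 2 ≤ 2 * x ^ 24)
    (hzx : z ^ 8 ≤ 2 * x ^ 48)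
    (h : z ^ 8 * w ^ 12 ≤ C * (x ^ 132 * y ^ 3 * w ^ 5 + s * y ^ 2 * x ^ 147 * w ^ 4)) :
    y ^ 4 * z ^ 15 ≤ (8 * C + 2) * x ^ 132 := by
  set a := x ^ 132 * y ^ 3 * w ^ 5
  set b := s * y ^ 2 * x ^ 147 * w ^ 4
  rcases le_total b a with hba | hab
  · have hmain : z ^ 8 * w ^ 12 ≤ 2 * C * a :=
      calc _ ≤ C * (a + b) := h
        _ ≤ C * (a + a) := by gcongr
        _ = 2 * C * a := by ring
    exact (mul_pow_le_of_main_term hy hz hyz hmain).trans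
      (mul_le_mul_of_nonneg_right (by linarith) (pow_nonneg hx 132))
  · refine mul_pow_le_of_error_term hC hx hy hz hyz hs hzx (h.trans ?_)
    calc C * (a + b) ≤ C * (b + b) := by gcongr
      _ = 2 * C * b := by ring

/-- Substituting `N = x ^ 48`, `n = y ^ 4`, `κ = z ^ 4` and `W = w ^ 4` makes all exponents
integral. -/
theorem mul_rpow_le_of_sq_mul_pow_le {C N n κ k W : ℝ} (hC : 0 ≤ C) (hN : 0 < N) (hn : 0 < n)
    (hκ : 0 < κ) (hk : 0 ≤ k) (hnW : n * κ ≤ W) (hkN : k * κ ≤ 2 * N) (hκN : κ ^ 2 ≤ 2 * N)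
    (h : κ ^ 2 * W ^ 3 ≤ N ^ 2 * (C * (n ^ (3 / 4 : ℝ) * N ^ (3 / 4 : ℝ) * W ^ (5 / 4 : ℝ) +
      √k * √n * N ^ (17 / 16 : ℝ) * W))) :
    n * κ ^ (15 / 4 : ℝ) ≤ (8 * C + 2) * N ^ (11 / 4 : ℝ) := by
  have hW : 0 < W := (mul_pos hn hκ).trans_le hnW
  obtain ⟨x, hx, rfl⟩ := exists_pos_pow_eq hN (n := 48) (by norm_num)
  obtain ⟨y, hy, rfl⟩ := exists_pos_pow_eq hn (n := 4) (by norm_num)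
  obtain ⟨z, hz, rfl⟩ := exists_pos_pow_eq hκ (n := 4) (by norm_num)
  obtain ⟨w, hw, rfl⟩ := exists_pos_pow_eq hW (n := 4) (by norm_num)
  have hyz : y * z ≤ w :=
    le_of_pow_le_pow_left₀ (n := 4) (by norm_num) hw.le (by rwa [mul_pow])
  have hs : √k * z ^ 2 ≤ 2 * x ^ 24 := by
    refine le_of_pow_le_pow_left₀ (n := 2) (by norm_num) (by positivity) ?_
    calc (√k * z ^ 2) ^ 2 = √k ^ 2 * z ^ 4 := by ring
      _ = k * z ^ 4 := by rw [Real.sq_sqrt hk]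
      _ ≤ 2 * x ^ 48 := hkN
      _ ≤ 4 * x ^ 48 := by linarith [pow_pos hx 48]
      _ = (2 * x ^ 24) ^ 2 := by ring
  have hy4 : √(y ^ 4) = y ^ 2 := by
    rw [show y ^ 4 = (y ^ 2) ^ 2 by ring, Real.sqrt_sq (by positivity)]
  rw [hy4, pow_rpow_eq_pow (j := 3) hy.le (by norm_num),
    pow_rpow_eq_pow (j := 36) hx.le (by norm_num), pow_rpow_eq_pow (j := 5) hw.le (by norm_num),
    pow_rpow_eq_pow (j := 51) hx.le (by norm_num)] at h
  rw [pow_rpow_eq_pow (j := 15) hz.le (by norm_num),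
    pow_rpow_eq_pow (j := 132) hx.le (by norm_num)]
  refine mul_pow_le_of_main_term_add_error_term hC hx.le hy hz hyz hs ?_ ?_
  · calc z ^ 8 = (z ^ 4) ^ 2 := by ring
      _ ≤ _ := hκN
  · calc z ^ 8 * w ^ 12 = (z ^ 4) ^ 2 * (w ^ 4) ^ 3 := by ring
      _ ≤ _ := h
      _ = _ := by ring

theorem mul_rpow_le_of_pow_seven_le {N n κ : ℝ} (hN : 0 < N) (hκ : 0 < κ)
    (hn : n * κ ^ 2 ≤ 2 * N ^ 2) (hκN : κ ^ 7 ≤ 128 * N ^ 3) :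
    n * κ ^ (15 / 4 : ℝ) ≤ 8 * N ^ (11 / 4 : ℝ) := by
  have hroot : κ ^ (7 / 4 : ℝ) ≤ 4 * N ^ (3 / 4 : ℝ) := by
    refine le_of_pow_le_pow_left₀ (n := 4) (by norm_num) (by positivity) ?_
    rw [mul_pow, ← Real.rpow_mul_natCast hκ.le, ← Real.rpow_mul_natCast hN.le]
    norm_num
    linarith [pow_pos hN 3]
  have hκsplit : κ ^ (15 / 4 : ℝ) = κ ^ 2 * κ ^ (7 / 4 : ℝ) := by
    rw [← Real.rpow_natCast, ← Real.rpow_add hκ]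
    norm_num
  have hNsplit : N ^ (11 / 4 : ℝ) = N ^ 2 * N ^ (3 / 4 : ℝ) := by
    rw [← Real.rpow_natCast, ← Real.rpow_add hN]
    norm_num
  calc n * κ ^ (15 / 4 : ℝ) = n * κ ^ 2 * κ ^ (7 / 4 : ℝ) := by rw [hκsplit, mul_assoc]
    _ ≤ 2 * N ^ 2 * (4 * N ^ (3 / 4 : ℝ)) := by gcongr
    _ = _ := by rw [hNsplit]; ring

theorem two_pow_mul_pow_le {N κ : ℝ} (hN : 0 ≤ N) (hκN : 128 * N ^ 3 ≤ κ ^ 7) :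
    2 ^ 21 * N ^ 9 ≤ κ ^ 21 := by
  calc 2 ^ 21 * N ^ 9 = (128 * N ^ 3) ^ 3 := by ring
    _ ≤ (κ ^ 7) ^ 3 := by gcongr
    _ = κ ^ 21 := by ring

theorem four_mul_le_pow_three {N κ : ℝ} (hN : 1 ≤ N) (hκ : 0 ≤ κ) (hκN : 128 * N ^ 3 ≤ κ ^ 7) :
    4 * N ≤ κ ^ 3 := by
  refine le_of_pow_le_pow_left₀ (n := 7) (by norm_num) (by positivity) ?_
  calc (4 * N) ^ 7 = 2 ^ 14 * N ^ 7 := by ring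
    _ ≤ 2 ^ 21 * N ^ 9 := by gcongr <;> norm_num
    _ ≤ κ ^ 21 := two_pow_mul_pow_le (by linarith) hκN
    _ = _ := by ring

theorem pow_twelve_le_of_le_rpow {N p : ℝ} (hN : 0 ≤ N) (hp : 1 ≤ p)
    (hNp : N ≤ p ^ (15 / 13 : ℝ)) : N ^ 12 ≤ p ^ 14 :=
  calc N ^ 12 ≤ (p ^ (15 / 13 : ℝ)) ^ 12 := by gcongr
    _ = p ^ (180 / 13 : ℝ) := by
      rw [← Real.rpow_mul_natCast (by positivity)]
      norm_num
    _ ≤ p ^ ((14 : ℕ) : ℝ) := Real.rpow_le_rpow_of_exponent_le hp (by norm_num)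
    _ = p ^ 14 := Real.rpow_natCast _ _

theorem eight_mul_pow_three_le {N κ p : ℝ} (hN : 0 ≤ N) (hκ : 0 ≤ κ) (hp : 1 ≤ p)
    (hNp : N ≤ p ^ (15 / 13 : ℝ)) (hκN : 128 * N ^ 3 ≤ κ ^ 7) : 8 * N ^ 3 ≤ κ ^ 3 * p ^ 2 := by
  refine le_of_pow_le_pow_left₀ (n := 7) (by norm_num) (by positivity) ?_
  calc (8 * N ^ 3) ^ 7 = (2 ^ 21 * N ^ 9) * N ^ 12 := by ring
    _ ≤ κ ^ 21 * p ^ 14 := by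
      gcongr
      · exact two_pow_mul_pow_le hN hκN
      · exact pow_twelve_le_of_le_rpow hN hp hNp
    _ = _ := by ring

end Arithmetic

section RichLines

open Finset LinearAlgebra.Projectivization

variable {F : Type*} [Field F] {Q Λ : Finset (ℙ F (Fin 3 → F))}

theorem gridPairs_eq_empty {P L : Type*} [Membership P L] (Q : Finset P) {Λ : Finset L} (q₁ : P)
    {q₂ : P} (h : linesThrough Λ q₂ = ∅) : gridPairs Q Λ q₁ q₂ = ∅ := by
  refine eq_empty_of_forall_notMem fun z hz ↦ ?_
  obtain ⟨-, -, -, -, ℓ, hℓ, -, hq₂, -⟩ := mem_filter.mp hz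
  exact eq_empty_iff_forall_notMem.mp h ℓ (mem_linesThrough.mpr ⟨hℓ, hq₂⟩)

theorem rpow_add_mul_le_sq {M N k : ℝ} (hM : 0 ≤ M) (hN : 0 ≤ N) (hk : 0 ≤ k) (hMN : M ≤ N ^ 2) :
    M ^ (3 / 2 : ℝ) + k * M * M ^ (1 / 16 : ℝ) ≤
      (M ^ (3 / 4 : ℝ) + √k * √M * N ^ (1 / 16 : ℝ)) ^ 2 := by
  have hthree : M ^ (3 / 2 : ℝ) = (M ^ (3 / 4 : ℝ)) ^ 2 := by
    rw [← Real.rpow_mul_natCast hM]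
    norm_num
  have hsixteen : M ^ (1 / 16 : ℝ) ≤ (N ^ (1 / 16 : ℝ)) ^ 2 := by
    rw [Real.rpow_pow_comm hN]
    gcongr
  calc M ^ (3 / 2 : ℝ) + k * M * M ^ (1 / 16 : ℝ)
      ≤ (M ^ (3 / 4 : ℝ)) ^ 2 + k * M * (N ^ (1 / 16 : ℝ)) ^ 2 := by rw [hthree]; gcongr
    _ = (M ^ (3 / 4 : ℝ)) ^ 2 + (√k * √M * N ^ (1 / 16 : ℝ)) ^ 2 := by
        rw [mul_pow, mul_pow, Real.sq_sqrt hk, Real.sq_sqrt hM]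
    _ ≤ _ := by
        rw [add_sq]
        linarith [show 0 ≤ 2 * M ^ (3 / 4 : ℝ) * (√k * √M * N ^ (1 / 16 : ℝ)) by positivity]

theorem card_gridPairs_le (p : ℕ) [CharP F p] {k : ℕ} (hk : 1 ≤ k)
    (hΛ : ∀ z, (linesThrough Λ z).card ≤ k) (hp : (Λ.card * k : ℝ) ≤ (p : ℝ) ^ 2 / 2) {N : ℝ}
    (hN : 0 ≤ N) (hΛN : (Λ.card * k : ℝ) ≤ N ^ 2) {q₁ q₂ : ℙ F (Fin 3 → F)} (hq : q₁ ≠ q₂) :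
    ((gridPairs Q Λ q₁ q₂).card : ℝ) ≤ √incidenceConst * (√((linesThrough Λ q₁).card : ℝ) *
      ((Λ.card * (linesThrough Λ q₂).card : ℝ) ^ (3 / 4 : ℝ) +
        √k * √(Λ.card * (linesThrough Λ q₂).card : ℝ) * N ^ (1 / 16 : ℝ))) := by
  rcases (linesThrough Λ q₂).eq_empty_or_nonempty with hq₂ | hq₂
  · rw [gridPairs_eq_empty Q q₁ hq₂, card_empty, Nat.cast_zero]
    positivity
  set M : ℝ := Λ.card * (linesThrough Λ q₂).card with hM
  have hMk : M ≤ Λ.card * k := by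
    rw [hM]
    gcongr
    exact hΛ q₂
  have hM₁ : 1 ≤ M := by
    have hd : 0 < (linesThrough Λ q₂).card := hq₂.card_pos
    rw [hM]
    exact_mod_cast Nat.succ_le_of_lt (Nat.mul_pos (hd.trans_le (card_filter_le _ _)) hd)
  refine le_of_pow_le_pow_left₀ (n := 2) (by norm_num) (by positivity) ?_
  calc ((gridPairs Q Λ q₁ q₂).card : ℝ) ^ 2
      ≤ (linesThrough Λ q₁).card *
        (incidenceConst * (M ^ (3 / 2 : ℝ) + k * M * M ^ (1 / 16 : ℝ))) :=
        sq_card_gridPairs_le p hk hΛ hq hM₁ le_rfl (hMk.trans hp)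
    _ ≤ (linesThrough Λ q₁).card *
        (incidenceConst * (M ^ (3 / 4 : ℝ) + √k * √M * N ^ (1 / 16 : ℝ)) ^ 2) := by
        have hC := incidenceConst_pos
        gcongr
        exact rpow_add_mul_le_sq (by linarith) hN (Nat.cast_nonneg _) (hMk.trans hΛN)
    _ = _ := by
        rw [mul_pow, mul_pow, Real.sq_sqrt incidenceConst_pos.le, Real.sq_sqrt (Nat.cast_nonneg _)]
        ring

theorem sum_card_gridPairs_le_mul_sum (p : ℕ) [CharP F p] {k : ℕ} (hk : 1 ≤ k)
    (hΛ : ∀ z, (linesThrough Λ z).card ≤ k) (hp : (Λ.card * k : ℝ) ≤ (p : ℝ) ^ 2 / 2) {N : ℝ}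
    (hN : 0 ≤ N) (hΛN : (Λ.card * k : ℝ) ≤ N ^ 2) :
    ∑ q ∈ Q.offDiag, ((gridPairs Q Λ q.1 q.2).card : ℝ) ≤
      √incidenceConst * ((∑ x ∈ Q, √((linesThrough Λ x).card : ℝ)) *
        ((Λ.card : ℝ) ^ (3 / 4 : ℝ) * ∑ x ∈ Q, ((linesThrough Λ x).card : ℝ) ^ (3 / 4 : ℝ) +
          √k * √Λ.card * N ^ (1 / 16 : ℝ) * ∑ x ∈ Q, √((linesThrough Λ x).card : ℝ))) := by
  calc ∑ q ∈ Q.offDiag, ((gridPairs Q Λ q.1 q.2).card : ℝ)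
      ≤ ∑ q ∈ Q.offDiag, √incidenceConst * (√((linesThrough Λ q.1).card : ℝ) *
        ((Λ.card * (linesThrough Λ q.2).card : ℝ) ^ (3 / 4 : ℝ) +
          √k * √(Λ.card * (linesThrough Λ q.2).card : ℝ) * N ^ (1 / 16 : ℝ))) :=
        sum_le_sum fun q hq ↦ card_gridPairs_le p hk hΛ hp hN hΛN (mem_offDiag.mp hq).2.2
    _ ≤ ∑ q ∈ Q ×ˢ Q, √incidenceConst * (√((linesThrough Λ q.1).card : ℝ) *
        ((Λ.card * (linesThrough Λ q.2).card : ℝ) ^ (3 / 4 : ℝ) +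
          √k * √(Λ.card * (linesThrough Λ q.2).card : ℝ) * N ^ (1 / 16 : ℝ))) :=
        sum_le_sum_of_subset_of_nonneg
          (fun q hq ↦ mem_product.mpr ⟨(mem_offDiag.mp hq).1, (mem_offDiag.mp hq).2.1⟩)
          fun _ _ _ ↦ by positivity
    _ = _ := by
        rw [← mul_sum, sum_product]
        simp only [← mul_sum, ← sum_mul]
        congr 2
        rw [mul_sum, mul_sum, ← sum_add_distrib]
        refine sum_congr rfl fun y _ ↦ ?_
        rw [Real.mul_rpow (Nat.cast_nonneg _) (Nat.cast_nonneg _),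
          Real.sqrt_mul (Nat.cast_nonneg _)]
        ring

theorem sum_card_gridPairs_le (p : ℕ) [CharP F p] {k : ℕ} (hk : 1 ≤ k)
    (hΛ : ∀ z, (linesThrough Λ z).card ≤ k) (hp : (Λ.card * k : ℝ) ≤ (p : ℝ) ^ 2 / 2)
    (hΛQ : (Λ.card * k : ℝ) ≤ (Q.card : ℝ) ^ 2) {W : ℝ} (hW : 0 < W)
    (hWsum : ∑ x ∈ Q, ((linesThrough Λ x).card : ℝ) = W) (hQ : 0 < (Q.card : ℝ)) :
    ∑ q ∈ Q.offDiag, ((gridPairs Q Λ q.1 q.2).card : ℝ) ≤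
      √incidenceConst * ((Λ.card : ℝ) ^ (3 / 4 : ℝ) * (Q.card : ℝ) ^ (3 / 4 : ℝ) *
        W ^ (5 / 4 : ℝ) + √k * √Λ.card * (Q.card : ℝ) ^ (17 / 16 : ℝ) * W) := by
  set N : ℝ := (Q.card : ℝ)
  have hsqrt : ∑ x ∈ Q, √((linesThrough Λ x).card : ℝ) ≤ N ^ (1 / 2 : ℝ) * W ^ (1 / 2 : ℝ) := by
    have h := sum_rpow_le_card_rpow_mul Q (f := fun x ↦ ((linesThrough Λ x).card : ℝ))
      (fun _ _ ↦ Nat.cast_nonneg _) (r := 1 / 2) (by norm_num) (by norm_num)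
    norm_num [hWsum, ← Real.sqrt_eq_rpow] at h ⊢
    exact h
  have hrpow : ∑ x ∈ Q, ((linesThrough Λ x).card : ℝ) ^ (3 / 4 : ℝ) ≤
      N ^ (1 / 4 : ℝ) * W ^ (3 / 4 : ℝ) := by
    have h := sum_rpow_le_card_rpow_mul Q (f := fun x ↦ ((linesThrough Λ x).card : ℝ))
      (fun _ _ ↦ Nat.cast_nonneg _) (r := 3 / 4) (by norm_num) (by norm_num)
    rw [hWsum] at h
    norm_num at h ⊢
    exact h
  refine (sum_card_gridPairs_le_mul_sum p hk hΛ hp hQ.le hΛQ).trans ?_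
  refine mul_le_mul_of_nonneg_left ?_ (Real.sqrt_nonneg _)
  calc _ ≤ N ^ (1 / 2 : ℝ) * W ^ (1 / 2 : ℝ) *
        ((Λ.card : ℝ) ^ (3 / 4 : ℝ) * (N ^ (1 / 4 : ℝ) * W ^ (3 / 4 : ℝ)) +
          √k * √Λ.card * N ^ (1 / 16 : ℝ) * (N ^ (1 / 2 : ℝ) * W ^ (1 / 2 : ℝ))) := by
        gcongr
    _ = (Λ.card : ℝ) ^ (3 / 4 : ℝ) * N ^ (1 / 2 + 1 / 4 : ℝ) * W ^ (1 / 2 + 3 / 4 : ℝ) +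
          √k * √Λ.card * N ^ (1 / 16 + 1 / 2 + 1 / 2 : ℝ) * W ^ (1 / 2 + 1 / 2 : ℝ) := by
        simp only [Real.rpow_add hQ, Real.rpow_add hW]
        ring
    _ = _ := by norm_num

theorem div_pred_mul_le {κ : ℕ} (hκ : 2 ≤ κ) (N : ℕ) : N / (κ - 1) * κ ≤ 2 * N :=
  calc N / (κ - 1) * κ ≤ N / (κ - 1) * (2 * (κ - 1)) := by gcongr; omega
    _ = 2 * (N / (κ - 1) * (κ - 1)) := by ring
    _ ≤ 2 * N := by gcongr; exact Nat.div_mul_le_self _ _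

theorem IsRich.card_linesThrough_le_div {κ : ℕ} (h : IsRich Q Λ κ) (hκ : 2 ≤ κ)
    (z : ℙ F (Fin 3 → F)) : (linesThrough Λ z).card ≤ Q.card / (κ - 1) :=
  (Nat.le_div_iff_mul_le (by omega)).mpr (h.card_linesThrough_mul_le z)

theorem IsRich.card_mul_sq_le {κ : ℕ} (h : IsRich Q Λ κ) (hκ : 2 ≤ κ) :
    Λ.card * κ ^ 2 ≤ 2 * Q.card ^ 2 :=
  calc Λ.card * κ ^ 2 = Λ.card * κ * κ := by ring
    _ ≤ (∑ x ∈ Q, (linesThrough Λ x).card) * κ := by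
        gcongr
        exact h.card_mul_le_sum_card_linesThrough
    _ ≤ Q.card * (Q.card / (κ - 1)) * κ := by
        gcongr
        exact sum_le_card_nsmul _ _ _ fun x _ ↦ h.card_linesThrough_le_div hκ x
    _ = Q.card * (Q.card / (κ - 1) * κ) := by ring
    _ ≤ Q.card * (2 * Q.card) := Nat.mul_le_mul_left _ (div_pred_mul_le hκ _)
    _ = _ := by ring

theorem IsRich.sq_le_two_mul_card {κ : ℕ} (h : IsRich Q Λ κ) (hΛ : Λ.Nonempty)
    (hQ : 6 * Q.card ≤ ∑ x ∈ Q, (linesThrough Λ x).card) : κ ^ 2 ≤ 2 * Q.card := by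
  have hlower := h.card_mul_le_sum_card_linesThrough
  have hupper := sq_sum_card_linesThrough_le Q Λ
  set W := ∑ x ∈ Q, (linesThrough Λ x).card
  have hsq : (Λ.card * κ) ^ 2 ≤ W ^ 2 := by gcongr
  have hW : 6 * (Q.card * W) ≤ W ^ 2 := by
    calc 6 * (Q.card * W) = 6 * Q.card * W := by ring
      _ ≤ W * W := by gcongr
      _ = W ^ 2 := by ring
  refine le_of_mul_le_mul_left ?_ (pow_pos hΛ.card_pos 2)
  nlinarith

theorem IsRich.sq_mul_pow_three_sum_le {κ : ℕ} (h : IsRich Q Λ κ) (hκ : 2 ≤ κ)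
    (hQ : 6 * Q.card ≤ ∑ x ∈ Q, (linesThrough Λ x).card) :
    κ ^ 2 * (∑ x ∈ Q, (linesThrough Λ x).card) ^ 3 ≤
      36 * Q.card ^ 2 * ∑ q ∈ Q.offDiag, (gridPairs Q Λ q.1 q.2).card := by
  have hκ' : κ ≤ 2 * (κ - 1) := by omega
  calc κ ^ 2 * (∑ x ∈ Q, (linesThrough Λ x).card) ^ 3
      ≤ (2 * (κ - 1)) ^ 2 * (9 * Q.card ^ 2 * ∑ x ∈ Q, (linesThrough Λ x).card *
        (((linesThrough Λ x).card - 1) * ((linesThrough Λ x).card - 2))) := by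
        gcongr
        exact pow_three_sum_le Q _ hQ
    _ = 36 * Q.card ^ 2 * ((∑ x ∈ Q, (linesThrough Λ x).card *
        (((linesThrough Λ x).card - 1) * ((linesThrough Λ x).card - 2))) * (κ - 1) ^ 2) := by ring
    _ ≤ _ := by
        gcongr
        exact h.sum_mul_le_sum_card_gridPairs

theorem mul_le_of_mul_pow_three_le {N n κ k B : ℝ} (hκ : 0 < κ) (hk : 0 ≤ k)
    (hn : n * κ ^ 2 ≤ 2 * N ^ 2) (hkN : k * κ ≤ 2 * N) (hB : 4 * N ^ 3 ≤ B * κ ^ 3) :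
    n * k ≤ B := by
  refine le_of_mul_le_mul_right ?_ (pow_pos hκ 3)
  calc n * k * κ ^ 3 = n * κ ^ 2 * (k * κ) := by ring
    _ ≤ 2 * N ^ 2 * (2 * N) := by gcongr
    _ = 4 * N ^ 3 := by ring
    _ ≤ _ := hB

/-- The constant in the bound `IsRich.card_le` for the number of rich lines. -/
def richLinesConst : ℝ := 288 * √incidenceConst + 8

theorem richLinesConst_pos : 0 < richLinesConst := by
  unfold richLinesConst
  positivity

theorem one_le_natCast_of_le_rpow {p : ℕ} {N r : ℝ} (hN : 0 < N) (hr : r ≠ 0)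
    (hp : N ≤ (p : ℝ) ^ r) : (1 : ℝ) ≤ p := by
  refine Nat.one_le_cast.mpr (Nat.one_le_iff_ne_zero.mpr ?_)
  rintro rfl
  rw [Nat.cast_zero, Real.zero_rpow hr] at hp
  linarith

theorem IsRich.card_mul_rpow_le_of_le_pow_seven (p : ℕ) [CharP F p] {κ : ℕ} (h : IsRich Q Λ κ)
    (hκ : 2 ≤ κ) (hΛ : Λ.Nonempty) (hp : (Q.card : ℝ) ≤ (p : ℝ) ^ (15 / 13 : ℝ))
    (hQ : 6 * Q.card ≤ ∑ x ∈ Q, (linesThrough Λ x).card)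
    (hκQ : 128 * (Q.card : ℝ) ^ 3 ≤ (κ : ℝ) ^ 7) :
    (Λ.card : ℝ) * (κ : ℝ) ^ (15 / 4 : ℝ) ≤
      (8 * (36 * √incidenceConst) + 2) * (Q.card : ℝ) ^ (11 / 4 : ℝ) := by
  have hκ_le : κ ≤ Q.card := hΛ.elim fun ℓ hℓ ↦ (h ℓ hℓ).trans (card_filter_le _ _)
  have hκ₀ : (0 : ℝ) < κ := by exact_mod_cast (by omega : 0 < κ)
  have hN₁ : (1 : ℝ) ≤ Q.card := by exact_mod_cast (by omega : 1 ≤ Q.card)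
  have hN₀ : (0 : ℝ) < Q.card := by linarith
  have hΛ₀ : (0 : ℝ) < Λ.card := Nat.cast_pos.mpr hΛ.card_pos
  have hnκ : (Λ.card : ℝ) * (κ : ℝ) ^ 2 ≤ 2 * (Q.card : ℝ) ^ 2 := mod_cast h.card_mul_sq_le hκ
  have hkκ : ((Q.card / (κ - 1) : ℕ) : ℝ) * κ ≤ 2 * Q.card := mod_cast div_pred_mul_le hκ Q.card
  have hk : 1 ≤ Q.card / (κ - 1) := (Nat.le_div_iff_mul_le (by omega)).mpr (by omega)
  have hnk : (Λ.card : ℝ) * (Q.card / (κ - 1) : ℕ) ≤ (Q.card : ℝ) ^ 2 :=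
    mul_le_of_mul_pow_three_le hκ₀ (Nat.cast_nonneg _) hnκ hkκ <| by
      linarith [mul_le_mul_of_nonneg_left (four_mul_le_pow_three hN₁ hκ₀.le hκQ)
        (sq_nonneg (Q.card : ℝ))]
  have hnkp : (Λ.card : ℝ) * (Q.card / (κ - 1) : ℕ) ≤ (p : ℝ) ^ 2 / 2 :=
    mul_le_of_mul_pow_three_le hκ₀ (Nat.cast_nonneg _) hnκ hkκ <| by
      linarith [eight_mul_pow_three_le hN₀.le hκ₀.le
        (one_le_natCast_of_le_rpow hN₀ (by norm_num) hp) hp hκQ]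
  have hnW : (Λ.card : ℝ) * κ ≤ ∑ x ∈ Q, ((linesThrough Λ x).card : ℝ) := by
    exact_mod_cast h.card_mul_le_sum_card_linesThrough
  have hκ_sq : (κ : ℝ) ^ 2 ≤ 2 * Q.card := mod_cast h.sq_le_two_mul_card hΛ hQ
  refine mul_rpow_le_of_sq_mul_pow_le (by positivity) hN₀ hΛ₀ hκ₀ (Nat.cast_nonneg _) hnW hkκ
    hκ_sq ?_
  calc (κ : ℝ) ^ 2 * (∑ x ∈ Q, ((linesThrough Λ x).card : ℝ)) ^ 3
      ≤ 36 * (Q.card : ℝ) ^ 2 * ∑ q ∈ Q.offDiag, ((gridPairs Q Λ q.1 q.2).card : ℝ) := by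
        exact_mod_cast h.sq_mul_pow_three_sum_le hκ hQ
    _ ≤ _ := mul_le_mul_of_nonneg_left (sum_card_gridPairs_le p hk
        (h.card_linesThrough_le_div hκ) hnkp hnk ((mul_pos hΛ₀ hκ₀).trans_le hnW) rfl hN₀)
        (by positivity)
    _ = _ := by ring

theorem IsRich.card_mul_rpow_le (p : ℕ) [CharP F p] {κ : ℕ} (h : IsRich Q Λ κ) (hκ : 2 ≤ κ)
    (hΛ : Λ.Nonempty) (hp : (Q.card : ℝ) ≤ (p : ℝ) ^ (15 / 13 : ℝ))
    (hQ : 6 * Q.card ≤ ∑ x ∈ Q, (linesThrough Λ x).card) :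
    (Λ.card : ℝ) * (κ : ℝ) ^ (15 / 4 : ℝ) ≤ richLinesConst * (Q.card : ℝ) ^ (11 / 4 : ℝ) := by
  have hκ_le : κ ≤ Q.card := hΛ.elim fun ℓ hℓ ↦ (h ℓ hℓ).trans (card_filter_le _ _)
  have hκ₀ : (0 : ℝ) < κ := by exact_mod_cast (by omega : 0 < κ)
  have hN₀ : (0 : ℝ) < Q.card := by exact_mod_cast (by omega : 0 < Q.card)
  have hroot := Real.sqrt_nonneg incidenceConst
  rcases le_total ((κ : ℝ) ^ 7) (128 * (Q.card : ℝ) ^ 3) with hκQ | hκQ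
  · calc (Λ.card : ℝ) * (κ : ℝ) ^ (15 / 4 : ℝ) ≤ 8 * (Q.card : ℝ) ^ (11 / 4 : ℝ) :=
          mul_rpow_le_of_pow_seven_le hN₀ hκ₀ (mod_cast h.card_mul_sq_le hκ) hκQ
      _ ≤ _ := by gcongr; unfold richLinesConst; linarith
  · calc (Λ.card : ℝ) * (κ : ℝ) ^ (15 / 4 : ℝ)
        ≤ (8 * (36 * √incidenceConst) + 2) * (Q.card : ℝ) ^ (11 / 4 : ℝ) :=
          h.card_mul_rpow_le_of_le_pow_seven p hκ hΛ hp hQ hκQ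
      _ ≤ _ := by gcongr; unfold richLinesConst; linarith

theorem IsRich.card_le (p : ℕ) [CharP F p] {κ : ℕ} (h : IsRich Q Λ κ) (hκ : 2 ≤ κ)
    (hp : (Q.card : ℝ) ≤ (p : ℝ) ^ (15 / 13 : ℝ)) :
    (Λ.card : ℝ) ≤ richLinesConst *
      ((Q.card : ℝ) ^ (11 / 4 : ℝ) / (κ : ℝ) ^ (15 / 4 : ℝ) + (Q.card : ℝ) / κ) := by
  have hC := richLinesConst_pos
  rcases Λ.eq_empty_or_nonempty with rfl | hΛ
  · rw [card_empty, Nat.cast_zero]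
    positivity
  have hκ₀ : (0 : ℝ) < κ := by exact_mod_cast (by omega : 0 < κ)
  rw [mul_add, ← mul_div_assoc, ← mul_div_assoc]
  rcases le_total (6 * Q.card) (∑ x ∈ Q, (linesThrough Λ x).card) with hQ | hQ
  · refine le_add_of_le_of_nonneg ?_ (by positivity)
    rw [le_div_iff₀ (by positivity)]
    exact h.card_mul_rpow_le p hκ hΛ hp hQ
  · refine le_add_of_nonneg_of_le (by positivity) ?_
    rw [le_div_iff₀ hκ₀]
    calc (Λ.card * κ : ℝ) ≤ 6 * Q.card := by
          exact_mod_cast h.card_mul_le_sum_card_linesThrough.trans hQ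
      _ ≤ richLinesConst * Q.card := by
          gcongr
          unfold richLinesConst
          linarith [Real.sqrt_nonneg incidenceConst]

end RichLines

/-! ### Linear systems of plane curves -/

section LinearSystems

open MvPolynomial Matrix LinearAlgebra.Projectivization

variable {F : Type*} [Field F] {U : Submodule F (MvPolynomial (Fin 2) F)}

theorem finrank_restrictTotalDegree_three :
    Module.finrank F (restrictTotalDegree (Fin 2) F 3) = 10 := by
  rw [finrank_restrictTotalDegree, Fintype.card_fin]
  decide

theorem card_le_sq_totalDegree {f g : MvPolynomial (Fin 2) F} (hf : Irreducible f)
    (hg : g.totalDegree ≤ f.totalDegree) (hfg : ∀ a : F, a • f ≠ g) (S : Finset (Fin 2 → F))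
    (hS : ∀ x ∈ S, eval x f = 0 ∧ eval x g = 0) : S.card ≤ f.totalDegree ^ 2 := by
  have hdvd : ¬ f ∣ g := by
    rintro ⟨h, rfl⟩
    have hh : h ≠ 0 := by
      rintro rfl
      exact hfg 0 (by rw [zero_smul, mul_zero])
    rw [totalDegree_mul_of_isDomain hf.ne_zero hh, add_le_iff_nonpos_right, nonpos_iff_eq_zero,
      totalDegree_eq_zero_iff_eq_C] at hg
    refine hfg (coeff 0 h) ?_
    rw [smul_eq_C_mul, ← hg, mul_comm]
  calc S.card ≤ f.totalDegree * g.totalDegree :=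
        card_le_totalDegree_mul_totalDegree hf.ne_zero (hf.isRelPrime_iff_not_dvd.mpr hdvd) S hS
    _ ≤ f.totalDegree * f.totalDegree := by gcongr
    _ = f.totalDegree ^ 2 := (sq _).symm

/-- The subsystem of the members of the linear system `U` that pass through the point `x`. -/
def throughPoint (U : Submodule F (MvPolynomial (Fin 2) F)) (x : Fin 2 → F) :
    Submodule F (MvPolynomial (Fin 2) F) :=
  U ⊓ LinearMap.ker (aeval x : MvPolynomial (Fin 2) F →ₐ[F] F).toLinearMap

theorem mem_throughPoint {x : Fin 2 → F} {g : MvPolynomial (Fin 2) F} :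
    g ∈ throughPoint U x ↔ g ∈ U ∧ eval x g = 0 := by
  simp [throughPoint, aeval_eq_eval]

theorem finrank_throughPoint [FiniteDimensional F U] {x : Fin 2 → F}
    (hx : ∃ g ∈ U, eval x g ≠ 0) :
    Module.finrank F (throughPoint U x) + 1 = Module.finrank F U := by
  set φ := (aeval x : MvPolynomial (Fin 2) F →ₐ[F] F).toLinearMap
  have hmap : throughPoint U x = (LinearMap.ker (φ.comp U.subtype)).map U.subtype := by
    rw [LinearMap.ker_comp, Submodule.map_comap_subtype, throughPoint]
  rw [hmap, Submodule.finrank_map_subtype_eq]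
  refine Module.Dual.finrank_ker_add_one_of_ne_zero (f := φ.comp U.subtype) fun hφ ↦ ?_
  obtain ⟨g, hg, hgx⟩ := hx
  exact hgx (by simpa [φ, aeval_eq_eval] using LinearMap.congr_fun hφ ⟨g, hg⟩)

theorem exists_mem_forall_smul_ne {V : Type*} [AddCommGroup V] [Module F V] {U : Submodule F V}
    (hU : 2 ≤ Module.finrank F U) (f : V) : ∃ g ∈ U, ∀ a : F, a • f ≠ g := by
  by_contra! hspan
  have hle : U ≤ Submodule.span F {f} := fun g hg ↦ Submodule.mem_span_singleton.mpr (hspan g hg)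
  have hfinrank := (Submodule.finrank_mono hle).trans (finrank_span_le_card (R := F) ({f} : Set V))
  rw [Set.toFinset_singleton, Finset.card_singleton] at hfinrank
  omega

section Coordinates

variable {ι : Type*} (b : Module.Basis ι F U)

/-- Homogeneous coordinates, with respect to the basis `b`, of the rational map to projective space
defined by the linear system `U`. They all vanish exactly on the base locus of `U`. -/
def systemMap (x : Fin 2 → F) : ι → F := fun i ↦ eval x (b i : MvPolynomial (Fin 2) F)

theorem eval_eq_systemMap_dotProduct [Fintype ι] (f : U) (x : Fin 2 → F) :
    eval x (f : MvPolynomial (Fin 2) F) = systemMap b x ⬝ᵥ b.repr f := by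
  calc eval x (f : MvPolynomial (Fin 2) F)
      = eval x ((∑ i, b.repr f i • b i : U) : MvPolynomial (Fin 2) F) := by rw [b.sum_repr]
    _ = _ := by
      simp only [Submodule.coe_sum, Submodule.coe_smul, map_sum, smul_eval, systemMap, dotProduct,
        mul_comm]

theorem systemMap_ne_zero_iff [Finite ι] {x : Fin 2 → F} :
    systemMap b x ≠ 0 ↔ ∃ g ∈ U, eval x g ≠ 0 := by
  cases nonempty_fintype ι
  constructor
  · intro hx
    obtain ⟨i, hi⟩ := Function.ne_iff.mp hx
    exact ⟨b i, (b i).2, hi⟩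
  · rintro ⟨g, hg, hgx⟩ hx
    rw [eval_eq_systemMap_dotProduct b ⟨g, hg⟩, hx, zero_dotProduct] at hgx
    exact hgx rfl

end Coordinates

/-- The point of the projective plane with homogeneous coordinates `v`, and the junk value
`[1 : 0 : 0]` at `v = 0`. -/
def projPoint (v : Fin 3 → F) : ℙ F (Fin 3 → F) :=
  if hv : v = 0 then Projectivization.mk F (Pi.single 0 1) (by simp)
  else Projectivization.mk F v hv

theorem projPoint_eq_iff {v w : Fin 3 → F} (hv : v ≠ 0) (hw : w ≠ 0) :
    projPoint v = projPoint w ↔ ∃ a : F, a • w = v := by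
  rw [projPoint, projPoint, dif_neg hv, dif_neg hw, Projectivization.mk_eq_mk_iff']

theorem projPoint_mem_projPoint_iff {v w : Fin 3 → F} (hv : v ≠ 0) (hw : w ≠ 0) :
    projPoint v ∈ projPoint w ↔ v ⬝ᵥ w = 0 := by
  rw [projPoint, projPoint, dif_neg hv, dif_neg hw, Configuration.ofField.mem_iff,
    Projectivization.orthogonal_mk]

end LinearSystems

/-! ### Families of rich cubics -/

theorem rpow_mul_add_eq {N k : ℝ} (hN : 0 ≤ N) (hk : 0 < k) :
    (N / k) ^ 7 * (N ^ (11 / 4 : ℝ) / k ^ (15 / 4 : ℝ) + N / k) =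
      N ^ (39 / 4 : ℝ) / k ^ (43 / 4 : ℝ) + N ^ (8 : ℝ) / k ^ (8 : ℝ) := by
  have hN_rpow : N ^ (39 / 4 : ℝ) = N ^ 7 * N ^ (11 / 4 : ℝ) := by
    rw [← Real.rpow_natCast, ← Real.rpow_add_of_nonneg hN (by norm_num) (by norm_num)]
    norm_num
  have hk_rpow : k ^ (43 / 4 : ℝ) = k ^ 7 * k ^ (15 / 4 : ℝ) := by
    rw [← Real.rpow_natCast, ← Real.rpow_add hk]
    norm_num
  have hpow (x : ℝ) : x ^ (8 : ℝ) = x ^ 7 * x := by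
    rw [← pow_succ, ← Real.rpow_natCast]
    norm_num
  rw [hN_rpow, hk_rpow, hpow, hpow]
  ring

/-- A finite family `Γ` of irreducible cubic polynomials inside a linear system `U` of polynomials
of degree at most three, pairwise not proportional, each having at least `k` zeros in `P`. -/
structure IsCubicFamily {F : Type*} [Field F] (P : Finset (Fin 2 → F))
    (U : Submodule F (MvPolynomial (Fin 2) F)) (Γ : Finset (MvPolynomial (Fin 2) F)) (k : ℕ) :
    Prop where
  le : U ≤ MvPolynomial.restrictTotalDegree (Fin 2) F 3
  mem : ∀ f ∈ Γ, f ∈ U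
  irreducible : ∀ f ∈ Γ, Irreducible f
  totalDegree_eq : ∀ f ∈ Γ, f.totalDegree = 3
  smul_ne : ∀ f ∈ Γ, ∀ g ∈ Γ, f ≠ g → ∀ a : F, a • f ≠ g
  le_card : ∀ f ∈ Γ, k ≤ (P.filter fun x ↦ MvPolynomial.eval x f = 0).card

namespace IsCubicFamily

open Finset MvPolynomial Matrix LinearAlgebra.Projectivization

variable {F : Type*} [Field F] {P : Finset (Fin 2 → F)}
  {U : Submodule F (MvPolynomial (Fin 2) F)} {Γ : Finset (MvPolynomial (Fin 2) F)} {k : ℕ}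
  {f g : MvPolynomial (Fin 2) F}

theorem finiteDimensional (h : IsCubicFamily P U Γ k) : FiniteDimensional F U := by
  have : FiniteDimensional F (restrictTotalDegree (Fin 2) F 3) :=
    FiniteDimensional.of_finrank_pos (by rw [finrank_restrictTotalDegree_three]; norm_num)
  exact Submodule.finiteDimensional_of_le h.le

theorem card_common_zeros_le (h : IsCubicFamily P U Γ k) (hf : f ∈ Γ) (hg : g ∈ U)
    (hfg : ∀ a : F, a • f ≠ g) {S : Finset (Fin 2 → F)}
    (hS : ∀ x ∈ S, eval x f = 0 ∧ eval x g = 0) : S.card ≤ 9 := by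
  have hdeg : g.totalDegree ≤ 3 := (mem_restrictTotalDegree _ _ _).mp (h.le hg)
  have hcard := card_le_sq_totalDegree (h.irreducible f hf)
    (hdeg.trans_eq (h.totalDegree_eq f hf).symm) hfg S hS
  rwa [h.totalDegree_eq f hf] at hcard

theorem sub_nine_le_card (h : IsCubicFamily P U Γ k) (hU : 2 ≤ Module.finrank F U) (hf : f ∈ Γ) :
    k - 9 ≤ ((P.filter fun x ↦ ∃ g ∈ U, eval x g ≠ 0).filter fun x ↦ eval x f = 0).card := by
  obtain ⟨g, hg, hfg⟩ := exists_mem_forall_smul_ne hU f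
  have hbase : ((P.filter fun x ↦ eval x f = 0).filter
      fun x ↦ ¬ ∃ g ∈ U, eval x g ≠ 0).card ≤ 9 := by
    refine h.card_common_zeros_le hf hg hfg fun x hx ↦ ?_
    rw [mem_filter, mem_filter] at hx
    exact ⟨hx.1.2, not_not.mp fun hgx ↦ hx.2 ⟨g, hg, hgx⟩⟩
  have hsplit := card_filter_add_card_filter_not (s := P.filter fun x ↦ eval x f = 0)
    fun x ↦ ∃ g ∈ U, eval x g ≠ 0
  have hrich := h.le_card f hf
  rw [filter_comm]
  omega

theorem filter_throughPoint (h : IsCubicFamily P U Γ k) (x : Fin 2 → F) :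
    IsCubicFamily P (throughPoint U x) (Γ.filter fun f ↦ eval x f = 0) k where
  le := inf_le_left.trans h.le
  mem f hf := mem_throughPoint.mpr ⟨h.mem f (mem_filter.mp hf).1, (mem_filter.mp hf).2⟩
  irreducible f hf := h.irreducible f (mem_filter.mp hf).1
  totalDegree_eq f hf := h.totalDegree_eq f (mem_filter.mp hf).1
  smul_ne f hf g hg := h.smul_ne f (mem_filter.mp hf).1 g (mem_filter.mp hg).1
  le_card f hf := h.le_card f (mem_filter.mp hf).1

theorem card_mul_le_of_finrank_eq_succ {r : ℕ} (hr : 1 ≤ r) {B : ℝ} (hB : 0 ≤ B)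
    (hcard : ∀ U Γ, IsCubicFamily P U Γ k → Module.finrank F U = r → (Γ.card : ℝ) ≤ B)
    (h : IsCubicFamily P U Γ k) (hU : Module.finrank F U = r + 1) :
    (Γ.card : ℝ) * (k - 9 : ℕ) ≤ P.card * B := by
  have := h.finiteDimensional
  set P₀ := P.filter fun x ↦ ∃ g ∈ U, eval x g ≠ 0
  have hlower : Γ.card * (k - 9) ≤ ∑ f ∈ Γ, (P₀.filter fun x ↦ eval x f = 0).card :=
    card_nsmul_le_sum _ _ _ fun f hf ↦ h.sub_nine_le_card (by omega) hf
  have hthrough : ∀ x ∈ P₀, ((Γ.filter fun f ↦ eval x f = 0).card : ℝ) ≤ B := fun x hx ↦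
    hcard _ _ (h.filter_throughPoint x) <| by
      have hfinrank := finrank_throughPoint (mem_filter.mp hx).2
      omega
  calc (Γ.card : ℝ) * (k - 9 : ℕ)
      ≤ ((∑ f ∈ Γ, (P₀.filter fun x ↦ eval x f = 0).card : ℕ) : ℝ) := mod_cast hlower
    _ = ∑ x ∈ P₀, ((Γ.filter fun f ↦ eval x f = 0).card : ℝ) := by
        rw [← Nat.cast_sum]
        exact congrArg Nat.cast (sum_card_bipartiteAbove_eq_sum_card_bipartiteBelow _)
    _ ≤ P₀.card * B := (sum_le_card_nsmul _ _ _ hthrough).trans_eq (nsmul_eq_mul _ _)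
    _ ≤ P.card * B := by
        gcongr
        exact filter_subset _ _

theorem card_le_div_pow_mul (hk : 10 ≤ k) {r : ℕ} (hr : 1 ≤ r) {B : ℝ} (hB : 0 ≤ B)
    (hcard : ∀ U Γ, IsCubicFamily P U Γ k → Module.finrank F U = r → (Γ.card : ℝ) ≤ B) (j : ℕ) :
    ∀ U Γ, IsCubicFamily P U Γ k → Module.finrank F U = r + j →
      (Γ.card : ℝ) ≤ (P.card / (k - 9 : ℕ)) ^ j * B := by
  induction j with
  | zero => simpa using hcard
  | succ j ih =>
    intro U Γ h hU
    have hk₀ : (0 : ℝ) < (k - 9 : ℕ) := Nat.cast_pos.mpr (by omega)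
    have hstep := card_mul_le_of_finrank_eq_succ (r := r + j) (by omega) (by positivity) ih h hU
    rw [← le_div_iff₀ hk₀] at hstep
    exact hstep.trans_eq (by ring)

section Net

variable (b : Module.Basis (Fin 3) F U)

/-- The image in the projective plane of the points of `P` off the base locus of the net `U`, under
the rational map defined by the net. -/
def pointImage (P : Finset (Fin 2 → F)) : Finset (ℙ F (Fin 3 → F)) :=
  (P.filter fun x ↦ ∃ g ∈ U, eval x g ≠ 0).image (projPoint ∘ systemMap b)

/-- The lines of the projective plane that correspond to the members of `Γ`, as members of the net
`U`. -/
def lineImage (h : IsCubicFamily P U Γ k) : Finset (ℙ F (Fin 3 → F)) :=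
  Γ.attach.image fun f : {f // f ∈ Γ} ↦ projPoint (b.repr ⟨f.1, h.mem f.1 f.2⟩)

theorem repr_ne_zero (h : IsCubicFamily P U Γ k) (hf : f ∈ Γ) :
    (b.repr ⟨f, h.mem f hf⟩ : Fin 3 → F) ≠ 0 := by
  rw [Ne, ← Finsupp.coe_zero, DFunLike.coe_fn_eq, LinearEquiv.map_eq_zero_iff, Submodule.mk_eq_zero]
  exact (h.irreducible f hf).ne_zero

theorem card_lineImage (h : IsCubicFamily P U Γ k) : (h.lineImage b).card = Γ.card := by
  rw [lineImage, card_image_of_injective, card_attach]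
  intro f g hfg
  obtain ⟨a, ha⟩ := (projPoint_eq_iff (h.repr_ne_zero b f.2) (h.repr_ne_zero b g.2)).mp hfg
  rw [← Finsupp.coe_smul, DFunLike.coe_fn_eq, ← map_smul, b.repr.injective.eq_iff] at ha
  by_contra hne
  exact h.smul_ne g g.2 f f.2 (fun hgf ↦ hne (Subtype.ext hgf.symm)) a (congrArg Subtype.val ha)

theorem card_fiber_le (h : IsCubicFamily P U Γ k) (hf : f ∈ Γ) {x₀ : Fin 2 → F}
    (hx₀ : systemMap b x₀ ≠ 0) :
    ((P.filter fun x ↦ eval x f = 0).filter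
      fun x ↦ ∃ a : F, a • systemMap b x₀ = systemMap b x).card ≤ 9 := by
  have := h.finiteDimensional
  have hU : Module.finrank F U = 3 := by rw [Module.finrank_eq_card_basis b, Fintype.card_fin]
  have hfinrank := finrank_throughPoint ((systemMap_ne_zero_iff b).mp hx₀)
  -- the fibre of `x₀` lies on every member of the net through `x₀`
  obtain ⟨g, hg, hfg⟩ := exists_mem_forall_smul_ne (U := throughPoint U x₀) (by omega) f
  obtain ⟨hgU, hgx₀⟩ := mem_throughPoint.mp hg
  refine h.card_common_zeros_le hf hgU hfg fun x hx ↦ ?_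
  obtain ⟨hx, a, ha⟩ := mem_filter.mp hx
  refine ⟨(mem_filter.mp hx).2, ?_⟩
  rw [eval_eq_systemMap_dotProduct b ⟨g, hgU⟩] at hgx₀ ⊢
  rw [← ha, smul_dotProduct, hgx₀, smul_zero]

theorem image_subset_pointsOn (h : IsCubicFamily P U Γ k) (hf : f ∈ Γ) :
    ((P.filter fun x ↦ ∃ g ∈ U, eval x g ≠ 0).filter fun x ↦ eval x f = 0).image
      (projPoint ∘ systemMap b) ⊆
        pointsOn (pointImage b P) (projPoint (b.repr ⟨f, h.mem f hf⟩)) := by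
  refine image_subset_iff.mpr fun x hx ↦ ?_
  obtain ⟨hxU, hxf⟩ := mem_filter.mp hx
  refine mem_pointsOn.mpr ⟨mem_image_of_mem _ hxU, ?_⟩
  rw [Function.comp_apply, projPoint_mem_projPoint_iff
    ((systemMap_ne_zero_iff b).mpr (mem_filter.mp hxU).2) (h.repr_ne_zero b hf),
    ← eval_eq_systemMap_dotProduct, hxf]

theorem card_le_nine_mul_card_image (h : IsCubicFamily P U Γ k) (hf : f ∈ Γ) :
    ((P.filter fun x ↦ ∃ g ∈ U, eval x g ≠ 0).filter fun x ↦ eval x f = 0).card ≤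
      9 * (((P.filter fun x ↦ ∃ g ∈ U, eval x g ≠ 0).filter fun x ↦ eval x f = 0).image
        (projPoint ∘ systemMap b)).card := by
  refine card_le_mul_card_image _ 9 fun q hq ↦ ?_
  obtain ⟨x₀, hx₀, rfl⟩ := mem_image.mp hq
  have hx₀' := (systemMap_ne_zero_iff b).mpr (mem_filter.mp (mem_filter.mp hx₀).1).2
  refine (card_le_card fun x hx ↦ ?_).trans (h.card_fiber_le b hf hx₀')
  simp only [mem_filter, Function.comp_apply] at hx ⊢
  exact ⟨⟨hx.1.1.1, hx.1.2⟩,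
    (projPoint_eq_iff ((systemMap_ne_zero_iff b).mpr hx.1.1.2) hx₀').mp hx.2⟩

theorem two_le_card_image (h : IsCubicFamily P U Γ k) (hk : 10 ≤ k) (hf : f ∈ Γ) :
    2 ≤ (((P.filter fun x ↦ ∃ g ∈ U, eval x g ≠ 0).filter fun x ↦ eval x f = 0).image
      (projPoint ∘ systemMap b)).card := by
  have hU : Module.finrank F U = 3 := by rw [Module.finrank_eq_card_basis b, Fintype.card_fin]
  set T := (P.filter fun x ↦ ∃ g ∈ U, eval x g ≠ 0).filter fun x ↦ eval x f = 0
  have hT : k - 9 ≤ T.card := h.sub_nine_le_card (by omega) hf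
  obtain ⟨x₀, hx₀⟩ : T.Nonempty := card_pos.mp (by omega)
  have hx₀' := (systemMap_ne_zero_iff b).mpr (mem_filter.mp (mem_filter.mp hx₀).1).2
  by_contra! hlt
  -- otherwise all the zeros of `f` in `P` lie in one fibre or in the base locus
  have hfiber := h.card_fiber_le b hf hx₀'
  rw [filter_true_of_mem] at hfiber
  · exact absurd ((h.le_card f hf).trans hfiber) (by omega)
  intro x hx
  by_cases hxU : systemMap b x = 0
  · exact ⟨0, by rw [hxU, zero_smul]⟩
  have hxT : x ∈ T := by
    obtain ⟨hxP, hxf⟩ := mem_filter.mp hx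
    exact mem_filter.mpr ⟨mem_filter.mpr ⟨hxP, (systemMap_ne_zero_iff b).mp hxU⟩, hxf⟩
  exact (projPoint_eq_iff hxU hx₀').mp <| card_le_one.mp (by omega) _
    (mem_image_of_mem (projPoint ∘ systemMap b) hxT) _ (mem_image_of_mem _ hx₀)

theorem isRich_lineImage (h : IsCubicFamily P U Γ k) (hk : 10 ≤ k) :
    IsRich (pointImage b P) (h.lineImage b) (max 2 ((k + 13) / 14)) := by
  intro ℓ hℓ
  obtain ⟨⟨f, hf⟩, -, rfl⟩ := mem_image.mp hℓ
  have hU : Module.finrank F U = 3 := by rw [Module.finrank_eq_card_basis b, Fintype.card_fin]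
  have hk_le := h.sub_nine_le_card (by omega) hf
  have hnine := h.card_le_nine_mul_card_image b hf
  have htwo := h.two_le_card_image b hk hf
  refine le_trans ?_ (card_le_card (h.image_subset_pointsOn b hf))
  omega

theorem card_le_of_finrank_eq_three (p : ℕ) [CharP F p] (h : IsCubicFamily P U Γ k)
    (hU : Module.finrank F U = 3) (hk : 10 ≤ k) (hP : (P.card : ℝ) ≤ (p : ℝ) ^ (15 / 13 : ℝ)) :
    (Γ.card : ℝ) ≤ 14 ^ 4 * richLinesConst *
      ((P.card : ℝ) ^ (11 / 4 : ℝ) / (k : ℝ) ^ (15 / 4 : ℝ) + (P.card : ℝ) / k) := by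
  have := h.finiteDimensional
  have b := Module.finBasisOfFinrankEq F U hU
  set κ := max 2 ((k + 13) / 14)
  have hQP : ((pointImage b P).card : ℝ) ≤ P.card :=
    Nat.cast_le.mpr (card_image_le.trans (card_filter_le _ _))
  have hk₀ : (0 : ℝ) < k := Nat.cast_pos.mpr (by omega)
  have hkκ : (k : ℝ) / 14 ≤ κ := by
    rw [div_le_iff₀ (by norm_num)]
    exact_mod_cast (by omega : k ≤ κ * 14)
  have hC := richLinesConst_pos
  have hpow : (14 : ℝ) ^ (15 / 4 : ℝ) ≤ 14 ^ 4 := by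
    rw [← Real.rpow_natCast]
    exact Real.rpow_le_rpow_of_exponent_le (by norm_num) (by norm_num)
  calc (Γ.card : ℝ) = (h.lineImage b).card := by rw [h.card_lineImage]
    _ ≤ richLinesConst * (((pointImage b P).card : ℝ) ^ (11 / 4 : ℝ) / (κ : ℝ) ^ (15 / 4 : ℝ) +
        ((pointImage b P).card : ℝ) / κ) :=
        (h.isRich_lineImage b hk).card_le p (le_max_left _ _) (hQP.trans hP)
    _ ≤ richLinesConst * ((P.card : ℝ) ^ (11 / 4 : ℝ) / ((k : ℝ) / 14) ^ (15 / 4 : ℝ) +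
        (P.card : ℝ) / ((k : ℝ) / 14)) := by gcongr
    _ = richLinesConst * (14 ^ (15 / 4 : ℝ) * ((P.card : ℝ) ^ (11 / 4 : ℝ) /
        (k : ℝ) ^ (15 / 4 : ℝ)) + 14 * ((P.card : ℝ) / k)) := by
        rw [Real.div_rpow hk₀.le (by norm_num)]
        field_simp
    _ ≤ richLinesConst * (14 ^ 4 * ((P.card : ℝ) ^ (11 / 4 : ℝ) / (k : ℝ) ^ (15 / 4 : ℝ)) +
        14 ^ 4 * ((P.card : ℝ) / k)) := by
        gcongr
        norm_num
    _ = _ := by ring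

end Net

theorem card_le (p : ℕ) [CharP F p] (h : IsCubicFamily P U Γ k)
    (hU : Module.finrank F U = 10) (hk : 10 ≤ k) (hP : (P.card : ℝ) ≤ (p : ℝ) ^ (15 / 13 : ℝ)) :
    (Γ.card : ℝ) ≤ 10 ^ 7 * (14 ^ 4 * richLinesConst) *
      ((P.card : ℝ) ^ (39 / 4 : ℝ) / (k : ℝ) ^ (43 / 4 : ℝ) +
        (P.card : ℝ) ^ (8 : ℝ) / (k : ℝ) ^ (8 : ℝ)) := by
  have hC := richLinesConst_pos
  have hk₀ : (0 : ℝ) < k := Nat.cast_pos.mpr (by omega)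
  have hk_sub : (k : ℝ) / 10 ≤ (k - 9 : ℕ) := by
    rw [div_le_iff₀ (by norm_num)]
    exact_mod_cast (by omega : k ≤ (k - 9) * 10)
  calc (Γ.card : ℝ) ≤ (P.card / (k - 9 : ℕ)) ^ 7 * (14 ^ 4 * richLinesConst *
        ((P.card : ℝ) ^ (11 / 4 : ℝ) / (k : ℝ) ^ (15 / 4 : ℝ) + (P.card : ℝ) / k)) :=
        card_le_div_pow_mul hk (r := 3) (by norm_num) (by positivity)
          (fun U Γ h hU ↦ h.card_le_of_finrank_eq_three p hU hk hP) 7 U Γ h hU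
    _ ≤ (P.card / ((k : ℝ) / 10)) ^ 7 * (14 ^ 4 * richLinesConst *
        ((P.card : ℝ) ^ (11 / 4 : ℝ) / (k : ℝ) ^ (15 / 4 : ℝ) + (P.card : ℝ) / k)) := by gcongr
    _ = 10 ^ 7 * (14 ^ 4 * richLinesConst) * ((P.card / k) ^ 7 *
        ((P.card : ℝ) ^ (11 / 4 : ℝ) / (k : ℝ) ^ (15 / 4 : ℝ) + (P.card : ℝ) / k)) := by
        rw [div_div_eq_mul_div]
        ring
    _ = _ := by rw [rpow_mul_add_eq (Nat.cast_nonneg _) hk₀]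

theorem exists_card_eq (C : Finset (Set (Fin 2 → F)))
    (hC : ∀ γ ∈ C, ∃ f : MvPolynomial (Fin 2) F,
      Irreducible f ∧ f.totalDegree = 3 ∧ γ = {x | eval x f = 0})
    (hk : ∀ γ ∈ C, k ≤ (P.filter fun x ↦ x ∈ γ).card) :
    ∃ Γ, IsCubicFamily P (restrictTotalDegree (Fin 2) F 3) Γ k ∧ Γ.card = C.card := by
  choose! f hirr hdeg hzero using hC
  refine ⟨C.image f, ⟨le_rfl, ?_, ?_, ?_, ?_, ?_⟩, card_image_of_injOn fun γ hγ δ hδ hf ↦ ?_⟩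
  · exact forall_mem_image.mpr fun γ hγ ↦ (mem_restrictTotalDegree _ _ _).mpr (hdeg γ hγ).le
  · exact forall_mem_image.mpr hirr
  · exact forall_mem_image.mpr hdeg
  · refine forall_mem_image.mpr fun γ hγ ↦ forall_mem_image.mpr fun δ hδ hne a ha ↦ hne ?_
    have ha₀ : a ≠ 0 := by
      rintro rfl
      exact (hirr δ hδ).ne_zero (by rw [← ha, zero_smul])
    congr 1
    rw [hzero γ hγ, hzero δ hδ]
    ext x
    simp [← ha, smul_eval, ha₀]
  · refine forall_mem_image.mpr fun γ hγ ↦ (hk γ hγ).trans (card_le_card fun x hx ↦ ?_)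
    rw [mem_filter, hzero γ hγ] at hx
    exact mem_filter.mpr hx
  · rw [hzero γ hγ, hzero δ hδ, hf]

end IsCubicFamily

theorem rich_curves_bound_general :
    ∃ c : ℝ, 0 < c ∧ ∀ (F : Type*) [Field F] (p : ℕ) [CharP F p]
      (P : Finset (Fin 2 → F)) (C : Finset (Set (Fin 2 → F))),
        (P.card : ℝ) ≤ (p : ℝ) ^ ((15 : ℝ) / 13) →
        (∀ γ ∈ C, ∃ f : MvPolynomial (Fin 2) F,
          Irreducible f ∧ f.totalDegree = 3 ∧ γ = {x | MvPolynomial.eval x f = 0}) →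
        ∀ k : ℕ, 10 ≤ k → (∀ γ ∈ C, k ≤ (P.filter fun x ↦ x ∈ γ).card) →
          (C.card : ℝ) ≤
            c * ((P.card : ℝ) ^ ((39 : ℝ) / 4) / (k : ℝ) ^ ((43 : ℝ) / 4)
              + (P.card : ℝ) ^ (8 : ℝ) / (k : ℝ) ^ (8 : ℝ)) := by
  have hC₀ := richLinesConst_pos
  refine ⟨10 ^ 7 * (14 ^ 4 * richLinesConst), by positivity, ?_⟩
  intro F _ p _ P C hP hC k hk hCk
  obtain ⟨Γ, hΓ, hcard⟩ := IsCubicFamily.exists_card_eq C hC hCk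
  rw [← hcard]
  exact hΓ.card_le p finrank_restrictTotalDegree_three hk hP

theorem rich_curves_bound :
    ∃ c : ℝ, 0 < c ∧ ∀ p : ℕ, p.Prime →
      ∀ (P : Finset (Fin 2 → ZMod p)) (C : Finset (Set (Fin 2 → ZMod p))),
        (P.card : ℝ) ≤ (p : ℝ) ^ ((15 : ℝ) / 13) →
        (∀ γ ∈ C, IsIrredCubic γ) →
        ∀ k : ℕ, 11 ≤ k →
          ((richCurves P C k).card : ℝ) ≤
            c * ((P.card : ℝ) ^ ((39 : ℝ) / 4) / (k : ℝ) ^ ((43 : ℝ) / 4)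
              + (P.card : ℝ) ^ (8 : ℝ) / (k : ℝ) ^ (8 : ℝ)) := by
  obtain ⟨c, hc, hbound⟩ := rich_curves_bound_general
  refine ⟨c, hc, fun p hp P C hP hC k hk ↦ ?_⟩
  have := Fact.mk hp
  exact hbound (ZMod p) p P (richCurves P C k) hP (fun γ hγ ↦ hC γ (Finset.mem_filter.mp hγ).1)
    k (by omega) fun γ hγ ↦ (Finset.mem_filter.mp hγ).2.1
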